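/- Let N ≥ 2 and let Ω ⊂ ℝ^N be a bounded Lipschitz domain. Then for every n ∈ ℕ, lim_{s→1⁻} μ_n^{(s)}(Ω) = μ_n^{(1)}(Ω), i.e. the n-th eigenvalue of the fractional Neumann Laplacian converges to the n-th eigenvalue of the local Neumann Laplacian as s → 1⁻. -/

import Mathlib

open MeasureTheory Filter Topology Bornology Set
open scoped ENNReal NNReal

noncomputable section

namespace FracNeumann

abbrev Euc (N : ℕ) : Type := EuclideanSpace ℝ (Fin N)

/-- The kernel weight `|x - y| ^ (N + 2s)`. -/
def kern (N : ℕ) (s : ℝ) (x y : Euc N) : ℝ := ‖x - y‖ ^ ((N : ℝ) + 2 * s)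

/-- The region `ℝ^{2N} \ (Ω^c × Ω^c)`, where `Ω^c := ℝ^N \ closure Ω`. -/
def reg (N : ℕ) (Ω : Set (Euc N)) : Set (Euc N × Euc N) :=
  {q | q.1 ∈ closure Ω ∨ q.2 ∈ closure Ω}

/-- The squared seminorm `[u]_{H^s_{Ω,0}}²`, as an extended real number. -/
def semiSq (N : ℕ) (s : ℝ) (Ω : Set (Euc N)) (u : Euc N → ℝ) : ℝ≥0∞ :=
  ∫⁻ q in reg N Ω, ENNReal.ofReal ((u q.1 - u q.2) ^ 2 / kern N s q.1 q.2)

/-- `∫_Ω u²`, as an extended real number. -/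
def l2sq (N : ℕ) (Ω : Set (Euc N)) (u : Euc N → ℝ) : ℝ≥0∞ :=
  ∫⁻ x in Ω, ENNReal.ofReal ((u x) ^ 2)

/-- Membership in `H^s_{Ω,0}`. -/
def memHs (N : ℕ) (s : ℝ) (Ω : Set (Euc N)) (u : Euc N → ℝ) : Prop :=
  Measurable u ∧ l2sq N Ω u < ⊤ ∧ semiSq N s Ω u < ⊤

/-- The squared Gagliardo seminorm `[u]_{H^s(Ω)}²`. -/
def semiSqOn (N : ℕ) (s : ℝ) (Ω : Set (Euc N)) (u : Euc N → ℝ) : ℝ≥0∞ :=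
  ∫⁻ q in Ω ×ˢ Ω, ENNReal.ofReal ((u q.1 - u q.2) ^ 2 / kern N s q.1 q.2)

/-- Membership in `H^s(Ω)` (for functions defined on all of `ℝ^N`). -/
def memHsOn (N : ℕ) (s : ℝ) (Ω : Set (Euc N)) (u : Euc N → ℝ) : Prop :=
  Measurable u ∧ l2sq N Ω u < ⊤ ∧ semiSqOn N s Ω u < ⊤

/-- The normalizing constant `c_{N,s}` of the fractional Laplacian. -/
def cNs (N : ℕ) (s : ℝ) : ℝ :=
  (4 : ℝ) ^ s * s * Real.Gamma ((N : ℝ) / 2 + s) /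
    (Real.pi ^ ((N : ℝ) / 2) * Real.Gamma (1 - s))

/-- The nonlocal Neumann derivative `𝒩_s u`. -/
def Nneu (N : ℕ) (s : ℝ) (Ω : Set (Euc N)) (u : Euc N → ℝ) (x : Euc N) : ℝ :=
  cNs N s * ∫ y in Ω, (u x - u y) / kern N s x y

/-- Membership in `H̃^s_{Ω,0}`: members of `H^s_{Ω,0}` with `𝒩_s u = 0` a.e. in `Ω^c`. -/
def memHsTilde (N : ℕ) (s : ℝ) (Ω : Set (Euc N)) (u : Euc N → ℝ) : Prop :=
  memHs N s Ω u ∧ ∀ᵐ x ∂(volume.restrict (closure Ω)ᶜ), Nneu N s Ω u x = 0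

/-- The first nontrivial Neumann eigenvalue `μ₁^{(s)}(Ω)`. -/
def mu1 (N : ℕ) (s : ℝ) (Ω : Set (Euc N)) : ℝ :=
  sInf {t : ℝ | ∃ u : Euc N → ℝ, memHs N s Ω u ∧ (∫ x in Ω, (u x) ^ 2) = 1 ∧
    (∫ x in Ω, u x) = 0 ∧ t = cNs N s / 2 * (semiSq N s Ω u).toReal}

/-- The bilinear form (without the constant). -/
def bform (N : ℕ) (s : ℝ) (Ω : Set (Euc N)) (u v : Euc N → ℝ) : ℝ :=
  ∫ q in reg N Ω, (u q.1 - u q.2) * (v q.1 - v q.2) / kern N s q.1 q.2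

/-- First nontrivial eigenfunction: weak solution associated to `μ₁^{(s)}(Ω)`. -/
def IsFirstEigen (N : ℕ) (s : ℝ) (Ω : Set (Euc N)) (u : Euc N → ℝ) : Prop :=
  memHs N s Ω u ∧ ¬ (u =ᵐ[volume.restrict Ω] 0) ∧ (∫ x in Ω, u x) = 0 ∧
    ∀ v : Euc N → ℝ, memHs N s Ω v →
      cNs N s / 2 * bform N s Ω u v = mu1 N s Ω * ∫ x in Ω, u x * v x

/-- Reflection `σ_e(x) = x - 2(x·e)e` across the hyperplane `{x·e = 0}`. -/
def reflect (N : ℕ) (e x : Euc N) : Euc N := x - (2 * (inner ℝ x e : ℝ)) • e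

/-- The polarization `P_e u` with respect to the hyperplane `{x·e = 0}`. -/
def polarize (N : ℕ) (e : Euc N) (u : Euc N → ℝ) (x : Euc N) : ℝ :=
  if 0 ≤ (inner ℝ x e : ℝ) then min (u x) (u (reflect N e x))
  else max (u x) (u (reflect N e x))

/-- Foliated Schwarz symmetry with respect to `p`. -/
def FoliatedSchwarz (N : ℕ) (p : Euc N) (u : Euc N → ℝ) : Prop :=
  ∃ uh : ℝ → ℝ → ℝ, (∀ r : ℝ, AntitoneOn (uh r) (Icc 0 Real.pi)) ∧
    ∀ x : Euc N, x ≠ 0 → u x = uh ‖x‖ (Real.arccos ((inner ℝ x p : ℝ) / ‖x‖))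

/-- Radial symmetry (pointwise). -/
def Radial (N : ℕ) (u : Euc N → ℝ) : Prop := ∃ f : ℝ → ℝ, ∀ x, u x = f ‖x‖

/-- Radial symmetry (a.e.). -/
def RadialAE (N : ℕ) (u : Euc N → ℝ) : Prop :=
  ∃ f : ℝ → ℝ, ∀ᵐ x : Euc N ∂volume, u x = f ‖x‖

/-- The set `{x ∈ Ω : u x ≠ 0}` has exactly two connected components. -/
def TwoNodal (N : ℕ) (Ω : Set (Euc N)) (u : Euc N → ℝ) : Prop :=
  Nat.card (ConnectedComponents {x : Euc N // x ∈ Ω ∧ u x ≠ 0}) = 2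

/-- Bounded Lipschitz domain: open, bounded, connected, and near every boundary point the set
is the region above the graph of a Lipschitz function in some direction `e`. -/
def IsLipschitzDomain (N : ℕ) (Ω : Set (Euc N)) : Prop :=
  IsOpen Ω ∧ IsBounded Ω ∧ IsConnected Ω ∧
    ∀ x ∈ frontier Ω, ∃ e : Euc N, ‖e‖ = 1 ∧ ∃ r : ℝ, 0 < r ∧
      ∃ (L : NNReal) (f : Euc N → ℝ), LipschitzWith L f ∧
        ∀ y ∈ Metric.ball x r,
          (y ∈ Ω ↔ f (y - ((inner ℝ y e : ℝ)) • e) < (inner ℝ y e : ℝ))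

/-- `g` is a weak gradient of `u` in `Ω`, square-integrable on `Ω`. -/
def IsWeakGradient (N : ℕ) (Ω : Set (Euc N)) (u : Euc N → ℝ) (g : Euc N → Euc N) : Prop :=
  Measurable g ∧ (∫⁻ x in Ω, ENNReal.ofReal (‖g x‖ ^ 2)) < ⊤ ∧
    ∀ φ : Euc N → ℝ, ContDiff ℝ (⊤ : ℕ∞) φ → HasCompactSupport φ → tsupport φ ⊆ Ω →
      ∀ i : Fin N, (∫ x in Ω, u x * fderiv ℝ φ x (EuclideanSpace.single i 1)) =
        - ∫ x in Ω, g x i * φ x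

/-- Membership in `H¹(Ω)`. -/
def memH1 (N : ℕ) (Ω : Set (Euc N)) (u : Euc N → ℝ) : Prop :=
  Measurable u ∧ l2sq N Ω u < ⊤ ∧ ∃ g, IsWeakGradient N Ω u g

/-- `∫_Ω |∇u|²`, as an extended real number. -/
def gradSq (N : ℕ) (Ω : Set (Euc N)) (u : Euc N → ℝ) : ℝ≥0∞ :=
  ⨅ (g : Euc N → Euc N) (_ : IsWeakGradient N Ω u g), ∫⁻ x in Ω, ENNReal.ofReal (‖g x‖ ^ 2)

/-- Rayleigh quotient for the fractional Neumann problem. -/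
def rayleighS (N : ℕ) (s : ℝ) (Ω : Set (Euc N)) (u : Euc N → ℝ) : ℝ≥0∞ :=
  ENNReal.ofReal (cNs N s / 2) * semiSq N s Ω u / l2sq N Ω u

/-- Rayleigh quotient for the local Neumann problem. -/
def rayleigh1 (N : ℕ) (Ω : Set (Euc N)) (u : Euc N → ℝ) : ℝ≥0∞ :=
  gradSq N Ω u / l2sq N Ω u

/-- The min-max value `μ_n^{(s)}(Ω)` over `n`-dimensional subspaces of `H^s_{Ω,0} ∩ L²₀(Ω)`. -/
def muNs (N : ℕ) (s : ℝ) (Ω : Set (Euc N)) (n : ℕ) : ℝ≥0∞ :=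
  ⨅ (A : Submodule ℝ (Euc N → ℝ)) (_ : Module.finrank ℝ A = n ∧
      (∀ u ∈ A, memHs N s Ω u ∧ (∫ x in Ω, u x) = 0) ∧
      (∀ u ∈ A, u =ᵐ[(volume : Measure (Euc N))] 0 → u = 0)),
    ⨆ (u : Euc N → ℝ) (_ : u ∈ A ∧ u ≠ 0), rayleighS N s Ω u

/-- The min-max value over `n`-dimensional subspaces of `H̃^s_{Ω,0} ∩ L²₀(Ω)`. -/
def muNsTilde (N : ℕ) (s : ℝ) (Ω : Set (Euc N)) (n : ℕ) : ℝ≥0∞ :=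
  ⨅ (A : Submodule ℝ (Euc N → ℝ)) (_ : Module.finrank ℝ A = n ∧
      (∀ u ∈ A, memHsTilde N s Ω u ∧ (∫ x in Ω, u x) = 0) ∧
      (∀ u ∈ A, u =ᵐ[(volume : Measure (Euc N))] 0 → u = 0)),
    ⨆ (u : Euc N → ℝ) (_ : u ∈ A ∧ u ≠ 0), rayleighS N s Ω u

/-- The min-max value `μ_n^{(1)}(Ω)` over `n`-dimensional subspaces of `H¹(Ω) ∩ L²₀(Ω)`. -/
def muN1 (N : ℕ) (Ω : Set (Euc N)) (n : ℕ) : ℝ≥0∞ :=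
  ⨅ (A : Submodule ℝ (Euc N → ℝ)) (_ : Module.finrank ℝ A = n ∧
      (∀ u ∈ A, memH1 N Ω u ∧ (∫ x in Ω, u x) = 0) ∧
      (∀ u ∈ A, u =ᵐ[volume.restrict Ω] 0 → u = 0)),
    ⨆ (u : Euc N → ℝ) (_ : u ∈ A ∧ u ≠ 0), rayleigh1 N Ω u

/-- `μ_n^{(s)}(Ω)` including `μ₀^{(s)}(Ω) := 0`. -/
def muNsFull (N : ℕ) (s : ℝ) (Ω : Set (Euc N)) (n : ℕ) : ℝ≥0∞ :=
  if n = 0 then 0 else muNs N s Ω n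

/-- `μ_n^{(1)}(Ω)` including `μ₀^{(1)}(Ω) := 0`. -/
def muN1Full (N : ℕ) (Ω : Set (Euc N)) (n : ℕ) : ℝ≥0∞ :=
  if n = 0 then 0 else muN1 N Ω n

/-- The squared `H^s_{Ω,0}`-seminorm of the `s`-minimal extension of `u`:
the minimal value of `[v]²` over `v ∈ H^s_{Ω,0}` with `v = u` a.e. in `Ω`. -/
def minExtSemiSq (N : ℕ) (s : ℝ) (Ω : Set (Euc N)) (u : Euc N → ℝ) : ℝ≥0∞ :=
  ⨅ (v : Euc N → ℝ) (_ : memHs N s Ω v ∧ v =ᵐ[volume.restrict Ω] u), semiSq N s Ω v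

/-- `ω_{N-1}`: volume of the unit ball of `ℝ^{N-1}`. -/
def omegaPrev (N : ℕ) : ℝ := (volume (Metric.ball (0 : Euc (N - 1)) 1)).toReal

/-- Membership in `L²₀(Ω)`. -/
def memL20 (N : ℕ) (Ω : Set (Euc N)) (u : Euc N → ℝ) : Prop :=
  Measurable u ∧ l2sq N Ω u < ⊤ ∧ (∫ x in Ω, u x) = 0

/-- The functional `F_s` (value `+∞` outside `H^s(Ω)`). -/
def Fs (N : ℕ) (s : ℝ) (Ω : Set (Euc N)) (u : Euc N → ℝ) : ℝ≥0∞ :=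
  ENNReal.ofReal (1 - s) * minExtSemiSq N s Ω u

/-- The functional `F₁` (value `+∞` outside `H¹(Ω)`). -/
def F1 (N : ℕ) (Ω : Set (Euc N)) (u : Euc N → ℝ) : ℝ≥0∞ :=
  ENNReal.ofReal (omegaPrev N / (2 * N)) * gradSq N Ω u

end FracNeumann

/-!
Let `X` be a vector field pointing into `Ω` along its boundary, and let
`T_t u (x) = (ρ_t * u) (x + t X(x))`, where `ρ_t` is a mollifier at scale proportional to `t` and
`u` is cut off outside `Ω`. Since the flow stays away from the boundary, `T_t u` only sees values of
`u` in `Ω`, yet it is a `C^{1,1}` function on all of `ℝ^N`. Four facts link the two spectral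
problems, all uniform in `u`:

* the Dirichlet energy of `T_t u` is at most `1 + o(1)` times that of `u` as `t → 0`;
* for fixed `t` it is also asymptotically at most the fractional energy of `u` as `s → 1`, because
  `c_{N,s}` concentrates that energy near the diagonal, where difference quotients of mollified
  functions approximate derivatives;
* for `C^{1,1}` functions the fractional energy is asymptotically at most the Dirichlet energy;
* `‖T_t u - u‖²_{L²(Ω)} ≤ C t · (c_{N,s}/2) [u]²_{H^s(Ω)}` with `C` independent of `s` near `1`,
  by telescoping over dyadic scales.

Subtracting means, `T_t` therefore carries an `n`-dimensional trial space of either problem to an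
`n`-dimensional trial space of the other with almost the same Rayleigh quotients, and comparing
the min-max values in both directions gives the limit.
-/

namespace FracNeumann

section InwardCone

variable {E : Type*} [NormedAddCommGroup E]

/-- The vectors pointing into `Ω` near `x`, uniformly with respect to base points of `closure Ω`
close to `x` (Clarke's hypertangent cone). -/
def inwardCone [NormedSpace ℝ E] (Ω : Set E) (x : E) : Set E :=
  {v | ∃ ε > 0, ∀ y ∈ closure Ω ∩ Metric.ball x ε, ∀ τ ∈ Ioo (0 : ℝ) ε,
    Metric.ball (y + τ • v) (ε * τ) ⊆ Ω}

theorem smul_mem_inwardCone [NormedSpace ℝ E] {Ω : Set E} {x v : E} (hv : v ∈ inwardCone Ω x)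
    {a : ℝ} (ha : 0 < a) : a • v ∈ inwardCone Ω x := by
  obtain ⟨ε, hε, hv⟩ := hv
  refine ⟨min ε (min (ε / a) (ε * a)), by positivity, fun y hy τ hτ => ?_⟩
  have hτa : τ * a < ε :=
    (lt_div_iff₀ ha).1 (hτ.2.trans_le ((min_le_right _ _).trans (min_le_left _ _)))
  have hrad : min ε (min (ε / a) (ε * a)) * τ ≤ ε * (τ * a) := by
    have := mul_le_mul_of_nonneg_right
      ((min_le_right ε _).trans (min_le_right (ε / a) (ε * a))) hτ.1.le
    linarith
  rw [smul_smul]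
  exact (Metric.ball_subset_ball hrad).trans (hv y
    ⟨hy.1, Metric.ball_subset_ball (min_le_left _ _) hy.2⟩ (τ * a) ⟨mul_pos hτ.1 ha, hτa⟩)

theorem add_mem_inwardCone [NormedSpace ℝ E] {Ω : Set E} {x v w : E} (hv : v ∈ inwardCone Ω x)
    (hw : w ∈ inwardCone Ω x) : v + w ∈ inwardCone Ω x := by
  obtain ⟨ε, hε, hv⟩ := hv
  obtain ⟨η, hη, hw⟩ := hw
  set δ := min ε η
  have hδε : δ ≤ ε := min_le_left _ _
  have hδη : δ ≤ η := min_le_right _ _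
  have hδ : 0 < δ := lt_min hε hη
  have hvδ : 0 < 2 * (‖v‖ + δ) := by positivity
  refine ⟨min (δ / 2) (δ / (2 * (‖v‖ + δ))), lt_min (half_pos hδ) (div_pos hδ hvδ),
    fun y hy τ hτ q hq => ?_⟩
  obtain ⟨hyΩ, hyx⟩ := hy
  obtain ⟨hτ0, hτδ⟩ := hτ
  obtain ⟨hyx, -⟩ := lt_min_iff.1 (mem_ball_iff_norm.1 hyx)
  obtain ⟨hτδ, hτv⟩ := lt_min_iff.1 hτδ
  rw [lt_div_iff₀ hvδ] at hτv
  set z := (1 / 2 : ℝ) • (q - (y + τ • (v + w))) with hz_def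
  have hz : ‖z‖ < δ * τ := by
    rw [hz_def, norm_smul, Real.norm_of_nonneg (by norm_num)]
    nlinarith [mem_ball_iff_norm.1 hq, min_le_left (δ / 2) (δ / (2 * (‖v‖ + δ))),
      norm_nonneg (q - (y + τ • (v + w)))]
  -- Move first by `τ • v`, which stays in `Ω`, and then by `τ • w`.
  have hpΩ : y + τ • v + z ∈ Ω := by
    refine hv y ⟨hyΩ, mem_ball_iff_norm.2 (by linarith)⟩ τ ⟨hτ0, by linarith⟩ ?_
    rw [mem_ball_iff_norm, add_sub_cancel_left]
    exact hz.trans_le (mul_le_mul_of_nonneg_right hδε hτ0.le)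
  have hpx : y + τ • v + z ∈ Metric.ball x η := by
    rw [mem_ball_iff_norm]
    calc ‖y + τ • v + z - x‖ = ‖(y - x) + τ • v + z‖ := by congr 1; abel
      _ ≤ ‖y - x‖ + ‖τ • v‖ + ‖z‖ := norm_add₃_le
      _ < η := by rw [norm_smul, Real.norm_of_nonneg hτ0.le]; linarith
  refine hw _ ⟨subset_closure hpΩ, hpx⟩ τ ⟨hτ0, by linarith⟩ ?_
  have hq' : q - (y + τ • v + z + τ • w) = z := by
    rw [hz_def]
    module
  rw [mem_ball_iff_norm, hq']
  exact hz.trans_le (mul_le_mul_of_nonneg_right hδη hτ0.le)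

theorem convex_inwardCone [NormedSpace ℝ E] (Ω : Set E) (x : E) : Convex ℝ (inwardCone Ω x) :=
  convex_iff_forall_pos.2 fun _ hv _ hw _ _ ha hb _ =>
    add_mem_inwardCone (smul_mem_inwardCone hv ha) (smul_mem_inwardCone hw hb)

theorem eventually_mem_inwardCone [NormedSpace ℝ E] {Ω : Set E} {x v : E}
    (hv : v ∈ inwardCone Ω x) : ∀ᶠ y in 𝓝 x, v ∈ inwardCone Ω y := by
  obtain ⟨ε, hε, hv⟩ := hv
  filter_upwards [Metric.ball_mem_nhds x (half_pos hε)] with y hy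
  refine ⟨ε / 2, half_pos hε, fun z hz τ hτ => ?_⟩
  have hzx : z ∈ Metric.ball x ε := Metric.ball_subset (by linarith [Metric.mem_ball.1 hy]) hz.2
  refine (Metric.ball_subset_ball ?_).trans (hv z ⟨hz.1, hzx⟩ τ ⟨hτ.1, by linarith [hτ.2]⟩)
  nlinarith [hτ.1]

theorem zero_mem_inwardCone [NormedSpace ℝ E] {Ω : Set E} (hΩ : IsOpen Ω) {x : E}
    (hx : x ∉ frontier Ω) : 0 ∈ inwardCone Ω x := by
  by_cases hxΩ : x ∈ Ω
  · obtain ⟨ε, hε, hball⟩ := Metric.isOpen_iff.1 hΩ x hxΩ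
    refine ⟨min 1 (ε / 2), by positivity, fun y hy τ hτ => ?_⟩
    refine Subset.trans (fun z hz => ?_) hball
    rw [smul_zero, add_zero, Metric.mem_ball] at hz
    have hτ1 : min 1 (ε / 2) * τ ≤ ε / 2 * 1 :=
      mul_le_mul (min_le_right _ _) (hτ.2.le.trans (min_le_left _ _)) hτ.1.le (by positivity)
    have hyx := (Metric.mem_ball.1 hy.2).trans_le (min_le_right _ _)
    exact Metric.mem_ball.2 (by linarith [dist_triangle z y x])
  · have hx' : x ∉ closure Ω := fun h => hx (by rw [hΩ.frontier_eq]; exact ⟨h, hxΩ⟩)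
    obtain ⟨ε, hε, hball⟩ := Metric.isOpen_iff.1 isClosed_closure.isOpen_compl x hx'
    exact ⟨ε, hε, fun y hy => absurd hy.1 (hball hy.2)⟩

section Lipschitz

variable [InnerProductSpace ℝ E]

/-- Near every boundary point `Ω` is, in some direction `e`, the region above the graph of a
Lipschitz function of the component orthogonal to `e`. -/
def HasLipschitzBoundary (Ω : Set E) : Prop :=
  ∀ x ∈ frontier Ω, ∃ e : E, ‖e‖ = 1 ∧ ∃ r : ℝ, 0 < r ∧ ∃ (L : ℝ≥0) (f : E → ℝ),
    LipschitzWith L f ∧ ∀ y ∈ Metric.ball x r, (y ∈ Ω ↔ f (y - inner ℝ y e • e) < inner ℝ y e)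

theorem norm_sub_inner_smul_le {e : E} (he : ‖e‖ = 1) (z : E) : ‖z - inner ℝ z e • e‖ ≤ ‖z‖ := by
  refine (sq_le_sq₀ (norm_nonneg _) (norm_nonneg _)).1 ?_
  rw [norm_sub_sq_real, real_inner_smul_right, norm_smul, he, Real.norm_eq_abs, mul_one, sq_abs]
  nlinarith [sq_nonneg (inner ℝ z e : ℝ)]

theorem lt_inner_of_le_inner {e : E} (he : ‖e‖ = 1) {L : ℝ≥0} {f : E → ℝ} (hf : LipschitzWith L f)
    {y z : E} {τ : ℝ} (hy : f (y - inner ℝ y e • e) ≤ inner ℝ y e) (hz : (1 + L) * ‖z‖ < τ) :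
    f (y + τ • e + z - inner ℝ (y + τ • e + z) e • e) < inner ℝ (y + τ • e + z) e := by
  have hee : (inner ℝ e e : ℝ) = 1 := by rw [real_inner_self_eq_norm_sq, he, one_pow]
  have hinner : (inner ℝ (y + τ • e + z) e : ℝ) = inner ℝ y e + τ + inner ℝ z e := by
    rw [inner_add_left, inner_add_left, real_inner_smul_left, hee, mul_one]
  have hproj : y + τ • e + z - (inner ℝ (y + τ • e + z) e : ℝ) • e =
      (y - inner ℝ y e • e) + (z - inner ℝ z e • e) := by
    rw [hinner]
    module
  have hflip := hf.dist_le_mul ((y - inner ℝ y e • e) + (z - inner ℝ z e • e))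
    (y - inner ℝ y e • e)
  rw [dist_eq_norm, dist_eq_norm, add_sub_cancel_left] at hflip
  have hfz : f ((y - inner ℝ y e • e) + (z - inner ℝ z e • e)) ≤
      f (y - inner ℝ y e • e) + L * ‖z‖ := by
    have := mul_le_mul_of_nonneg_left (norm_sub_inner_smul_le he z) L.coe_nonneg
    linarith [le_abs_self (f ((y - inner ℝ y e • e) + (z - inner ℝ z e • e)) -
      f (y - inner ℝ y e • e)), Real.norm_eq_abs (f ((y - inner ℝ y e • e) +
      (z - inner ℝ z e • e)) - f (y - inner ℝ y e • e))]
  have hze : -‖z‖ ≤ inner ℝ z e := by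
    have := abs_real_inner_le_norm z e
    rw [he, mul_one] at this
    exact (abs_le.1 this).1
  rw [hproj, hinner]
  linarith

theorem HasLipschitzBoundary.inwardCone_nonempty {Ω : Set E} (hΩ : HasLipschitzBoundary Ω) {x : E}
    (hx : x ∈ frontier Ω) : (inwardCone Ω x).Nonempty := by
  obtain ⟨e, he, r, hr, L, f, hf, hchart⟩ := hΩ x hx
  have hL : (0 : ℝ) < 1 + L := by positivity
  have hle : ∀ y ∈ closure Ω ∩ Metric.ball x r, f (y - inner ℝ y e • e) ≤ inner ℝ y e := by
    have hclosed : IsClosed {y : E | f (y - inner ℝ y e • e) ≤ inner ℝ y e} :=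
      isClosed_le (hf.continuous.comp (by fun_prop)) (by fun_prop)
    exact fun y hy => closure_minimal (fun w hw => ((hchart w hw.1).1 hw.2).le) hclosed
      (Metric.isOpen_ball.inter_closure ⟨hy.2, hy.1⟩)
  refine ⟨e, min (r / 3) (min 1 (1 / (1 + L))), by positivity, fun y hy τ hτ q hq => ?_⟩
  set ε := min (r / 3) (min 1 (1 / (1 + L)))
  have hεr : ε ≤ r / 3 := min_le_left _ _
  have hε1 : ε ≤ 1 := (min_le_right _ _).trans (min_le_left _ _)
  have hεL : ε ≤ 1 / (1 + L) := (min_le_right _ _).trans (min_le_right _ _)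
  obtain ⟨hyΩ, hyx⟩ := hy
  obtain ⟨hτ0, hτε⟩ := hτ
  rw [mem_ball_iff_norm] at hyx hq
  set z := q - (y + τ • e) with hz
  have hqz : q = y + τ • e + z := by rw [hz]; abel
  have hzL : (1 + L) * ‖z‖ < τ := by
    have : ‖z‖ < 1 / (1 + L) * τ := hq.trans_le (mul_le_mul_of_nonneg_right hεL hτ0.le)
    rwa [one_div, inv_mul_eq_div, lt_div_iff₀' hL] at this
  have hqx : q ∈ Metric.ball x r := by
    have hτe : ‖τ • e‖ = τ := by rw [norm_smul, he, mul_one, Real.norm_of_nonneg hτ0.le]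
    rw [mem_ball_iff_norm]
    calc ‖q - x‖ = ‖(y - x) + τ • e + z‖ := by rw [hqz]; congr 1; abel
      _ ≤ ‖y - x‖ + ‖τ • e‖ + ‖z‖ := norm_add₃_le
      _ < r := by nlinarith
  rw [hchart q hqx, hqz]
  exact lt_inner_of_le_inner he hf
    (hle y ⟨hyΩ, mem_ball_iff_norm.2 (by linarith)⟩) hzL

theorem HasLipschitzBoundary.exists_contDiff_inwardCone [FiniteDimensional ℝ E] {Ω : Set E}
    (hΩ : HasLipschitzBoundary Ω) (hopen : IsOpen Ω) :
    ∃ X : E → E, ContDiff ℝ (⊤ : ℕ∞) X ∧ ∀ x, X x ∈ inwardCone Ω x := by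
  have hloc (x : E) : ∃ v, ∀ᶠ y in 𝓝 x, v ∈ inwardCone Ω y := by
    by_cases hx : x ∈ frontier Ω
    · exact (hΩ.inwardCone_nonempty hx).imp fun v hv => eventually_mem_inwardCone hv
    · exact ⟨0, eventually_mem_inwardCone (zero_mem_inwardCone hopen hx)⟩
  obtain ⟨X, hX⟩ := exists_contMDiffMap_forall_mem_convex_of_local_const (n := (⊤ : ℕ∞))
    (modelWithCornersSelf ℝ E) (convex_inwardCone Ω) hloc
  exact ⟨X, X.contMDiff.contDiff, hX⟩

end Lipschitz

theorem exists_ball_add_smul_subset [NormedSpace ℝ E] {Ω K : Set E} (hK : IsCompact K)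
    (hKΩ : K ⊆ closure Ω) {X : E → E} (hX : Continuous X) (hmem : ∀ x ∈ K, X x ∈ inwardCone Ω x) :
    ∃ ε > 0, ∀ x ∈ K, ∀ t ∈ Ioo (0 : ℝ) ε, Metric.ball (x + t • X x) (ε * t) ⊆ Ω := by
  refine hK.induction_on (p := fun S => ∃ ε > 0, ∀ x ∈ S, ∀ t ∈ Ioo (0 : ℝ) ε,
    Metric.ball (x + t • X x) (ε * t) ⊆ Ω) ⟨1, one_pos, by simp⟩
    (fun S S' hSS' ⟨ε, hε, h⟩ => ⟨ε, hε, fun x hx => h x (hSS' hx)⟩) ?_ ?_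
  · rintro S S' ⟨ε, hε, h⟩ ⟨η, hη, h'⟩
    have hmin {σ : ℝ} (hσ : min ε η ≤ σ) {x : E} {t : ℝ} (ht : t ∈ Ioo 0 (min ε η))
        (hball : t ∈ Ioo 0 σ → Metric.ball (x + t • X x) (σ * t) ⊆ Ω) :
        Metric.ball (x + t • X x) (min ε η * t) ⊆ Ω :=
      (Metric.ball_subset_ball (mul_le_mul_of_nonneg_right hσ ht.1.le)).trans
        (hball ⟨ht.1, ht.2.trans_le hσ⟩)
    refine ⟨min ε η, lt_min hε hη, fun x hx t ht => ?_⟩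
    exact hx.elim (fun hx => hmin (min_le_left _ _) ht (h x hx t))
      (fun hx => hmin (min_le_right _ _) ht (h' x hx t))
  · intro x hx
    obtain ⟨ε, hε, hball⟩ := hmem x hx
    refine ⟨K ∩ (Metric.ball x ε ∩ X ⁻¹' Metric.ball (X x) (ε / 2)), ?_, ε / 2, half_pos hε, ?_⟩
    · exact inter_mem_nhdsWithin K (inter_mem (Metric.ball_mem_nhds x hε)
        (hX.continuousAt (Metric.ball_mem_nhds _ (half_pos hε))))
    · rintro y ⟨hyK, hyx, hyX⟩ t ⟨ht0, htε⟩
      refine Subset.trans (Metric.ball_subset ?_) (hball y ⟨hKΩ hyK, hyx⟩ t ⟨ht0, by linarith⟩)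
      rw [mem_preimage, mem_ball_iff_norm] at hyX
      rw [dist_eq_norm, add_sub_add_left_eq_sub, ← smul_sub, norm_smul, Real.norm_of_nonneg ht0.le]
      nlinarith

theorem HasLipschitzBoundary.exists_hasCompactSupport_ball_subset [InnerProductSpace ℝ E]
    [FiniteDimensional ℝ E] {Ω : Set E} (hΩ : HasLipschitzBoundary Ω) (hopen : IsOpen Ω)
    (hbdd : IsBounded Ω) :
    ∃ X : E → E, ContDiff ℝ (⊤ : ℕ∞) X ∧ HasCompactSupport X ∧ ∃ ε > 0, ∀ x ∈ closure Ω,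
      ∀ t ∈ Ioo (0 : ℝ) ε, Metric.ball (x + t • X x) (ε * t) ⊆ Ω := by
  obtain ⟨X, hX, hXcone⟩ := hΩ.exists_contDiff_inwardCone hopen
  obtain ⟨R, hR, hΩR⟩ := hbdd.closure.subset_closedBall_lt 0 0
  let χ : ContDiffBump (0 : E) := ⟨R, R + 1, hR, by linarith⟩
  have hχX : ContDiff ℝ (⊤ : ℕ∞) fun x => χ x • X x := χ.contDiff.smul hX
  refine ⟨fun x => χ x • X x, hχX, χ.hasCompactSupport.smul_right, ?_⟩
  refine exists_ball_add_smul_subset hbdd.isCompact_closure subset_rfl hχX.continuous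
    fun x hx => ?_
  rw [χ.one_of_mem_closedBall (hΩR hx), one_smul]
  exact hXcone x

end InwardCone

section C11Bound

variable {E F : Type*} [NormedAddCommGroup E] [NormedSpace ℝ E] [NormedAddCommGroup F]
  [NormedSpace ℝ F]

/-- `w` is of class `C^{1,1}`, and `M` bounds `w`, its derivative, and the Lipschitz constant of
its derivative. -/
structure C11Bound (w : E → F) (M : ℝ) : Prop where
  differentiable : Differentiable ℝ w
  norm_le (x : E) : ‖w x‖ ≤ M
  norm_fderiv_le (x : E) : ‖fderiv ℝ w x‖ ≤ M
  norm_fderiv_sub_le (x y : E) : ‖fderiv ℝ w x - fderiv ℝ w y‖ ≤ M * ‖x - y‖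

namespace C11Bound

variable {w : E → F} {M : ℝ}

theorem nonneg (hw : C11Bound w M) : 0 ≤ M :=
  (norm_nonneg _).trans (hw.norm_le 0)

theorem mono (hw : C11Bound w M) {M' : ℝ} (hM : M ≤ M') : C11Bound w M' where
  differentiable := hw.differentiable
  norm_le x := (hw.norm_le x).trans hM
  norm_fderiv_le x := (hw.norm_fderiv_le x).trans hM
  norm_fderiv_sub_le x y := (hw.norm_fderiv_sub_le x y).trans (by gcongr)

theorem continuous (hw : C11Bound w M) : Continuous w :=
  hw.differentiable.continuous

theorem continuous_fderiv (hw : C11Bound w M) : Continuous (fderiv ℝ w) :=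
  (LipschitzWith.of_dist_le_mul (K := M.toNNReal) fun x y => by
    rw [dist_eq_norm, dist_eq_norm, Real.coe_toNNReal _ hw.nonneg]
    exact hw.norm_fderiv_sub_le x y).continuous

theorem norm_sub_le (hw : C11Bound w M) (x y : E) : ‖w x - w y‖ ≤ M * ‖x - y‖ :=
  convex_univ.norm_image_sub_le_of_norm_fderiv_le (fun z _ => hw.differentiable z)
    (fun z _ => hw.norm_fderiv_le z) (mem_univ y) (mem_univ x)

theorem norm_sub_sub_fderiv_le (hw : C11Bound w M) (x y : E) :
    ‖w y - w x - fderiv ℝ w x (y - x)‖ ≤ M * ‖y - x‖ ^ 2 := by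
  have hfd (z : E) (hz : z ∈ segment ℝ x y) : ‖fderiv ℝ w z - fderiv ℝ w x‖ ≤ M * ‖y - x‖ :=
    (hw.norm_fderiv_sub_le z x).trans
      (mul_le_mul_of_nonneg_left (norm_sub_le_of_mem_segment hz) hw.nonneg)
  have := (convex_segment x y).norm_image_sub_le_of_norm_fderiv_le'
    (fun z _ => hw.differentiable z) hfd (left_mem_segment ℝ x y) (right_mem_segment ℝ x y)
  rwa [mul_assoc, ← sq] at this

theorem sub_const (hw : C11Bound w M) {m : F} (hm : ‖m‖ ≤ M) :
    C11Bound (fun x => w x - m) (2 * M) where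
  differentiable := hw.differentiable.sub_const m
  norm_le x := (_root_.norm_sub_le _ _).trans (by linarith [hw.norm_le x])
  norm_fderiv_le x := by
    rw [fderiv_sub_const]
    linarith [hw.norm_fderiv_le x, hw.nonneg]
  norm_fderiv_sub_le x y := by
    rw [fderiv_sub_const, fderiv_sub_const]
    refine (hw.norm_fderiv_sub_le x y).trans ?_
    gcongr
    linarith [hw.nonneg]

end C11Bound

theorem exists_c11Bound [FiniteDimensional ℝ E] {f : E → F}
    (hf : ContDiff ℝ 2 f) (hc : HasCompactSupport f) : ∃ M : ℝ, 0 < M ∧ C11Bound f M := by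
  have hf' : ContDiff ℝ 1 (fderiv ℝ f) := hf.fderiv_right le_rfl
  obtain ⟨M₀, hM₀⟩ := hc.exists_bound_of_continuous hf.continuous
  obtain ⟨M₁, hM₁⟩ := (hc.fderiv ℝ).exists_bound_of_continuous hf'.continuous
  obtain ⟨K, hK⟩ := hf'.lipschitzWith_of_hasCompactSupport (hc.fderiv ℝ) one_ne_zero
  refine ⟨max (max M₀ M₁) (max K 1), by positivity, hf.differentiable two_ne_zero,
    fun x => (hM₀ x).trans ((le_max_left _ _).trans (le_max_left _ _)),
    fun x => (hM₁ x).trans ((le_max_right _ _).trans (le_max_left _ _)), fun x y => ?_⟩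
  rw [← dist_eq_norm, ← dist_eq_norm]
  refine (hK.dist_le_mul x y).trans (mul_le_mul_of_nonneg_right ?_ dist_nonneg)
  exact (le_max_left _ _).trans (le_max_right _ _)

section Shift

variable {X : E → E} {L t : ℝ}

theorem C11Bound.hasFDerivAt_add_smul (hX : C11Bound X L) (t : ℝ) (x : E) :
    HasFDerivAt (fun x => x + t • X x) (ContinuousLinearMap.id ℝ E + t • fderiv ℝ X x) x :=
  (hasFDerivAt_id x).add ((hX.differentiable x).hasFDerivAt.const_smul t)

theorem C11Bound.fderiv_comp_add_smul {w : E → F} (hw : Differentiable ℝ w) (hX : C11Bound X L)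
    (t : ℝ) (x : E) : fderiv ℝ (fun x => w (x + t • X x)) x =
      (fderiv ℝ w (x + t • X x)).comp (ContinuousLinearMap.id ℝ E + t • fderiv ℝ X x) :=
  ((hw _).hasFDerivAt.comp x (hX.hasFDerivAt_add_smul t x)).fderiv

theorem C11Bound.norm_id_add_smul_fderiv_le (hX : C11Bound X L) (ht : 0 ≤ t) (x : E) :
    ‖ContinuousLinearMap.id ℝ E + t • fderiv ℝ X x‖ ≤ 1 + t * L := by
  refine (norm_add_le _ _).trans (add_le_add ContinuousLinearMap.norm_id_le ?_)
  rw [norm_smul, Real.norm_of_nonneg ht]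
  exact mul_le_mul_of_nonneg_left (hX.norm_fderiv_le x) ht

theorem C11Bound.norm_fderiv_comp_add_smul_le {w : E → F} (hw : Differentiable ℝ w)
    (hX : C11Bound X L) (ht : 0 ≤ t) (x : E) :
    ‖fderiv ℝ (fun x => w (x + t • X x)) x‖ ≤ ‖fderiv ℝ w (x + t • X x)‖ * (1 + t * L) := by
  rw [hX.fderiv_comp_add_smul hw]
  exact (ContinuousLinearMap.opNorm_comp_le _ _).trans
    (mul_le_mul_of_nonneg_left (hX.norm_id_add_smul_fderiv_le ht x) (norm_nonneg _))

theorem C11Bound.comp_add_smul {w : E → F} {M : ℝ} (hw : C11Bound w M) (hX : C11Bound X L)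
    (ht : 0 ≤ t) (ht1 : t ≤ 1) :
    C11Bound (fun x => w (x + t • X x)) (M * ((1 + L) ^ 2 + L)) := by
  have hM := hw.nonneg
  have hL := hX.nonneg
  have htL : t * L ≤ L := mul_le_of_le_one_left hL ht1
  refine ⟨fun x => ((hw.differentiable _).hasFDerivAt.comp x
    (hX.hasFDerivAt_add_smul t x)).differentiableAt,
    fun x => (hw.norm_le _).trans (by nlinarith [mul_nonneg hM hL]), fun x => ?_, fun x y => ?_⟩
  · calc _ ≤ ‖fderiv ℝ w (x + t • X x)‖ * (1 + t * L) :=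
          hX.norm_fderiv_comp_add_smul_le hw.differentiable ht x
      _ ≤ M * ((1 + L) ^ 2 + L) :=
          mul_le_mul (hw.norm_fderiv_le _) (by nlinarith) (by positivity) hM
  · rw [hX.fderiv_comp_add_smul hw.differentiable, hX.fderiv_comp_add_smul hw.differentiable]
    set D : E → E →L[ℝ] E := fun x => ContinuousLinearMap.id ℝ E + t • fderiv ℝ X x
    have hDx : ‖D x‖ ≤ 1 + L := (hX.norm_id_add_smul_fderiv_le ht x).trans (by gcongr)
    have hD : ‖D x - D y‖ ≤ L * ‖x - y‖ := by
      rw [add_sub_add_left_eq_sub, ← smul_sub, norm_smul, Real.norm_of_nonneg ht]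
      exact (mul_le_of_le_one_left (norm_nonneg _) ht1).trans (hX.norm_fderiv_sub_le x y)
    have hshift : ‖x + t • X x - (y + t • X y)‖ ≤ (1 + L) * ‖x - y‖ := by
      rw [add_sub_add_comm, ← smul_sub, one_add_mul]
      refine (norm_add_le _ _).trans (add_le_add_right ?_ _)
      rw [norm_smul, Real.norm_of_nonneg ht]
      exact (mul_le_of_le_one_left (norm_nonneg _) ht1).trans (hX.norm_sub_le x y)
    have hw' : ‖fderiv ℝ w (x + t • X x) - fderiv ℝ w (y + t • X y)‖ ≤ M * ((1 + L) * ‖x - y‖) :=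
      (hw.norm_fderiv_sub_le _ _).trans (by gcongr)
    have hsplit : (fderiv ℝ w (x + t • X x)).comp (D x) - (fderiv ℝ w (y + t • X y)).comp (D y) =
        (fderiv ℝ w (x + t • X x) - fderiv ℝ w (y + t • X y)).comp (D x) +
          (fderiv ℝ w (y + t • X y)).comp (D x - D y) := by
      rw [ContinuousLinearMap.sub_comp, ContinuousLinearMap.comp_sub, sub_add_sub_cancel]
    calc _ ≤ M * ((1 + L) * ‖x - y‖) * (1 + L) + M * (L * ‖x - y‖) := by
          rw [hsplit]
          refine (norm_add_le _ _).trans (add_le_add ?_ ?_)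
          · exact (ContinuousLinearMap.opNorm_comp_le _ _).trans
              (mul_le_mul hw' hDx (norm_nonneg _) (by positivity))
          · exact (ContinuousLinearMap.opNorm_comp_le _ _).trans
              (mul_le_mul (hw.norm_fderiv_le _) hD (norm_nonneg _) hM)
      _ = M * ((1 + L) ^ 2 + L) * ‖x - y‖ := by ring

end Shift

end C11Bound

section Mollify

variable {E F : Type*} [NormedAddCommGroup E] [MeasureSpace E] [NormedAddCommGroup F]
  [NormedSpace ℝ F]

/-- The convolution of the kernel `ρ` with the extension of `u|_Ω` by zero. -/
def mollify (Ω : Set E) (ρ : E → ℝ) (u : E → F) (x : E) : F :=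
  ∫ y in Ω, ρ (x - y) • u y

variable {Ω : Set E} {ρ : E → ℝ} {B : ℝ}

theorem mollify_smul (a : ℝ) (u : E → F) (x : E) :
    mollify Ω ρ (a • u) x = a • mollify Ω ρ u x := by
  rw [mollify, mollify, ← integral_smul]
  simp only [Pi.smul_apply, smul_comm _ a]

variable [BorelSpace E]

theorem integrableOn_comp_sub_left_smul {u : E → F} (hρ : Continuous ρ) (hB : ∀ z, ‖ρ z‖ ≤ B)
    (hu : IntegrableOn u Ω) (x : E) : IntegrableOn (fun y => ρ (x - y) • u y) Ω :=
  hu.bdd_smul B (Continuous.aestronglyMeasurable (by fun_prop)) (Eventually.of_forall fun _ => hB _)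

theorem mollify_add {u v : E → F} (hρ : Continuous ρ) (hB : ∀ z, ‖ρ z‖ ≤ B)
    (hu : IntegrableOn u Ω) (hv : IntegrableOn v Ω) (x : E) :
    mollify Ω ρ (u + v) x = mollify Ω ρ u x + mollify Ω ρ v x := by
  rw [mollify, mollify, mollify, ← integral_add (integrableOn_comp_sub_left_smul hρ hB hu x)
    (integrableOn_comp_sub_left_smul hρ hB hv x)]
  simp only [Pi.add_apply, smul_add]

variable [NormedSpace ℝ E] [SecondCountableTopology E] {u : E → ℝ}

theorem C11Bound.integrable_smul_fderiv (hρ : C11Bound ρ B) (hu : IntegrableOn u Ω) (x : E) :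
    IntegrableOn (fun y => u y • fderiv ℝ ρ (x - y)) Ω := by
  have hρ' : Continuous fun y => fderiv ℝ ρ (x - y) :=
    hρ.continuous_fderiv.comp (continuous_const.sub continuous_id)
  exact hu.smul_bdd B hρ'.aestronglyMeasurable (Eventually.of_forall fun _ => hρ.norm_fderiv_le _)

theorem C11Bound.hasFDerivAt_mollify (hρ : C11Bound ρ B) (hu : IntegrableOn u Ω) (x : E) :
    HasFDerivAt (mollify Ω ρ u) (∫ y in Ω, u y • fderiv ℝ ρ (x - y)) x := by
  have hderiv (y z : E) : HasFDerivAt (fun z => ρ (z - y) • u y) (u y • fderiv ℝ ρ (z - y)) z :=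
    ((hasFDerivAt_comp_sub y).2 (hρ.differentiable _).hasFDerivAt).mul_const (u y)
  refine hasFDerivAt_integral_of_dominated_of_fderiv_le (s := univ) (bound := fun y => |u y| * B)
    (F' := fun x y => u y • fderiv ℝ ρ (x - y)) univ_mem
    (Eventually.of_forall fun z =>
      (integrableOn_comp_sub_left_smul hρ.continuous hρ.norm_le hu z).aestronglyMeasurable)
    (integrableOn_comp_sub_left_smul hρ.continuous hρ.norm_le hu x)
    (hρ.integrable_smul_fderiv hu x).aestronglyMeasurable ?_ (hu.abs.mul_const B)
    (Eventually.of_forall fun y z _ => hderiv y z)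
  refine Eventually.of_forall fun y z _ => ?_
  rw [norm_smul, Real.norm_eq_abs]
  exact mul_le_mul_of_nonneg_left (hρ.norm_fderiv_le _) (abs_nonneg _)

theorem C11Bound.fderiv_mollify (hρ : C11Bound ρ B) (hu : IntegrableOn u Ω) (x : E) :
    fderiv ℝ (mollify Ω ρ u) x = ∫ y in Ω, u y • fderiv ℝ ρ (x - y) :=
  (hρ.hasFDerivAt_mollify hu x).fderiv

theorem C11Bound.mollify (hρ : C11Bound ρ B) (hu : IntegrableOn u Ω) :
    C11Bound (mollify Ω ρ u) (B * ∫ y in Ω, |u y|) := by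
  have hint : IntegrableOn (fun y => B * |u y|) Ω := hu.abs.const_mul B
  refine ⟨fun x => (hρ.hasFDerivAt_mollify hu x).differentiableAt, fun x => ?_, fun x => ?_,
    fun x y => ?_⟩
  · rw [← integral_const_mul]
    refine norm_integral_le_of_norm_le hint (Eventually.of_forall fun y => ?_)
    rw [norm_smul]
    exact mul_le_mul_of_nonneg_right (hρ.norm_le _) (norm_nonneg _)
  · rw [hρ.fderiv_mollify hu, ← integral_const_mul]
    refine norm_integral_le_of_norm_le hint (Eventually.of_forall fun y => ?_)
    rw [norm_smul, mul_comm]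
    exact mul_le_mul_of_nonneg_right (hρ.norm_fderiv_le _) (norm_nonneg _)
  · rw [hρ.fderiv_mollify hu, hρ.fderiv_mollify hu,
      ← integral_sub (hρ.integrable_smul_fderiv hu x) (hρ.integrable_smul_fderiv hu y),
      ← integral_const_mul, ← integral_mul_const]
    refine norm_integral_le_of_norm_le (hint.mul_const _) (Eventually.of_forall fun z => ?_)
    have hlip := hρ.norm_fderiv_sub_le (x - z) (y - z)
    rw [sub_sub_sub_cancel_right] at hlip
    rw [← smul_sub, norm_smul, Real.norm_eq_abs, mul_right_comm, mul_comm]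
    exact mul_le_mul_of_nonneg_right hlip (abs_nonneg _)

end Mollify

section InwardField

variable {E : Type*} [NormedAddCommGroup E] [NormedSpace ℝ E]

/-- A bounded `C^{1,1}` vector field pointing into `Ω` along `closure Ω`, uniformly up to the time
`maxTime`. The three smallness conditions on `maxTime` are those under which the shift
`x ↦ x + t • X x` is bi-Lipschitz and the opening `speed` is preserved by halving the time. -/
structure InwardField (Ω : Set E) where
  /-- The vector field. -/
  toFun : E → E
  /-- A common `C^{1,1}` bound for the field. -/
  bound : ℝ
  /-- The opening of the cone of admissible directions. -/
  speed : ℝ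
  /-- The largest admissible time. -/
  maxTime : ℝ
  c11Bound : C11Bound toFun bound
  bound_pos : 0 < bound
  speed_pos : 0 < speed
  maxTime_pos : 0 < maxTime
  maxTime_le_one : maxTime ≤ 1
  maxTime_mul_bound_le : maxTime * bound ≤ 1 / 2
  bound_mul_maxTime_le : bound * (bound + speed) * maxTime ≤ speed / 2
  ball_subset {t : ℝ} (ht : 0 < t) (htm : t ≤ maxTime) {x : E} (hx : x ∈ closure Ω) :
    Metric.ball (x + t • toFun x) (speed * t) ⊆ Ω

instance {Ω : Set E} : CoeFun (InwardField Ω) fun _ => E → E := ⟨InwardField.toFun⟩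

theorem HasLipschitzBoundary.nonempty_inwardField {E : Type*} [NormedAddCommGroup E]
    [InnerProductSpace ℝ E] [FiniteDimensional ℝ E] {Ω : Set E} (hΩ : HasLipschitzBoundary Ω)
    (hopen : IsOpen Ω) (hbdd : IsBounded Ω) : Nonempty (InwardField Ω) := by
  obtain ⟨X, hX, hXc, ε, hε, hball⟩ := hΩ.exists_hasCompactSupport_ball_subset hopen hbdd
  obtain ⟨L, hL, hXL⟩ := exists_c11Bound (hX.of_le ENat.LEInfty.out) hXc
  set T := min (ε / 2) (min 1 (min (1 / 2 / L) (ε / 2 / (L * (L + ε)))))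
  have hT1 : T ≤ min 1 (min (1 / 2 / L) (ε / 2 / (L * (L + ε)))) := min_le_right _ _
  have hTL : T ≤ min (1 / 2 / L) (ε / 2 / (L * (L + ε))) := hT1.trans (min_le_right _ _)
  refine ⟨X, L, ε, T, hXL, hL, hε, by positivity, hT1.trans (min_le_left _ _),
    (le_div_iff₀ hL).1 (hTL.trans (min_le_left _ _)),
    (le_div_iff₀' (by positivity)).1 (hTL.trans (min_le_right _ _)), fun {t} ht htm x hx => ?_⟩
  exact hball x hx t ⟨ht, (htm.trans (min_le_left _ _)).trans_lt (half_lt_self hε)⟩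

end InwardField

section SqDiff

/-- The squared difference `(u x - u y)²` of the values of `u` at a pair of points. -/
def sqDiff {α : Type*} (u : α → ℝ) (q : α × α) : ℝ≥0∞ := ENNReal.ofReal ((u q.1 - u q.2) ^ 2)

theorem measurable_sqDiff {α : Type*} [MeasurableSpace α] {u : α → ℝ} (hu : Measurable u) :
    Measurable (sqDiff u) := by
  unfold sqDiff; fun_prop

theorem sqDiff_le_two_mul_add {α : Type*} (u : α → ℝ) (x w y : α) :
    sqDiff u (x, y) ≤ 2 * (sqDiff u (x, w) + sqDiff u (w, y)) := by
  rw [sqDiff, sqDiff, sqDiff, ← ENNReal.ofReal_add (by positivity) (by positivity),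
    ← ENNReal.ofReal_ofNat 2, ← ENNReal.ofReal_mul (by norm_num)]
  refine ENNReal.ofReal_le_ofReal ?_
  nlinarith [sq_nonneg (u x - u w - (u w - u y))]

end SqDiff

section Midpoint

variable {E : Type*} [NormedAddCommGroup E] [NormedSpace ℝ E] [FiniteDimensional ℝ E]
  [MeasureSpace E] [BorelSpace E] [(volume : Measure E).IsAddHaarMeasure]

open Module (finrank)

theorem lintegral_comp_midpoint {f : E → ℝ≥0∞} (hf : Measurable f) (x : E) :
    ∫⁻ y, f (midpoint ℝ x y) = 2 ^ finrank ℝ E * ∫⁻ w, f w := by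
  have hmap := Measure.map_addHaar_smul (volume : Measure E) (r := (⅟2 : ℝ)) (by simp)
  calc ∫⁻ y, f (midpoint ℝ x y) = ∫⁻ y, f ((⅟2 : ℝ) • y) := by
        simp only [midpoint_eq_smul_add]
        exact lintegral_add_left_eq_self (fun y => f ((⅟2 : ℝ) • y)) x
    _ = ∫⁻ w, f w ∂(Measure.map ((⅟2 : ℝ) • ·) volume) :=
        (lintegral_map hf (measurable_const_smul _)).symm
    _ = 2 ^ finrank ℝ E * ∫⁻ w, f w := by
        rw [hmap, lintegral_smul_measure, smul_eq_mul, invOf_eq_inv, inv_pow, inv_inv,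
          abs_of_nonneg (by positivity), ENNReal.ofReal_pow zero_le_two, ENNReal.ofReal_ofNat]

theorem lintegral_prod_fst_midpoint {F : E × E → ℝ≥0∞} (hF : Measurable F) :
    ∫⁻ q : E × E, F (q.1, midpoint ℝ q.1 q.2) = 2 ^ finrank ℝ E * ∫⁻ q, F q := by
  have hF' : Measurable fun q : E × E => F (q.1, midpoint ℝ q.1 q.2) := by
    simp only [midpoint_eq_smul_add]; fun_prop
  rw [Measure.volume_eq_prod, lintegral_prod _ hF'.aemeasurable, lintegral_prod _ hF.aemeasurable,
    ← lintegral_const_mul _ hF.lintegral_prod_right']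
  exact lintegral_congr fun x => lintegral_comp_midpoint (hF.comp measurable_prodMk_left) x

theorem lintegral_prod_midpoint_snd {F : E × E → ℝ≥0∞} (hF : Measurable F) :
    ∫⁻ q : E × E, F (midpoint ℝ q.1 q.2, q.2) = 2 ^ finrank ℝ E * ∫⁻ q, F q := by
  have hswap (f : E × E → ℝ≥0∞) : ∫⁻ q, f q = ∫⁻ q : E × E, f q.swap :=
    (lintegral_prod_swap f).symm
  rw [hswap, hswap F]
  simp only [Prod.fst_swap, Prod.snd_swap, midpoint_comm (R := ℝ) (Prod.snd _)]
  exact lintegral_prod_fst_midpoint (hF.comp measurable_swap)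

end Midpoint

/-- The pairs of points of `Ω` at distance less than `r`. -/
def nearDiag {E : Type*} [NormedAddCommGroup E] (Ω : Set E) (r : ℝ) :
    Set (E × E) :=
  {q | q ∈ Ω ×ˢ Ω ∧ ‖q.1 - q.2‖ < r}

section ConeRegion

variable {E : Type*} [NormedAddCommGroup E] [NormedSpace ℝ E] {Ω : Set E} (X : InwardField Ω)
  {u : E → ℝ} {t c : ℝ}

namespace InwardField

/-- The pairs `(x, y)` for which `y` is within `c * t` of the image of `x ∈ Ω` under the shift
along `X` for the time `t`. -/
def coneRegion (t c : ℝ) : Set (E × E) := {q | q.1 ∈ Ω ∧ ‖q.2 - q.1 - t • X q.1‖ < c * t}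

theorem norm_sub_lt_of_mem_coneRegion {q : E × E} (ht : 0 < t) (hc : c ≤ X.speed)
    (hq : q ∈ X.coneRegion t c) : ‖q.1 - q.2‖ < (X.bound + X.speed) * t := by
  have hdecomp : q.2 - q.1 = (q.2 - q.1 - t • X q.1) + t • X q.1 := (sub_add_cancel _ _).symm
  have hX : ‖t • X q.1‖ ≤ t * X.bound := by
    rw [norm_smul, Real.norm_of_nonneg ht.le]
    exact mul_le_mul_of_nonneg_left (X.c11Bound.norm_le _) ht.le
  have hct : c * t ≤ X.speed * t := mul_le_mul_of_nonneg_right hc ht.le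
  rw [norm_sub_rev, hdecomp]
  linarith [norm_add_le (q.2 - q.1 - t • X q.1) (t • X q.1), hq.2]

theorem coneRegion_subset_nearDiag (ht : 0 < t) (htm : t ≤ X.maxTime) (hc : c ≤ X.speed) :
    X.coneRegion t c ⊆ nearDiag Ω ((X.bound + X.speed) * t) := by
  refine fun q hq => ⟨⟨hq.1, X.ball_subset ht htm (subset_closure hq.1) ?_⟩,
    X.norm_sub_lt_of_mem_coneRegion ht hc hq⟩
  rw [mem_ball_iff_norm, ← sub_sub]
  exact hq.2.trans_le (mul_le_mul_of_nonneg_right hc ht.le)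

theorem fst_midpoint_mem_coneRegion {x y : E} (h : (x, y) ∈ X.coneRegion t c) :
    (x, midpoint ℝ x y) ∈ X.coneRegion (t / 2) c := by
  refine ⟨h.1, ?_⟩
  have hmid : midpoint ℝ x y - x - (t / 2) • X x = (1 / 2 : ℝ) • (y - x - t • X x) := by
    rw [midpoint_eq_smul_add, invOf_eq_inv]; module
  have := h.2
  simp only [hmid, norm_smul, Real.norm_of_nonneg one_half_pos.le] at this ⊢
  linarith

theorem midpoint_snd_mem_coneRegion {x y : E} (ht : 0 < t) (htm : t ≤ X.maxTime)
    (hc : c ≤ X.speed) (h : (x, y) ∈ X.coneRegion t c) :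
    (midpoint ℝ x y, y) ∈
      X.coneRegion (t / 2) (c + X.bound * (X.bound + X.speed) * (t / 2)) := by
  set w := midpoint ℝ x y
  have hw := X.fst_midpoint_mem_coneRegion h
  have hwΩ := X.coneRegion_subset_nearDiag (half_pos ht) (by linarith) hc hw
  have hsum : y - w - (t / 2) • X w = (w - x - (t / 2) • X x) + (t / 2) • (X x - X w) := by
    simp only [w, midpoint_eq_smul_add, invOf_eq_inv]; module
  have hXw : ‖X x - X w‖ ≤ X.bound * ((X.bound + X.speed) * (t / 2)) :=
    (X.c11Bound.norm_sub_le x w).trans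
      (mul_le_mul_of_nonneg_left hwΩ.2.le X.bound_pos.le)
  refine ⟨hwΩ.1.2, ?_⟩
  calc ‖y - w - (t / 2) • X w‖ ≤ ‖w - x - (t / 2) • X x‖ + ‖(t / 2) • (X x - X w)‖ := by
        rw [hsum]; exact norm_add_le _ _
    _ < c * (t / 2) + t / 2 * (X.bound * ((X.bound + X.speed) * (t / 2))) := by
        rw [norm_smul, Real.norm_of_nonneg (half_pos ht).le]
        exact add_lt_add_of_lt_of_le hw.2 (mul_le_mul_of_nonneg_left hXw (half_pos ht).le)
    _ = _ := by ring

theorem coneRegion_mono {c' : ℝ} (ht : 0 ≤ t) (hc : c ≤ c') :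
    X.coneRegion t c ⊆ X.coneRegion t c' :=
  fun _ hq => ⟨hq.1, hq.2.trans_le (mul_le_mul_of_nonneg_right hc ht)⟩

variable [FiniteDimensional ℝ E] [MeasureSpace E] [BorelSpace E]

theorem measurableSet_coneRegion (hΩ : IsOpen Ω) (t c : ℝ) : MeasurableSet (X.coneRegion t c) := by
  have hX : Continuous X := X.c11Bound.continuous
  have hcont : Continuous fun q : E × E => ‖q.2 - q.1 - t • X q.1‖ := by fun_prop
  exact (measurable_fst hΩ.measurableSet).inter
    (isOpen_lt hcont continuous_const).measurableSet

variable [(volume : Measure E).IsAddHaarMeasure]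

open Module (finrank)

theorem lintegral_coneRegion_le_half (hΩ : IsOpen Ω) (hu : Measurable u) (ht : 0 < t)
    (htm : t ≤ X.maxTime) (hc : c ≤ X.speed) :
    ∫⁻ q in X.coneRegion t c, sqDiff u q ≤ 2 ^ (finrank ℝ E + 2) *
      ∫⁻ q in X.coneRegion (t / 2) (c + X.bound * (X.bound + X.speed) * (t / 2)),
        sqDiff u q := by
  set c' := c + X.bound * (X.bound + X.speed) * (t / 2)
  have hcc' : c ≤ c' := by
    have := X.bound_pos
    have := X.speed_pos
    exact le_add_of_nonneg_right (by positivity)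
  set F := (X.coneRegion (t / 2) c').indicator (sqDiff u) with hF
  have hFm : Measurable F := (measurable_sqDiff hu).indicator (X.measurableSet_coneRegion hΩ _ _)
  have hsplit : (X.coneRegion t c).indicator (sqDiff u) ≤
      fun q => 2 * (F (q.1, midpoint ℝ q.1 q.2) + F (midpoint ℝ q.1 q.2, q.2)) := by
    refine indicator_le fun q hq => ?_
    have hfst := X.coneRegion_mono (half_pos ht).le hcc' (X.fst_midpoint_mem_coneRegion hq)
    rw [hF, indicator_of_mem hfst,
      indicator_of_mem (X.midpoint_snd_mem_coneRegion ht htm hc hq)]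
    exact sqDiff_le_two_mul_add u _ _ _
  rw [← lintegral_indicator (X.measurableSet_coneRegion hΩ _ _),
    ← lintegral_indicator (X.measurableSet_coneRegion hΩ _ _)]
  have hFm' : Measurable fun q : E × E => F (q.1, midpoint ℝ q.1 q.2) := by
    simp only [midpoint_eq_smul_add]; fun_prop
  refine (lintegral_mono hsplit).trans_eq ?_
  rw [lintegral_const_mul' _ _ ENNReal.ofNat_ne_top, lintegral_add_left hFm',
    lintegral_prod_fst_midpoint hFm, lintegral_prod_midpoint_snd hFm]
  ring

theorem lintegral_coneRegion_le_nearDiag (hΩ : IsOpen Ω) (hu : Measurable u) (k : ℕ) (ht : 0 < t)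
    (htm : t ≤ X.maxTime) (hc : c + X.bound * (X.bound + X.speed) * t ≤ X.speed) :
    ∫⁻ q in X.coneRegion t c, sqDiff u q ≤ (2 ^ (finrank ℝ E + 2)) ^ k *
      ∫⁻ q in nearDiag Ω ((X.bound + X.speed) * t / 2 ^ k), sqDiff u q := by
  have hpos {t : ℝ} (ht : 0 < t) : 0 < X.bound * (X.bound + X.speed) * t :=
    mul_pos (mul_pos X.bound_pos (add_pos X.bound_pos X.speed_pos)) ht
  have hle := hpos ht
  induction k generalizing t c with
  | zero =>
    simpa using lintegral_mono_set (X.coneRegion_subset_nearDiag ht htm (by linarith))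
  | succ k ih =>
    refine (X.lintegral_coneRegion_le_half hΩ hu ht htm (by linarith)).trans ?_
    have hih := ih (c := c + X.bound * (X.bound + X.speed) * (t / 2)) (half_pos ht) (by linarith)
      (by linarith) (hpos (half_pos ht))
    refine (mul_le_mul_right hih _).trans_eq ?_
    rw [pow_succ' (2 ^ _ : ℝ≥0∞) k, mul_assoc, pow_succ' (2 : ℝ) k, ← div_div, mul_div_assoc _ t 2]

end InwardField
end ConeRegion

section Dyadic

theorem sum_range_ite_pow_lt_le {q A : ℝ} (hq : 2 ≤ q) (hA : 0 ≤ A) (m : ℕ) :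
    ∑ k ∈ Finset.range m, (if q ^ k < A then q ^ k else 0) ≤ 2 * A := by
  have hgeom (m : ℕ) : ∑ k ∈ Finset.range (m + 1), q ^ k ≤ 2 * q ^ m := by
    induction m with
    | zero => simp
    | succ m ih =>
      rw [Finset.sum_range_succ, pow_succ]
      have : 0 ≤ q ^ m := by positivity
      nlinarith
  induction m with
  | zero => simpa using hA
  | succ m ih =>
    by_cases h : q ^ m < A
    · calc ∑ k ∈ Finset.range (m + 1), (if q ^ k < A then q ^ k else 0)
          ≤ ∑ k ∈ Finset.range (m + 1), q ^ k := by
            refine Finset.sum_le_sum fun k _ => ?_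
            split_ifs
            exacts [le_rfl, by positivity]
        _ ≤ 2 * q ^ m := hgeom m
        _ ≤ 2 * A := by linarith
    · rwa [Finset.sum_range_succ, if_neg h, add_zero]

theorem lt_div_two_pow_iff {p R d : ℝ} (hp : 0 < p) (hR : 0 ≤ R) (hd : 0 < d) (k : ℕ) :
    d < R / 2 ^ k ↔ ((2 : ℝ) ^ p) ^ k < (R / d) ^ p := by
  rw [← Real.rpow_mul_natCast zero_le_two, mul_comm p,
    Real.rpow_natCast_mul zero_le_two, Real.rpow_lt_rpow_iff (by positivity) (by positivity) hp,
    lt_div_iff₀ (by positivity), lt_div_iff₀ hd, mul_comm]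

theorem tsum_indicator_nearDiag_le {E : Type*} [NormedAddCommGroup E] (Ω : Set E) {p R : ℝ}
    (hp : 1 ≤ p) (hR : 0 ≤ R) (u : E → ℝ) {q : E × E} (hq : q ∈ Ω ×ˢ Ω) :
    ∑' k : ℕ, ENNReal.ofReal (((2 : ℝ) ^ p) ^ k) *
      (nearDiag Ω (R / 2 ^ k)).indicator (sqDiff u) q ≤
      ENNReal.ofReal (2 * R ^ p) * ENNReal.ofReal ((u q.1 - u q.2) ^ 2 / ‖q.1 - q.2‖ ^ p) := by
  set d := ‖q.1 - q.2‖
  rcases (norm_nonneg _ : 0 ≤ d).eq_or_lt with h0 | h0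
  · have hzero : sqDiff u q = 0 := by
      rw [sqDiff, sub_eq_zero.1 (norm_eq_zero.1 h0.symm)]
      simp
    have hind (S : Set (E × E)) : S.indicator (sqDiff u) q = 0 := by
      exact indicator_apply_eq_zero.2 fun _ => hzero
    simp [hind]
  have hterm (k : ℕ) : ENNReal.ofReal (((2 : ℝ) ^ p) ^ k) *
      (nearDiag Ω (R / 2 ^ k)).indicator (sqDiff u) q =
      ENNReal.ofReal (if ((2 : ℝ) ^ p) ^ k < (R / d) ^ p then ((2 : ℝ) ^ p) ^ k else 0) *
        sqDiff u q := by
    have hmem : q ∈ nearDiag Ω (R / 2 ^ k) ↔ ((2 : ℝ) ^ p) ^ k < (R / d) ^ p :=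
      (and_iff_right hq).trans (lt_div_two_pow_iff (by linarith) hR h0 k)
    by_cases h : q ∈ nearDiag Ω (R / 2 ^ k)
    · rw [indicator_of_mem h, if_pos (hmem.1 h)]
    · rw [indicator_of_notMem h, if_neg (mt hmem.2 h), ENNReal.ofReal_zero, mul_zero, zero_mul]
  have hpow : (2 : ℝ) ≤ 2 ^ p := by
    simpa using Real.rpow_le_rpow_of_exponent_le one_le_two hp
  have hsum : ∑' k : ℕ, ENNReal.ofReal
      (if ((2 : ℝ) ^ p) ^ k < (R / d) ^ p then ((2 : ℝ) ^ p) ^ k else 0) ≤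
      ENNReal.ofReal (2 * (R / d) ^ p) := by
    refine ENNReal.tsum_le_of_sum_range_le fun m => ?_
    rw [← ENNReal.ofReal_sum_of_nonneg fun k _ => by split_ifs <;> positivity]
    exact ENNReal.ofReal_le_ofReal (sum_range_ite_pow_lt_le hpow (by positivity) m)
  simp_rw [hterm]
  rw [ENNReal.tsum_mul_right]
  refine (mul_le_mul_left hsum _).trans_eq ?_
  rw [sqDiff, ← ENNReal.ofReal_mul (by positivity), ← ENNReal.ofReal_mul (by positivity),
    Real.div_rpow hR h0.le]
  congr 1
  ring

theorem ofReal_inv_le_tsum_pow {s : ℝ} (hs : s < 1) :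
    ENNReal.ofReal (2 * (1 - s))⁻¹ ≤ ∑' k : ℕ, ENNReal.ofReal (((1 / 4 : ℝ) ^ (1 - s)) ^ k) := by
  have hpos : 0 < 1 - s := by linarith
  set r : ℝ := (1 / 4 : ℝ) ^ (1 - s) with hr
  have hr1 : r < 1 := Real.rpow_lt_one (by norm_num) (by norm_num) hpos
  have hlog : Real.log (1 / 4) = -(2 * Real.log 2) := by
    rw [one_div, Real.log_inv, show (4 : ℝ) = 2 ^ 2 by norm_num, Real.log_pow, Nat.cast_ofNat]
  have hge : 1 - r ≤ 2 * (1 - s) := by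
    have hexp := Real.add_one_le_exp (Real.log (1 / 4) * (1 - s))
    rw [← Real.rpow_def_of_pos (by norm_num), ← hr, hlog] at hexp
    nlinarith [Real.log_two_lt_d9]
  rw [← ENNReal.ofReal_tsum_of_nonneg (fun k => by positivity)
    (summable_geometric_of_lt_one (by positivity) hr1),
    tsum_geometric_of_lt_one (by positivity) hr1]
  exact ENNReal.ofReal_le_ofReal (inv_anti₀ (by linarith) hge)

variable {N : ℕ} {Ω : Set (Euc N)} {u : Euc N → ℝ}

theorem measurableSet_nearDiag (hΩ : IsOpen Ω) (r : ℝ) : MeasurableSet (nearDiag Ω r) := by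
  have hcont : Continuous fun q : Euc N × Euc N => ‖q.1 - q.2‖ := by fun_prop
  exact (hΩ.measurableSet.prod hΩ.measurableSet).inter
    (isOpen_lt hcont continuous_const).measurableSet

theorem tsum_lintegral_nearDiag_le (hΩ : IsOpen Ω) (hu : Measurable u) {s R : ℝ}
    (hs : 1 / 2 ≤ s) (hR : 0 ≤ R) :
    ∑' k : ℕ, ENNReal.ofReal (((2 : ℝ) ^ ((N : ℝ) + 2 * s)) ^ k) *
      ∫⁻ q in nearDiag Ω (R / 2 ^ k), sqDiff u q ≤
      ENNReal.ofReal (2 * R ^ ((N : ℝ) + 2 * s)) * semiSqOn N s Ω u := by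
  have hmeas (k : ℕ) : Measurable ((nearDiag Ω (R / 2 ^ k)).indicator (sqDiff u)) :=
    (measurable_sqDiff hu).indicator (measurableSet_nearDiag hΩ _)
  have hrestrict (k : ℕ) : ∫⁻ q in nearDiag Ω (R / 2 ^ k), sqDiff u q =
      ∫⁻ q in Ω ×ˢ Ω, (nearDiag Ω (R / 2 ^ k)).indicator (sqDiff u) q := by
    rw [lintegral_indicator (measurableSet_nearDiag hΩ _),
      Measure.restrict_restrict (measurableSet_nearDiag hΩ _),
      inter_eq_left.2 fun q (hq : q ∈ nearDiag Ω _) => hq.1]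
  simp_rw [hrestrict, ← lintegral_const_mul _ (hmeas _)]
  rw [← lintegral_tsum fun k => ((hmeas k).const_mul _).aemeasurable, semiSqOn,
    ← lintegral_const_mul' _ _ ENNReal.ofReal_ne_top]
  refine setLIntegral_mono' (hΩ.measurableSet.prod hΩ.measurableSet) fun q hq => ?_
  exact tsum_indicator_nearDiag_le Ω (by linarith [N.cast_nonneg (α := ℝ)]) hR u hq

/-- Summing the halving estimate over all scales against `4 ^ (-(1 - s) k)` produces the factor
`1 - s`. -/
theorem InwardField.lintegral_coneRegion_le (X : InwardField Ω) (hΩ : IsOpen Ω)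
    (hu : Measurable u) {t s : ℝ} (ht : 0 < t) (htm : t ≤ X.maxTime) (hs : 1 / 2 ≤ s)
    (hs1 : s < 1) :
    ∫⁻ q in X.coneRegion t (X.speed / 2), sqDiff u q ≤
      ENNReal.ofReal (4 * (1 - s) * ((X.bound + X.speed) * t) ^ ((N : ℝ) + 2 * s)) *
        semiSqOn N s Ω u := by
  have hM := X.bound_pos
  have hc := X.speed_pos
  have : 0 < 1 - s := by linarith
  set R := (X.bound + X.speed) * t
  set G := ∫⁻ q in X.coneRegion t (X.speed / 2), sqDiff u q
  set p := (N : ℝ) + 2 * s with hp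
  have hopening : X.speed / 2 + X.bound * (X.bound + X.speed) * t ≤ X.speed := by
    have := mul_le_mul_of_nonneg_left htm (by positivity : 0 ≤ X.bound * (X.bound + X.speed))
    linarith [X.bound_mul_maxTime_le]
  have hscale (k : ℕ) : ENNReal.ofReal (((1 / 4 : ℝ) ^ (1 - s)) ^ k) * (2 ^ (N + 2)) ^ k =
      ENNReal.ofReal (((2 : ℝ) ^ p) ^ k) := by
    have hbase : (1 / 4 : ℝ) ^ (1 - s) * 2 ^ (N + 2) = 2 ^ p := by
      rw [show (1 / 4 : ℝ) = 2 ^ (-2 : ℝ) by rw [Real.rpow_neg zero_le_two]; norm_num,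
        ← Real.rpow_mul zero_le_two, ← Real.rpow_natCast, ← Real.rpow_add zero_lt_two]
      congr 1
      push_cast
      rw [hp]; ring
    rw [← hbase, mul_pow, ENNReal.ofReal_mul (by positivity),
      ENNReal.ofReal_pow (p := 2 ^ (N + 2)) (by positivity), ENNReal.ofReal_pow zero_le_two,
      ENNReal.ofReal_ofNat]
  have hsum : ENNReal.ofReal (2 * (1 - s))⁻¹ * G ≤
      ENNReal.ofReal (2 * R ^ p) * semiSqOn N s Ω u := by
    refine le_trans ?_ (tsum_lintegral_nearDiag_le hΩ hu hs (by positivity))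
    refine (mul_le_mul_left (ofReal_inv_le_tsum_pow hs1) _).trans ?_
    rw [← ENNReal.tsum_mul_right]
    refine ENNReal.tsum_le_tsum fun k => ?_
    rw [← hscale, mul_assoc]
    refine mul_le_mul_right ?_ _
    simpa using X.lintegral_coneRegion_le_nearDiag hΩ hu k ht htm hopening
  calc G = ENNReal.ofReal (2 * (1 - s)) * (ENNReal.ofReal (2 * (1 - s))⁻¹ * G) := by
        rw [← mul_assoc, ← ENNReal.ofReal_mul (by positivity), mul_inv_cancel₀ (by positivity),
          ENNReal.ofReal_one, one_mul]
    _ ≤ ENNReal.ofReal (2 * (1 - s)) * (ENNReal.ofReal (2 * R ^ p) * semiSqOn N s Ω u) :=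
        mul_le_mul_right hsum _
    _ = _ := by
        rw [← mul_assoc, ← ENNReal.ofReal_mul (by positivity)]
        ring_nf

end Dyadic

section Shift

variable {E : Type*} [NormedAddCommGroup E] [NormedSpace ℝ E] {Ω : Set E}

namespace InwardField

variable (X : InwardField Ω) {t : ℝ}

theorem mul_bound_le (htm : t ≤ X.maxTime) : t * X.bound ≤ 1 / 2 :=
  (mul_le_mul_of_nonneg_right htm X.bound_pos.le).trans X.maxTime_mul_bound_le

theorem continuous_shift (t : ℝ) : Continuous fun x => x + t • X x := by
  have := X.c11Bound.continuous
  fun_prop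

theorem antilipschitzWith_shift (ht : 0 ≤ t) (htm : t ≤ X.maxTime) :
    AntilipschitzWith (Real.toNNReal (1 / (1 - t * X.bound))) fun x => x + t • X x := by
  have hpos : 0 < 1 - t * X.bound := by linarith [X.mul_bound_le htm]
  refine AntilipschitzWith.of_le_mul_dist fun x y => ?_
  rw [Real.coe_toNNReal _ (by positivity), dist_eq_norm, dist_eq_norm, one_div, inv_mul_eq_div,
    le_div_iff₀ hpos]
  have hshift : ‖x - y‖ ≤ ‖x + t • X x - (y + t • X y)‖ + ‖t • (X x - X y)‖ :=
    calc ‖x - y‖ = ‖(x + t • X x - (y + t • X y)) - t • (X x - X y)‖ := by congr 1; module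
      _ ≤ _ := norm_sub_le _ _
  have hX : t * ‖X x - X y‖ ≤ t * (X.bound * ‖x - y‖) := by
    gcongr
    simpa only [norm_sub_rev] using X.c11Bound.norm_sub_le x y
  rw [norm_smul, Real.norm_eq_abs, abs_of_nonneg ht] at hshift
  linarith

/-- An upper bound for the factor by which volumes grow under the inverse of the shift
`x ↦ x + t • X x`. -/
def volumeFactor (t : ℝ) : ℝ≥0∞ :=
  ENNReal.ofReal (1 / (1 - t * X.bound)) ^ Module.finrank ℝ E

theorem tendsto_volumeFactor : Tendsto X.volumeFactor (𝓝[>] 0) (𝓝 1) := by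
  have hcont : ContinuousAt (fun t : ℝ => 1 / (1 - t * X.bound)) 0 :=
    continuousAt_const.div (by fun_prop) (by simp)
  have hlim := (ENNReal.tendsto_ofReal hcont.tendsto).mono_left (nhdsWithin_le_nhds (s := Ioi 0))
  unfold volumeFactor
  simpa using ENNReal.Tendsto.pow (n := Module.finrank ℝ E) hlim

end InwardField

end Shift

section ChangeOfVariables

variable {E : Type*} [NormedAddCommGroup E] [NormedSpace ℝ E] [FiniteDimensional ℝ E]
  [MeasureSpace E] [BorelSpace E] [(volume : Measure E).IsAddHaarMeasure]

theorem volume_preimage_le_of_antilipschitzWith {Φ : E → E} {K : ℝ≥0} (hK : AntilipschitzWith K Φ)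
    (S : Set E) : volume (Φ ⁻¹' S) ≤ (K : ℝ≥0∞) ^ Module.finrank ℝ E * volume S := by
  have hpreimage := hK.hausdorffMeasure_preimage_le (d := (Module.finrank ℝ E : ℝ))
    (by positivity) S
  rw [ENNReal.rpow_natCast] at hpreimage
  rw [Measure.isAddLeftInvariant_eq_smul (volume : Measure E)
    (Measure.hausdorffMeasure (Module.finrank ℝ E : ℝ)), Measure.smul_apply, Measure.smul_apply,
    mul_smul_comm]
  exact smul_le_smul_of_nonneg_left hpreimage zero_le

theorem lintegral_comp_le_of_antilipschitzWith {Φ : E → E} {K : ℝ≥0} (hΦ : Continuous Φ)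
    (hK : AntilipschitzWith K Φ) {F : E → ℝ≥0∞} (hF : Measurable F) :
    ∫⁻ x, F (Φ x) ≤ (K : ℝ≥0∞) ^ Module.finrank ℝ E * ∫⁻ x, F x := by
  rw [← lintegral_map hF hΦ.measurable, ← smul_eq_mul, ← lintegral_smul_measure]
  refine lintegral_mono' (Measure.le_iff.2 fun S hS => ?_) le_rfl
  rw [Measure.map_apply hΦ.measurable hS]
  exact volume_preimage_le_of_antilipschitzWith hK S

namespace InwardField

variable {Ω : Set E} {t : ℝ}

theorem lintegral_comp_shift_le (X : InwardField Ω) (ht : 0 ≤ t) (htm : t ≤ X.maxTime)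
    {F : E → ℝ≥0∞} (hF : Measurable F) : ∫⁻ x, F (x + t • X x) ≤ X.volumeFactor t * ∫⁻ x, F x :=
  lintegral_comp_le_of_antilipschitzWith (X.continuous_shift t) (X.antilipschitzWith_shift ht htm)
    hF

theorem volume_closure_le (X : InwardField Ω) : volume (closure Ω) ≤ volume Ω := by
  have hlim : Tendsto (fun t => X.volumeFactor t * volume Ω) (𝓝[>] 0) (𝓝 (1 * volume Ω)) :=
    ENNReal.Tendsto.mul_const X.tendsto_volumeFactor (Or.inl one_ne_zero)
  rw [one_mul] at hlim
  refine ge_of_tendsto hlim ?_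
  filter_upwards [Ioc_mem_nhdsGT X.maxTime_pos] with t ht
  have hsub : closure Ω ⊆ (fun x => x + t • X x) ⁻¹' Ω := fun x hx =>
    X.ball_subset ht.1 ht.2 hx (Metric.mem_ball_self (mul_pos X.speed_pos ht.1))
  exact (measure_mono hsub).trans
    (volume_preimage_le_of_antilipschitzWith (X.antilipschitzWith_shift ht.1.le ht.2) Ω)

end InwardField

end ChangeOfVariables

section CauchySchwarz

theorem ofReal_norm_sq {E : Type*} [SeminormedAddCommGroup E] (x : E) :
    ENNReal.ofReal (‖x‖ ^ 2) = ‖x‖ₑ ^ 2 := by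
  rw [ENNReal.ofReal_pow (norm_nonneg x), ofReal_norm]

theorem ofReal_sq (a : ℝ) : ENNReal.ofReal (a ^ 2) = ‖a‖ₑ ^ 2 := by
  rw [← sq_abs, ← Real.norm_eq_abs, ofReal_norm_sq]

variable {α : Type*} [MeasurableSpace α] {μ : Measure α}

theorem sq_lintegral_le {f : α → ℝ≥0∞} (hf : AEMeasurable f μ) :
    (∫⁻ x, f x ∂μ) ^ 2 ≤ μ univ * ∫⁻ x, f x ^ 2 ∂μ := by
  have hholder := ENNReal.lintegral_mul_le_Lp_mul_Lq μ Real.HolderConjugate.two_two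
    (f := 1) (g := f) aemeasurable_const hf
  have hsq (a : ℝ≥0∞) : (a ^ (1 / 2 : ℝ)) ^ 2 = a := by
    rw [← ENNReal.rpow_natCast, ← ENNReal.rpow_mul]; norm_num
  simpa [mul_pow, hsq, ← one_div] using pow_le_pow_left' hholder 2

theorem sq_lintegral_mul_le {a f : α → ℝ≥0∞} (ha : AEMeasurable a μ) (hf : AEMeasurable f μ) :
    (∫⁻ x, a x * f x ∂μ) ^ 2 ≤ (∫⁻ x, a x ∂μ) * ∫⁻ x, a x * f x ^ 2 ∂μ := by
  have hν := sq_lintegral_le (hf.mono_ac (withDensity_absolutelyContinuous μ a))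
  rwa [lintegral_withDensity_eq_lintegral_mul₀ ha hf,
    lintegral_withDensity_eq_lintegral_mul₀ ha (hf.pow_const 2), withDensity_apply _ .univ,
    Measure.restrict_univ] at hν

theorem enorm_integral_smul_sq_le {E : Type*} [NormedAddCommGroup E] [NormedSpace ℝ E]
    {k : α → ℝ} {f : α → E} (hk : AEMeasurable k μ)
    (hf : AEMeasurable (fun x => ‖f x‖ₑ) μ) :
    ‖∫ x, k x • f x ∂μ‖ₑ ^ 2 ≤ (∫⁻ x, ‖k x‖ₑ ∂μ) * ∫⁻ x, ‖k x‖ₑ * ‖f x‖ₑ ^ 2 ∂μ := by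
  refine le_trans ?_ (sq_lintegral_mul_le hk.enorm hf)
  gcongr
  simpa only [enorm_smul] using enorm_integral_le_lintegral_enorm fun x => k x • f x

theorem add_sq_le_mul_add_mul (a b : ℝ) {ε : ℝ} (hε : 0 < ε) :
    (a + b) ^ 2 ≤ (1 + ε) * a ^ 2 + (1 + 1 / ε) * b ^ 2 := by
  have hdefect : (1 + ε) * a ^ 2 + (1 + 1 / ε) * b ^ 2 - (a + b) ^ 2 = (ε * a - b) ^ 2 / ε := by
    field_simp; ring
  have : 0 ≤ (ε * a - b) ^ 2 / ε := by positivity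
  linarith

theorem ofReal_add_sq_le (a b : ℝ) {ε : ℝ} (hε : 0 < ε) :
    ENNReal.ofReal ((a + b) ^ 2) ≤ ENNReal.ofReal (1 + ε) * ENNReal.ofReal (a ^ 2) +
      ENNReal.ofReal (1 + 1 / ε) * ENNReal.ofReal (b ^ 2) := by
  rw [← ENNReal.ofReal_mul (by positivity), ← ENNReal.ofReal_mul (by positivity),
    ← ENNReal.ofReal_add (by positivity) (by positivity)]
  exact ENNReal.ofReal_le_ofReal (add_sq_le_mul_add_mul a b hε)

end CauchySchwarz

section SquareIntegrable

variable {N : ℕ} {Ω : Set (Euc N)} {u v : Euc N → ℝ}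

theorem l2sq_eq_eLpNorm_sq (u : Euc N → ℝ) :
    l2sq N Ω u = eLpNorm u 2 (volume.restrict Ω) ^ 2 := by
  rw [← ENNReal.rpow_natCast, Nat.cast_ofNat]
  simpa [l2sq, ofReal_sq] using (eLpNorm_nnreal_pow_eq_lintegral (f := u)
    (μ := volume.restrict Ω) (p := 2) two_ne_zero).symm

theorem memLp_two_of_l2sq_lt_top (hu : Measurable u) (hu2 : l2sq N Ω u < ⊤) :
    MemLp u 2 (volume.restrict Ω) := by
  rw [l2sq_eq_eLpNorm_sq] at hu2
  exact ⟨hu.aestronglyMeasurable, (ENNReal.pow_lt_top_iff.1 hu2).resolve_right two_ne_zero⟩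

theorem integrableOn_of_l2sq_lt_top (hΩ : IsBounded Ω) (hu : Measurable u)
    (hu2 : l2sq N Ω u < ⊤) : IntegrableOn u Ω := by
  have : IsFiniteMeasure (volume.restrict Ω) := ⟨by simpa using hΩ.measure_lt_top⟩
  exact (memLp_two_of_l2sq_lt_top hu hu2).integrable one_le_two

theorem sq_lintegral_enorm_le_l2sq (hu : Measurable u) :
    (∫⁻ x in Ω, ‖u x‖ₑ) ^ 2 ≤ volume Ω * l2sq N Ω u := by
  simpa [l2sq, ofReal_sq] using sq_lintegral_le (μ := volume.restrict Ω) hu.enorm.aemeasurable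

theorem ofReal_sq_integral_abs_le_l2sq (hu : Measurable u) :
    ENNReal.ofReal ((∫ x in Ω, |u x|) ^ 2) ≤ volume Ω * l2sq N Ω u := by
  refine le_trans ?_ (sq_lintegral_enorm_le_l2sq hu)
  rw [ofReal_sq]
  gcongr
  simpa using enorm_integral_le_lintegral_enorm (μ := volume.restrict Ω) fun x => |u x|

theorem l2sq_add_le (hu : Measurable u) {ε : ℝ} (hε : 0 < ε) :
    l2sq N Ω (fun x => u x + v x) ≤ ENNReal.ofReal (1 + ε) * l2sq N Ω u +
      ENNReal.ofReal (1 + 1 / ε) * l2sq N Ω v := by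
  have hsq : Measurable fun x => ENNReal.ofReal (u x ^ 2) := by fun_prop
  unfold l2sq
  rw [← lintegral_const_mul _ hsq, ← lintegral_const_mul' _ _ ENNReal.ofReal_ne_top,
    ← lintegral_add_left (hsq.const_mul _)]
  exact lintegral_mono fun x => ofReal_add_sq_le _ _ hε

theorem semiSqOn_le_semiSq (s : ℝ) (u : Euc N → ℝ) : semiSqOn N s Ω u ≤ semiSq N s Ω u :=
  lintegral_mono_set fun _ hq => Or.inl (subset_closure hq.1)

theorem abs_setAverage_le (hΩ : IsBounded Ω) {M : ℝ} (hu : ∀ x, |u x| ≤ M) :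
    |⨍ x in Ω, u x| ≤ M := by
  have hM : 0 ≤ M := (abs_nonneg _).trans (hu 0)
  rw [setAverage_eq, smul_eq_mul, abs_mul, abs_of_nonneg (by positivity), inv_mul_eq_div]
  exact div_le_of_le_mul₀ measureReal_nonneg hM
    (norm_setIntegral_le_of_norm_le_const (f := u) hΩ.measure_lt_top fun x _ => hu x)

theorem l2sq_setAverage_le (hΩ : IsBounded Ω) (hu : Measurable u) :
    l2sq N Ω (fun _ => ⨍ x in Ω, u x) ≤ l2sq N Ω u := by
  rcases eq_or_ne (volume Ω) 0 with hzero | hpos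
  · simp [l2sq, hzero]
  have hVtop : volume Ω ≠ ⊤ := hΩ.measure_lt_top.ne
  have hinv : ‖(volume.real Ω)⁻¹‖ₑ = (volume Ω)⁻¹ := by
    rw [enorm_inv (measureReal_ne_zero_iff hVtop |>.2 hpos), Measure.real,
      Real.enorm_eq_ofReal ENNReal.toReal_nonneg, ENNReal.ofReal_toReal hVtop]
  calc l2sq N Ω (fun _ => ⨍ x in Ω, u x)
      = ((volume Ω)⁻¹ * ‖∫ x in Ω, u x‖ₑ) ^ 2 * volume Ω := by
        rw [l2sq, setLIntegral_const, ofReal_sq, setAverage_eq, enorm_smul, hinv]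
    _ ≤ (volume Ω)⁻¹ ^ 2 * (volume Ω * l2sq N Ω u) * volume Ω := by
        rw [mul_pow]
        gcongr
        exact (pow_le_pow_left' (enorm_integral_le_lintegral_enorm _) 2).trans
          (sq_lintegral_enorm_le_l2sq hu)
    _ = ((volume Ω)⁻¹ * volume Ω) ^ 2 * l2sq N Ω u := by ring
    _ = l2sq N Ω u := by rw [ENNReal.inv_mul_cancel hpos hVtop, one_pow, one_mul]

end SquareIntegrable

section WeakGradient

variable {N : ℕ} {Ω : Set (Euc N)} {w : Euc N → ℝ} {M : ℝ}

theorem setLIntegral_sq_lt_top_of_norm_le {F : Type*} [NormedAddCommGroup F] {f : Euc N → F}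
    (hf : ∀ x, ‖f x‖ ≤ M) (hΩ : IsBounded Ω) : ∫⁻ x in Ω, ENNReal.ofReal (‖f x‖ ^ 2) < ⊤ :=
  calc ∫⁻ x in Ω, ENNReal.ofReal (‖f x‖ ^ 2) ≤ ∫⁻ _ in Ω, ENNReal.ofReal (M ^ 2) :=
        lintegral_mono fun x => ENNReal.ofReal_le_ofReal (pow_le_pow_left₀ (norm_nonneg _) (hf x) 2)
    _ = ENNReal.ofReal (M ^ 2) * volume Ω := setLIntegral_const _ _
    _ < ⊤ := ENNReal.mul_lt_top ENNReal.ofReal_lt_top hΩ.measure_lt_top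

theorem C11Bound.l2sq_lt_top (hw : C11Bound w M) (hΩ : IsBounded Ω) : l2sq N Ω w < ⊤ := by
  simpa [l2sq] using setLIntegral_sq_lt_top_of_norm_le hw.norm_le hΩ

theorem integral_mul_fderiv_eq_neg_of_tsupport_subset (hw : Differentiable ℝ w)
    (hw' : Continuous (fderiv ℝ w)) {φ : Euc N → ℝ} (hφ : ContDiff ℝ 1 φ)
    (hφc : HasCompactSupport φ) (hsub : tsupport φ ⊆ Ω) (e : Euc N) :
    ∫ x in Ω, w x * fderiv ℝ φ x e = -∫ x in Ω, fderiv ℝ w x e * φ x := by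
  have hwc := hw.continuous
  have hφcont := hφ.continuous
  have : Continuous (fderiv ℝ φ) := hφ.continuous_fderiv (by simp)
  have hφ'c : HasCompactSupport fun x => fderiv ℝ φ x e := hφc.fderiv_apply ℝ e
  have hφ0 : ∀ x ∉ Ω, φ x = 0 := fun x hx =>
    image_eq_zero_of_notMem_tsupport fun h => hx (hsub h)
  have hφ'0 : ∀ x ∉ Ω, fderiv ℝ φ x = 0 := fun x hx =>
    image_eq_zero_of_notMem_tsupport fun h => hx (hsub (tsupport_fderiv_subset ℝ h))
  rw [setIntegral_eq_integral_of_forall_compl_eq_zero fun x hx => by simp [hφ'0 x hx],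
    setIntegral_eq_integral_of_forall_compl_eq_zero fun x hx => by simp [hφ0 x hx]]
  refine integral_mul_fderiv_eq_neg_fderiv_mul_of_integrable ?_ ?_ ?_
    (fun x _ => hw x) fun x _ => hφ.differentiable (by simp) x
  · exact Continuous.integrable_of_hasCompactSupport (by fun_prop) hφc.mul_left
  · exact Continuous.integrable_of_hasCompactSupport (by fun_prop) hφ'c.mul_left
  · exact Continuous.integrable_of_hasCompactSupport (by fun_prop) hφc.mul_left

theorem C11Bound.isWeakGradient (hw : C11Bound w M) (hΩ : IsBounded Ω) :
    IsWeakGradient N Ω w fun x => (InnerProductSpace.toDual ℝ (Euc N)).symm (fderiv ℝ w x) := by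
  have hw' := hw.continuous_fderiv
  refine ⟨Continuous.measurable (by fun_prop), ?_, fun φ hφ hφc hsub i => ?_⟩
  · simpa using setLIntegral_sq_lt_top_of_norm_le hw.norm_fderiv_le hΩ
  have hcoord (x : Euc N) : (InnerProductSpace.toDual ℝ (Euc N)).symm (fderiv ℝ w x) i =
      fderiv ℝ w x (EuclideanSpace.single i 1) := by
    rw [← InnerProductSpace.toDual_symm_apply, EuclideanSpace.inner_single_right]
    simp
  simp only [hcoord]
  exact integral_mul_fderiv_eq_neg_of_tsupport_subset hw.differentiable hw'
    (hφ.of_le (by simp)) hφc hsub _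

theorem C11Bound.memH1 (hw : C11Bound w M) (hΩ : IsBounded Ω) : memH1 N Ω w :=
  ⟨hw.continuous.measurable, hw.l2sq_lt_top hΩ, _, hw.isWeakGradient hΩ⟩

theorem C11Bound.gradSq_le (hw : C11Bound w M) (hΩ : IsBounded Ω) :
    gradSq N Ω w ≤ ∫⁻ x in Ω, ENNReal.ofReal (‖fderiv ℝ w x‖ ^ 2) := by
  refine (iInf₂_le _ (hw.isWeakGradient hΩ)).trans ?_
  simp

end WeakGradient

section Isotropy

variable {E : Type*} [NormedAddCommGroup E] [InnerProductSpace ℝ E] [FiniteDimensional ℝ E]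
  [MeasurableSpace E] [BorelSpace E] {φ : ℝ → ℝ≥0∞} {δ : ℝ}

theorem setLIntegral_ball_inner_sq_eq_of_norm_eq (hφ : Measurable φ) {a b : E} (hab : ‖a‖ = ‖b‖) :
    ∫⁻ h in Metric.ball 0 δ, ‖inner ℝ a h‖ₑ ^ 2 * φ ‖h‖ =
      ∫⁻ h in Metric.ball 0 δ, ‖inner ℝ b h‖ₑ ^ 2 * φ ‖h‖ := by
  let R := (ℝ ∙ (a - b))ᗮ.reflection
  have hRa : R a = b := Submodule.reflection_sub hab
  have hball : R ⁻¹' Metric.ball 0 δ = Metric.ball 0 δ := by ext h; simp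
  have hmeas : Measurable fun h : E => ‖inner ℝ b h‖ₑ ^ 2 * φ ‖h‖ :=
    (by fun_prop : Measurable fun h : E => ‖inner ℝ b h‖ₑ ^ 2).mul (hφ.comp measurable_norm)
  rw [← R.measurePreserving.setLIntegral_comp_preimage measurableSet_ball hmeas, hball]
  simp only [← hRa, LinearIsometryEquiv.inner_map_map, LinearIsometryEquiv.norm_map]

/-- By rotation invariance the left side depends on `l` only through `‖l‖`; summing over an
orthonormal basis evaluates it. -/
theorem finrank_mul_setLIntegral_ball_sq (hφ : Measurable φ) (l : E →L[ℝ] ℝ) :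
    (Module.finrank ℝ E : ℝ≥0∞) * ∫⁻ h in Metric.ball 0 δ, ‖l h‖ₑ ^ 2 * φ ‖h‖ =
      ‖l‖ₑ ^ 2 * ∫⁻ h in Metric.ball (0 : E) δ, ‖h‖ₑ ^ 2 * φ ‖h‖ := by
  set a := (InnerProductSpace.toDual ℝ E).symm l
  have hl (h : E) : l h = inner ℝ a h := by simp [a]
  have hla : ‖l‖ = ‖a‖ := by simp [a]
  have : Measurable fun h : E => φ ‖h‖ := hφ.comp measurable_norm
  let b := stdOrthonormalBasis ℝ E
  have hbasis (i) : ∫⁻ h in Metric.ball 0 δ, ‖l h‖ₑ ^ 2 * φ ‖h‖ =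
      ∫⁻ h in Metric.ball 0 δ, ‖inner ℝ (‖a‖ • b i) h‖ₑ ^ 2 * φ ‖h‖ := by
    simp only [hl]
    exact setLIntegral_ball_inner_sq_eq_of_norm_eq hφ (by simp [norm_smul])
  have hsum (h : E) : ∑ i, ‖inner ℝ (‖a‖ • b i) h‖ₑ ^ 2 = ‖l‖ₑ ^ 2 * ‖h‖ₑ ^ 2 := by
    simp only [← ofReal_norm_sq, ← ENNReal.ofReal_mul (sq_nonneg ‖l‖)]
    rw [← ENNReal.ofReal_sum_of_nonneg fun _ _ => by positivity, ← b.sum_sq_norm_inner_right h,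
      Finset.mul_sum]
    simp [inner_smul_left, mul_pow, hla]
  calc (Module.finrank ℝ E : ℝ≥0∞) * ∫⁻ h in Metric.ball 0 δ, ‖l h‖ₑ ^ 2 * φ ‖h‖
      = ∑ i, ∫⁻ h in Metric.ball 0 δ, ‖inner ℝ (‖a‖ • b i) h‖ₑ ^ 2 * φ ‖h‖ := by
        simp [← hbasis]
    _ = ∫⁻ h in Metric.ball (0 : E) δ, ‖l‖ₑ ^ 2 * (‖h‖ₑ ^ 2 * φ ‖h‖) := by
        rw [← lintegral_finsetSum _ fun i _ => by fun_prop]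
        simp only [← Finset.sum_mul, hsum, mul_assoc]
    _ = ‖l‖ₑ ^ 2 * ∫⁻ h in Metric.ball (0 : E) δ, ‖h‖ₑ ^ 2 * φ ‖h‖ :=
        lintegral_const_mul _ (by fun_prop)

end Isotropy

section RadialIntegrals

variable {E : Type*} [NormedAddCommGroup E] [NormedSpace ℝ E] [FiniteDimensional ℝ E]
  [MeasureSpace E] [BorelSpace E] [(volume : Measure E).IsAddHaarMeasure]

theorem setLIntegral_ball_norm_rpow [Nontrivial E] {p δ : ℝ} (hp : 0 < Module.finrank ℝ E + p)
    (hδ : 0 < δ) :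
    ∫⁻ h in Metric.ball (0 : E) δ, ENNReal.ofReal (‖h‖ ^ p) =
      ENNReal.ofReal (Module.finrank ℝ E * volume.real (Metric.ball (0 : E) 1) *
        (δ ^ (Module.finrank ℝ E + p) / (Module.finrank ℝ E + p))) := by
  set d := Module.finrank ℝ E
  have hradial : EqOn (fun r : ℝ => r ^ (d - 1) • r ^ p) (fun r => r ^ (d + p - 1)) (Ioo 0 δ) := by
    intro r hr
    simp only [smul_eq_mul]
    rw [← Real.rpow_natCast, ← Real.rpow_add hr.1,
      Nat.cast_pred (Module.finrank_pos (R := ℝ) (M := E))]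
    congr 1; ring
  have hint : IntegrableOn (fun h : E => ‖h‖ ^ p) (Metric.ball 0 δ) := by
    rw [integrableOn_fun_norm_addHaar volume (f := fun r => r ^ p)]
    refine IntegrableOn.congr_fun ?_ hradial.symm measurableSet_Ioo
    rw [← intervalIntegrable_iff_integrableOn_Ioo_of_le hδ.le]
    exact intervalIntegral.intervalIntegrable_rpow' (by linarith)
  rw [← ofReal_integral_eq_lintegral_ofReal hint (Eventually.of_forall fun _ => by positivity)]
  congr 1
  have hind : (Metric.ball (0 : E) δ).indicator (fun h => ‖h‖ ^ p) =
      fun h => (Iio δ).indicator (fun r => r ^ p) ‖h‖ := by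
    ext h; simp [indicator]
  rw [← integral_indicator measurableSet_ball, hind, integral_fun_norm_addHaar, nsmul_eq_mul,
    smul_eq_mul, ← mul_assoc]
  congr 1
  calc ∫ r in Ioi (0 : ℝ), r ^ (d - 1) • (Iio δ).indicator (fun r => r ^ p) r
      = ∫ r in Ioo 0 δ, r ^ (d - 1) • r ^ p := by
        rw [setIntegral_eq_of_subset_of_forall_sdiff_eq_zero measurableSet_Ioi
          Ioo_subset_Ioi_self fun r hr => ?_]
        · exact setIntegral_congr_fun measurableSet_Ioo fun r hr => by simp [hr.2]
        · have : r ∉ Iio δ := fun hrδ => hr.2 ⟨hr.1, hrδ⟩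
          rw [indicator_of_notMem this, smul_zero]
    _ = ∫ r in Ioo 0 δ, r ^ (d + p - 1) := setIntegral_congr_fun measurableSet_Ioo hradial
    _ = δ ^ (d + p) / (d + p) := by
        rw [← integral_Ioc_eq_integral_Ioo, ← intervalIntegral.integral_of_le hδ.le,
          integral_rpow (Or.inl (by linarith)), sub_add_cancel, Real.zero_rpow hp.ne', sub_zero]

theorem exists_setLIntegral_compl_ball_le {a : ℝ} (ha : Module.finrank ℝ E < a) (b : ℝ) {δ : ℝ}
    (hδ : 0 < δ) :
    ∃ C : ℝ, 0 ≤ C ∧ ∀ p ∈ Icc a b,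
      ∫⁻ h in (Metric.ball (0 : E) δ)ᶜ, ENNReal.ofReal (1 / ‖h‖ ^ p) ≤ ENNReal.ofReal C := by
  have hfin := finite_integral_one_add_norm (μ := (volume : Measure E)) ha
  set I := ∫⁻ h : E, ENNReal.ofReal ((1 + ‖h‖) ^ (-a))
  refine ⟨(1 / δ + 1) ^ b * I.toReal, by positivity, fun p hp => ?_⟩
  rw [ENNReal.ofReal_mul (by positivity), ENNReal.ofReal_toReal hfin.ne,
    ← lintegral_const_mul _ (by fun_prop)]
  refine (setLIntegral_mono' measurableSet_ball.compl fun h hh => ?_).trans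
    (setLIntegral_le_lintegral _ _)
  have hδh : δ ≤ ‖h‖ := by simpa using hh
  have hpos : 0 < ‖h‖ := hδ.trans_le hδh
  have ha0 : 0 < a := (Nat.cast_nonneg _).trans_lt ha
  have hlin : 1 + ‖h‖ ≤ (1 / δ + 1) * ‖h‖ := by
    have : 1 ≤ 1 / δ * ‖h‖ := by rwa [one_div_mul_eq_div, one_le_div hδ]
    linarith
  have hle : (1 + ‖h‖) ^ a ≤ (1 / δ + 1) ^ b * ‖h‖ ^ p :=
    calc (1 + ‖h‖) ^ a ≤ (1 + ‖h‖) ^ p :=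
          Real.rpow_le_rpow_of_exponent_le (by linarith) hp.1
      _ ≤ ((1 / δ + 1) * ‖h‖) ^ p :=
          Real.rpow_le_rpow (by positivity) hlin (ha0.le.trans hp.1)
      _ = (1 / δ + 1) ^ p * ‖h‖ ^ p := Real.mul_rpow (by positivity) hpos.le
      _ ≤ (1 / δ + 1) ^ b * ‖h‖ ^ p := by
          gcongr
          · exact le_add_of_nonneg_left (by positivity)
          · exact hp.2
  rw [← ENNReal.ofReal_mul (by positivity), Real.rpow_neg (by positivity), ← div_eq_mul_inv]
  refine ENNReal.ofReal_le_ofReal ?_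
  rwa [div_le_div_iff₀ (by positivity) (by positivity), one_mul]

end RadialIntegrals

section NearConst

/-- The constant `ω_N δ^{2-2s} / (2-2s)`, where `ω_N` is the volume of the unit ball: the value of
`∫_{|h|<δ} (l h)² |h|^{-(N+2s)} dh` for a linear form `l` of norm one. -/
def nearConst (N : ℕ) (s δ : ℝ) : ℝ :=
  volume.real (Metric.ball (0 : Euc N) 1) * (δ ^ (2 - 2 * s) / (2 - 2 * s))

variable {N : ℕ} {s δ : ℝ}

theorem nearConst_pos (N : ℕ) (hs : s < 1) (hδ : 0 < δ) : 0 < nearConst N s δ := by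
  have : 0 < 2 - 2 * s := by linarith
  have : 0 < volume.real (Metric.ball (0 : Euc N) 1) :=
    ENNReal.toReal_pos (Metric.measure_ball_pos _ _ one_pos).ne' measure_ball_lt_top.ne
  unfold nearConst
  positivity

variable [NeZero N]

theorem setLIntegral_ball_norm_sq_div (hs : s < 1) (hδ : 0 < δ) :
    ∫⁻ h in Metric.ball (0 : Euc N) δ, ENNReal.ofReal (‖h‖ ^ 2 / ‖h‖ ^ ((N : ℝ) + 2 * s)) =
      ENNReal.ofReal (N * nearConst N s δ) := by
  have hexp : (N : ℝ) + (2 - (N + 2 * s)) = 2 - 2 * s := by ring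
  have hrpow := setLIntegral_ball_norm_rpow (E := Euc N) (p := 2 - (N + 2 * s)) (δ := δ)
    (by rw [finrank_euclideanSpace_fin, hexp]; linarith) hδ
  rw [finrank_euclideanSpace_fin, hexp, mul_assoc] at hrpow
  rw [nearConst, ← hrpow]
  refine lintegral_congr_ae (ae_restrict_of_ae ?_)
  filter_upwards [compl_mem_ae_iff.2 (measure_singleton (0 : Euc N))] with h hh
  rw [Real.rpow_sub (norm_pos_iff.2 hh), Real.rpow_two]

theorem setLIntegral_ball_norm_pow_four_div_le (hs : s < 1) (hδ : 0 < δ) :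
    ∫⁻ h in Metric.ball (0 : Euc N) δ, ENNReal.ofReal (‖h‖ ^ 4 / ‖h‖ ^ ((N : ℝ) + 2 * s)) ≤
      ENNReal.ofReal (δ ^ 2 * (N * nearConst N s δ)) := by
  rw [ENNReal.ofReal_mul (by positivity), ← setLIntegral_ball_norm_sq_div hs hδ,
    ← lintegral_const_mul _ (by fun_prop)]
  refine setLIntegral_mono' measurableSet_ball fun h hh => ?_
  rw [← ENNReal.ofReal_mul (by positivity), ← mul_div_assoc]
  refine ENNReal.ofReal_le_ofReal ?_
  have hhδ : ‖h‖ ≤ δ := (mem_ball_zero_iff.1 hh).le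
  rw [show ‖h‖ ^ 4 = ‖h‖ ^ 2 * ‖h‖ ^ 2 by ring]
  gcongr

theorem setLIntegral_ball_sq_div_norm_rpow (hs : s < 1) (hδ : 0 < δ) (l : Euc N →L[ℝ] ℝ) :
    ∫⁻ h in Metric.ball 0 δ, ENNReal.ofReal (l h ^ 2 / ‖h‖ ^ ((N : ℝ) + 2 * s)) =
      ENNReal.ofReal (nearConst N s δ) * ENNReal.ofReal (‖l‖ ^ 2) := by
  have hiso := finrank_mul_setLIntegral_ball_sq (δ := δ)
    (φ := fun r => ENNReal.ofReal ((r ^ ((N : ℝ) + 2 * s))⁻¹)) (by fun_prop) l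
  simp only [← ofReal_norm_sq, ← ENNReal.ofReal_mul (sq_nonneg _), Real.norm_eq_abs, sq_abs,
    ← div_eq_mul_inv, setLIntegral_ball_norm_sq_div hs hδ, finrank_euclideanSpace_fin] at hiso
  rw [mul_left_comm, mul_comm (‖l‖ ^ 2), ENNReal.ofReal_mul (Nat.cast_nonneg N),
    ENNReal.ofReal_natCast, ENNReal.ofReal_mul ((nearConst_pos N hs hδ).le)] at hiso
  exact (ENNReal.mul_right_inj (Nat.cast_ne_zero.2 (NeZero.ne N)) (ENNReal.natCast_ne_top N)).1 hiso

end NearConst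

section NormalizingConstant

theorem volume_real_unitBall (N : ℕ) [NeZero N] :
    volume.real (Metric.ball (0 : Euc N) 1) =
      Real.pi ^ ((N : ℝ) / 2) / Real.Gamma ((N : ℝ) / 2 + 1) := by
  have : 0 < Real.Gamma ((N : ℝ) / 2 + 1) := Real.Gamma_pos_of_pos (by positivity)
  rw [Measure.real, EuclideanSpace.volume_ball, ENNReal.ofReal_one, one_pow, one_mul,
    Fintype.card_fin, ENNReal.toReal_ofReal (by positivity), Real.sqrt_eq_rpow,
    ← Real.rpow_natCast, ← Real.rpow_mul Real.pi_pos.le, one_div_mul_eq_div]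

theorem cNs_pos (N : ℕ) {s : ℝ} (hs : 0 < s) (hs1 : s < 1) : 0 < cNs N s := by
  have : 0 < Real.Gamma (1 - s) := Real.Gamma_pos_of_pos (by linarith)
  have : 0 < Real.Gamma ((N : ℝ) / 2 + s) := Real.Gamma_pos_of_pos (by positivity)
  have := Real.pi_pos
  unfold cNs
  positivity

theorem cNs_div_one_sub_eq (N : ℕ) {s : ℝ} (hs : s < 1) :
    cNs N s / (1 - s) = (4 : ℝ) ^ s * s * Real.Gamma ((N : ℝ) / 2 + s) /
      (Real.pi ^ ((N : ℝ) / 2) * Real.Gamma (2 - s)) := by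
  have hΓ : Real.Gamma (2 - s) = (1 - s) * Real.Gamma (1 - s) := by
    rw [← Real.Gamma_add_one (by linarith)]; congr 1; ring
  rw [hΓ, cNs, div_div]
  congr 1; ring

theorem continuousAt_Gamma_of_pos {x : ℝ} (hx : 0 < x) : ContinuousAt Real.Gamma x :=
  (Real.differentiableAt_Gamma fun m h => by
    have : (0 : ℝ) ≤ m := m.cast_nonneg
    linarith).continuousAt

theorem tendsto_cNs_div_one_sub (N : ℕ) [NeZero N] :
    Tendsto (fun s => cNs N s / (1 - s)) (𝓝[<] 1)
      (𝓝 (4 / volume.real (Metric.ball (0 : Euc N) 1))) := by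
  have hnum : ContinuousAt (fun s : ℝ => Real.Gamma ((N : ℝ) / 2 + s)) 1 :=
    (continuousAt_Gamma_of_pos (by positivity)).comp (by fun_prop)
  have hden : ContinuousAt (fun s : ℝ => Real.Gamma (2 - s)) 1 :=
    (continuousAt_Gamma_of_pos (by norm_num)).comp (by fun_prop)
  have hpow : ContinuousAt (fun s : ℝ => (4 : ℝ) ^ s) 1 :=
    (Real.continuous_const_rpow (by norm_num)).continuousAt
  have hcont := ((hpow.mul continuousAt_id).mul hnum).div
    (continuousAt_const (y := Real.pi ^ ((N : ℝ) / 2)) |>.mul hden)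
    (by have := Real.pi_pos; norm_num; positivity)
  have hlim := hcont.tendsto.mono_left (nhdsWithin_le_nhds (s := Iio 1))
  have hvalue : (4 : ℝ) ^ (1 : ℝ) * 1 * Real.Gamma ((N : ℝ) / 2 + 1) /
      (Real.pi ^ ((N : ℝ) / 2) * Real.Gamma (2 - 1)) =
      4 / volume.real (Metric.ball (0 : Euc N) 1) := by
    rw [volume_real_unitBall, div_div_eq_mul_div]; norm_num
  rw [← hvalue]
  refine hlim.congr' ?_
  filter_upwards [self_mem_nhdsWithin] with s hs
  exact (cNs_div_one_sub_eq N hs).symm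

theorem tendsto_cNs (N : ℕ) [NeZero N] : Tendsto (fun s => cNs N s) (𝓝[<] 1) (𝓝 0) := by
  have hsub : Tendsto (fun s : ℝ => 1 - s) (𝓝[<] 1) (𝓝 (1 - 1)) :=
    (Continuous.tendsto (by fun_prop) 1).mono_left nhdsWithin_le_nhds
  have hmul := (tendsto_cNs_div_one_sub N).mul hsub
  rw [sub_self, mul_zero] at hmul
  refine hmul.congr' ?_
  filter_upwards [self_mem_nhdsWithin] with s hs
  exact div_mul_cancel₀ _ (sub_pos.2 hs).ne'

theorem tendsto_cNs_mul_nearConst (N : ℕ) [NeZero N] {δ : ℝ} (hδ : 0 < δ) :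
    Tendsto (fun s => cNs N s / 2 * nearConst N s δ) (𝓝[<] 1) (𝓝 1) := by
  set V := volume.real (Metric.ball (0 : Euc N) 1) with hV
  have hV0 : V ≠ 0 := (measureReal_ne_zero_iff measure_ball_lt_top.ne).2
    (Metric.measure_ball_pos _ _ one_pos).ne'
  have hpow : Tendsto (fun s : ℝ => δ ^ (2 - 2 * s)) (𝓝[<] 1) (𝓝 (δ ^ (2 - 2 * (1 : ℝ)))) :=
    (((Real.continuous_const_rpow hδ.ne').comp (by fun_prop)).tendsto _).mono_left
      nhdsWithin_le_nhds
  have hmul := ((tendsto_cNs_div_one_sub N).mul hpow).mul_const (V / 4)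
  have hvalue : 4 / V * δ ^ (2 - 2 * (1 : ℝ)) * (V / 4) = 1 := by
    rw [mul_one, sub_self, Real.rpow_zero, mul_one]; field_simp
  rw [← hV, hvalue] at hmul
  refine hmul.congr' ?_
  filter_upwards [self_mem_nhdsWithin] with s hs
  have : 1 - s ≠ 0 := (sub_pos.2 hs).ne'
  rw [nearConst, ← hV, show 2 - 2 * s = 2 * (1 - s) by ring]
  field_simp
  ring

end NormalizingConstant

section UpperBound

theorem setLIntegral_fst_mem_sub_mem {E : Type*} [NormedAddCommGroup E] [MeasureSpace E]
    [BorelSpace E] [SecondCountableTopology E] [SFinite (volume : Measure E)]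
    [(volume : Measure E).IsAddLeftInvariant] {S H : Set E}
    (hS : MeasurableSet S) (hH : MeasurableSet H) {f : E × E → ℝ≥0∞} (hf : Measurable f) :
    ∫⁻ q in {q | q.1 ∈ S ∧ q.2 - q.1 ∈ H}, f q = ∫⁻ x in S, ∫⁻ h in H, f (x, x + h) := by
  have hmeas : MeasurableSet {q : E × E | q.1 ∈ S ∧ q.2 - q.1 ∈ H} :=
    (measurable_fst hS).inter ((measurable_snd.sub measurable_fst) hH)
  have hpre : (fun z : E × E => (z.1, z.1 + z.2)) ⁻¹' {q | q.1 ∈ S ∧ q.2 - q.1 ∈ H} =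
      S ×ˢ H := by
    ext z; simp
  rw [Measure.volume_eq_prod,
    ← (measurePreserving_prod_add volume volume).setLIntegral_comp_preimage hmeas hf,
    hpre, ← Measure.prod_restrict, lintegral_prod _ (by fun_prop)]

variable {N : ℕ} {Ω : Set (Euc N)} {s δ M ε : ℝ} {u w : Euc N → ℝ}

/-- The integrand of the Gagliardo seminorms `semiSq` and `semiSqOn`. -/
def gagliardo (s : ℝ) (u : Euc N → ℝ) (q : Euc N × Euc N) : ℝ≥0∞ :=
  ENNReal.ofReal ((u q.1 - u q.2) ^ 2 / kern N s q.1 q.2)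

theorem measurable_gagliardo (s : ℝ) (hu : Measurable u) : Measurable (gagliardo s u) := by
  unfold gagliardo kern
  fun_prop

theorem gagliardo_swap (s : ℝ) (u : Euc N → ℝ) (q : Euc N × Euc N) :
    gagliardo s u q.swap = gagliardo s u q := by
  simp only [gagliardo, kern, Prod.fst_swap, Prod.snd_swap, norm_sub_rev, sub_sq_comm]

theorem gagliardo_self_add (s : ℝ) (u : Euc N → ℝ) (x h : Euc N) :
    gagliardo s u (x, x + h) =
      ENNReal.ofReal ((u (x + h) - u x) ^ 2 / ‖h‖ ^ ((N : ℝ) + 2 * s)) := by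
  simp [gagliardo, kern, sub_sq_comm]

theorem semiSq_le_near_add_two_mul_far (s δ : ℝ) (u : Euc N → ℝ) :
    semiSq N s Ω u ≤
      (∫⁻ q in {q | q.1 ∈ Metric.cthickening δ (closure Ω) ∧ q.2 - q.1 ∈ Metric.ball 0 δ},
        gagliardo s u q) +
      2 * ∫⁻ q in {q | q.1 ∈ closure Ω ∧ q.2 - q.1 ∈ (Metric.ball 0 δ)ᶜ}, gagliardo s u q := by
  set near := {q : Euc N × Euc N |
    q.1 ∈ Metric.cthickening δ (closure Ω) ∧ q.2 - q.1 ∈ Metric.ball 0 δ}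
  set far := {q : Euc N × Euc N | q.1 ∈ closure Ω ∧ q.2 - q.1 ∈ (Metric.ball 0 δ)ᶜ}
  have hcover : reg N Ω ⊆ near ∪ (far ∪ Prod.swap ⁻¹' far) := by
    rintro ⟨x, y⟩ hxy
    by_cases hclose : y - x ∈ Metric.ball 0 δ
    · have hdist : dist x y ≤ δ := by
        rw [dist_eq_norm, norm_sub_rev]; exact (mem_ball_zero_iff.1 hclose).le
      refine Or.inl ⟨?_, hclose⟩
      rcases hxy with hx | hy
      · exact Metric.self_subset_cthickening _ hx
      · exact Metric.mem_cthickening_of_dist_le x y δ _ hy hdist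
    · have hclose' : x - y ∉ Metric.ball 0 δ := by
        rwa [mem_ball_zero_iff, norm_sub_rev, ← mem_ball_zero_iff]
      exact Or.inr (hxy.imp (⟨·, hclose⟩) (⟨·, hclose'⟩))
  have hswap : ∫⁻ q in Prod.swap ⁻¹' far, gagliardo s u q = ∫⁻ q in far, gagliardo s u q := by
    rw [Measure.volume_eq_prod, ← Measure.measurePreserving_swap.setLIntegral_comp_preimage_emb
      MeasurableEquiv.prodComm.measurableEmbedding (gagliardo s u) far]
    simp only [gagliardo_swap]
  calc semiSq N s Ω u ≤ ∫⁻ q in near ∪ (far ∪ Prod.swap ⁻¹' far), gagliardo s u q :=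
        lintegral_mono_set hcover
    _ ≤ (∫⁻ q in near, gagliardo s u q) +
        ((∫⁻ q in far, gagliardo s u q) + ∫⁻ q in Prod.swap ⁻¹' far, gagliardo s u q) :=
      (lintegral_union_le _ _ _).trans (by gcongr; exact lintegral_union_le _ _ _)
    _ = _ := by rw [hswap, two_mul]

theorem lintegral_far_le (hu : Measurable u) (hM : ∀ x, |u x| ≤ M) {S : Set (Euc N)}
    (hS : MeasurableSet S) {C : ℝ}
    (hC : ∫⁻ h in (Metric.ball (0 : Euc N) δ)ᶜ, ENNReal.ofReal (1 / ‖h‖ ^ ((N : ℝ) + 2 * s)) ≤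
      ENNReal.ofReal C) :
    ∫⁻ q in {q | q.1 ∈ S ∧ q.2 - q.1 ∈ (Metric.ball 0 δ)ᶜ}, gagliardo s u q ≤
      ENNReal.ofReal (4 * M ^ 2 * C) * volume S := by
  rw [setLIntegral_fst_mem_sub_mem hS measurableSet_ball.compl (measurable_gagliardo s hu),
    ← setLIntegral_const]
  refine lintegral_mono fun x => ?_
  calc ∫⁻ h in (Metric.ball (0 : Euc N) δ)ᶜ, gagliardo s u (x, x + h)
      ≤ ∫⁻ h in (Metric.ball (0 : Euc N) δ)ᶜ,
          ENNReal.ofReal (4 * M ^ 2) * ENNReal.ofReal (1 / ‖h‖ ^ ((N : ℝ) + 2 * s)) := by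
        refine lintegral_mono fun h => ?_
        rw [gagliardo_self_add, ← ENNReal.ofReal_mul (by positivity), mul_one_div]
        have hsub : |u (x + h) - u x| ≤ 2 * M :=
          (abs_sub _ _).trans (by linarith [hM x, hM (x + h)])
        have hsq : (u (x + h) - u x) ^ 2 ≤ 4 * M ^ 2 := by
          rw [← sq_abs]; nlinarith [abs_nonneg (u (x + h) - u x)]
        gcongr
    _ ≤ ENNReal.ofReal (4 * M ^ 2) * ENNReal.ofReal C := by
        rw [lintegral_const_mul _ (by fun_prop)]
        gcongr
    _ = ENNReal.ofReal (4 * M ^ 2 * C) := (ENNReal.ofReal_mul (by positivity)).symm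

theorem tendsto_volume_real_cthickening_closure (hbdd : IsBounded Ω) :
    Tendsto (fun δ => volume.real (Metric.cthickening δ (closure Ω))) (𝓝 0)
      (𝓝 (volume.real (closure Ω))) :=
  (ENNReal.tendsto_toReal hbdd.closure.measure_lt_top.ne).comp
    (tendsto_measure_cthickening_of_isClosed
      ⟨1, one_pos, hbdd.closure.cthickening.measure_lt_top.ne⟩ isClosed_closure)

theorem tendsto_volume_real_cthickening_closure_sdiff (hΩ : IsOpen Ω) (hbdd : IsBounded Ω)
    (hcl : volume (closure Ω) ≤ volume Ω) :
    Tendsto (fun δ => volume.real (Metric.cthickening δ (closure Ω) \ Ω)) (𝓝 0) (𝓝 0) := by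
  have hvol : volume.real (closure Ω) = volume.real Ω := by
    rw [measureReal_def, measureReal_def, hcl.antisymm (measure_mono subset_closure)]
  have hlim := (tendsto_volume_real_cthickening_closure hbdd).sub_const (volume.real Ω)
  rw [hvol, sub_self] at hlim
  refine hlim.congr fun δ => ?_
  have hsub : Ω ⊆ Metric.cthickening δ (closure Ω) :=
    subset_closure.trans (Metric.self_subset_cthickening _)
  exact (measureReal_sdiff hsub hΩ.measurableSet
    hbdd.closure.cthickening.measure_lt_top.ne).symm

variable [NeZero N]

theorem C11Bound.lintegral_ball_gagliardo_le (hw : C11Bound w M) (hs : s < 1) (hδ : 0 < δ)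
    (hε : 0 < ε) (x : Euc N) :
    ∫⁻ h in Metric.ball (0 : Euc N) δ, gagliardo s w (x, x + h) ≤
      ENNReal.ofReal (nearConst N s δ) * (ENNReal.ofReal (1 + ε) *
        ENNReal.ofReal (‖fderiv ℝ w x‖ ^ 2) +
        ENNReal.ofReal ((1 + 1 / ε) * M ^ 2 * (δ ^ 2 * N))) := by
  set p := (N : ℝ) + 2 * s
  set l := fderiv ℝ w x
  have htaylor (h : Euc N) : (w (x + h) - w x) ^ 2 ≤
      (1 + ε) * l h ^ 2 + (1 + 1 / ε) * M ^ 2 * ‖h‖ ^ 4 := by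
    have hrem := hw.norm_sub_sub_fderiv_le x (x + h)
    rw [add_sub_cancel_left, Real.norm_eq_abs] at hrem
    have hrem2 : (w (x + h) - w x - l h) ^ 2 ≤ M ^ 2 * ‖h‖ ^ 4 := by
      rw [← sq_abs]
      exact (pow_le_pow_left₀ (abs_nonneg _) hrem 2).trans_eq (by ring)
    calc (w (x + h) - w x) ^ 2 = (l h + (w (x + h) - w x - l h)) ^ 2 := by ring
      _ ≤ (1 + ε) * l h ^ 2 + (1 + 1 / ε) * (M ^ 2 * ‖h‖ ^ 4) :=
        (add_sq_le_mul_add_mul _ _ hε).trans (by gcongr)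
      _ = _ := by rw [mul_assoc _ (M ^ 2)]
  calc ∫⁻ h in Metric.ball (0 : Euc N) δ, gagliardo s w (x, x + h)
      ≤ ∫⁻ h in Metric.ball (0 : Euc N) δ,
          (ENNReal.ofReal (1 + ε) * ENNReal.ofReal (l h ^ 2 / ‖h‖ ^ p) +
          ENNReal.ofReal ((1 + 1 / ε) * M ^ 2) * ENNReal.ofReal (‖h‖ ^ 4 / ‖h‖ ^ p)) := by
        refine lintegral_mono fun h => ?_
        rw [gagliardo_self_add, ← ENNReal.ofReal_mul (by positivity),
          ← ENNReal.ofReal_mul (by positivity), ← ENNReal.ofReal_add (by positivity)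
          (by positivity), ← mul_div_assoc, ← mul_div_assoc, ← add_div]
        gcongr
        exact htaylor h
    _ ≤ ENNReal.ofReal (1 + ε) *
          (ENNReal.ofReal (nearConst N s δ) * ENNReal.ofReal (‖l‖ ^ 2)) +
        ENNReal.ofReal ((1 + 1 / ε) * M ^ 2) *
          ENNReal.ofReal (δ ^ 2 * (N * nearConst N s δ)) := by
        rw [lintegral_add_left (by fun_prop), lintegral_const_mul _ (by fun_prop),
          lintegral_const_mul _ (by fun_prop), setLIntegral_ball_sq_div_norm_rpow hs hδ]
        gcongr
        exact setLIntegral_ball_norm_pow_four_div_le hs hδ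
    _ = _ := by
        rw [← mul_assoc (δ ^ 2), ENNReal.ofReal_mul (by positivity) (q := nearConst N s δ),
          ENNReal.ofReal_mul (p := (1 + 1 / ε) * M ^ 2) (by positivity)]
        ring

theorem C11Bound.lintegral_near_le (hw : C11Bound w M) (hs : s < 1) (hδ : 0 < δ)
    (hε : 0 < ε) {T : Set (Euc N)} (hT : MeasurableSet T) :
    ∫⁻ q in {q | q.1 ∈ T ∧ q.2 - q.1 ∈ Metric.ball 0 δ}, gagliardo s w q ≤
      ENNReal.ofReal (nearConst N s δ) * (ENNReal.ofReal (1 + ε) *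
        (∫⁻ x in T, ENNReal.ofReal (‖fderiv ℝ w x‖ ^ 2)) +
        ENNReal.ofReal ((1 + 1 / ε) * M ^ 2 * (δ ^ 2 * N)) * volume T) := by
  have := hw.continuous_fderiv
  rw [setLIntegral_fst_mem_sub_mem hT measurableSet_ball
    (measurable_gagliardo s hw.continuous.measurable)]
  refine (lintegral_mono fun x => hw.lintegral_ball_gagliardo_le hs hδ hε x).trans_eq ?_
  rw [lintegral_const_mul _ (by fun_prop), lintegral_add_right _ measurable_const,
    lintegral_const_mul _ (by fun_prop), setLIntegral_const]

theorem C11Bound.setLIntegral_norm_fderiv_sq_le {E : Type*} [NormedAddCommGroup E]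
    [NormedSpace ℝ E] [MeasureSpace E] {Ω T : Set E} {w : E → ℝ} (hw : C11Bound w M)
    (hΩT : Ω ⊆ T) (hT : volume (T \ Ω) ≠ ⊤) :
    ∫⁻ x in T, ENNReal.ofReal (‖fderiv ℝ w x‖ ^ 2) ≤
      (∫⁻ x in Ω, ENNReal.ofReal (‖fderiv ℝ w x‖ ^ 2)) +
        ENNReal.ofReal (M ^ 2 * volume.real (T \ Ω)) := by
  have hdiff : ∫⁻ x in T \ Ω, ENNReal.ofReal (‖fderiv ℝ w x‖ ^ 2) ≤
      ENNReal.ofReal (M ^ 2 * volume.real (T \ Ω)) := by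
    rw [ENNReal.ofReal_mul (sq_nonneg M), ofReal_measureReal hT, ← setLIntegral_const]
    refine lintegral_mono fun x => ENNReal.ofReal_le_ofReal ?_
    exact pow_le_pow_left₀ (norm_nonneg _) (hw.norm_fderiv_le x) 2
  calc ∫⁻ x in T, ENNReal.ofReal (‖fderiv ℝ w x‖ ^ 2)
      = ∫⁻ x in Ω ∪ T \ Ω, ENNReal.ofReal (‖fderiv ℝ w x‖ ^ 2) := by
        rw [union_sdiff_cancel hΩT]
    _ ≤ _ := (lintegral_union_le _ _ _).trans (by gcongr)

theorem C11Bound.ofReal_mul_semiSq_le (hw : C11Bound w M) (hΩ : IsBounded Ω) (hs : s < 1)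
    (hδ : 0 < δ) (hε : 0 < ε) {c C : ℝ} (hc : 0 ≤ c) (hC0 : 0 ≤ C)
    (hC : ∫⁻ h in (Metric.ball (0 : Euc N) δ)ᶜ, ENNReal.ofReal (1 / ‖h‖ ^ ((N : ℝ) + 2 * s)) ≤
      ENNReal.ofReal C) :
    ENNReal.ofReal c * semiSq N s Ω w ≤
      ENNReal.ofReal (c * nearConst N s δ * (1 + ε)) *
        (∫⁻ x in Ω, ENNReal.ofReal (‖fderiv ℝ w x‖ ^ 2)) +
      ENNReal.ofReal (M ^ 2 * (c * nearConst N s δ *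
        ((1 + ε) * volume.real (Metric.cthickening δ (closure Ω) \ Ω) +
          (1 + 1 / ε) * (δ ^ 2 * N) * volume.real (Metric.cthickening δ (closure Ω))) +
        c * (8 * C * volume.real (closure Ω)))) := by
  set T := Metric.cthickening δ (closure Ω)
  have hΩT : Ω ⊆ T := subset_closure.trans (Metric.self_subset_cthickening _)
  have hTtop : volume T ≠ ⊤ := hΩ.closure.cthickening.measure_lt_top.ne
  have hsdiff : volume (T \ Ω) ≠ ⊤ := measure_ne_top_of_subset sdiff_subset hTtop
  have := nearConst_pos N hs hδ
  set n := nearConst N s δ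
  have hfar := lintegral_far_le hw.continuous.measurable hw.norm_le
    (isClosed_closure (s := Ω)).measurableSet hC
  have hnear := hw.lintegral_near_le hs hδ hε (T := T) Metric.isClosed_cthickening.measurableSet
  rw [← ofReal_measureReal hTtop, ← ENNReal.ofReal_mul (by positivity)] at hnear
  rw [← ofReal_measureReal hΩ.closure.measure_lt_top.ne, ← ENNReal.ofReal_mul (by positivity)]
    at hfar
  calc ENNReal.ofReal c * semiSq N s Ω w
      ≤ ENNReal.ofReal c * (ENNReal.ofReal n * (ENNReal.ofReal (1 + ε) *
          ((∫⁻ x in Ω, ENNReal.ofReal (‖fderiv ℝ w x‖ ^ 2)) +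
            ENNReal.ofReal (M ^ 2 * volume.real (T \ Ω))) +
          ENNReal.ofReal ((1 + 1 / ε) * M ^ 2 * (δ ^ 2 * N) * volume.real T)) +
        2 * ENNReal.ofReal (4 * M ^ 2 * C * volume.real (closure Ω))) := by
        refine mul_le_mul_right ((semiSq_le_near_add_two_mul_far s δ w).trans ?_) _
        gcongr
        refine hnear.trans ?_
        gcongr
        exact hw.setLIntegral_norm_fderiv_sq_le hΩT hsdiff
    _ = _ := by
        have hsplit (G : ℝ≥0∞) (m V W : ℝ) (hm : 0 ≤ m) (hV : 0 ≤ V) (hW : 0 ≤ W) :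
            ENNReal.ofReal c * (ENNReal.ofReal n * (ENNReal.ofReal (1 + ε) *
              (G + ENNReal.ofReal (M ^ 2 * m)) +
              ENNReal.ofReal ((1 + 1 / ε) * M ^ 2 * (δ ^ 2 * N) * V)) +
              2 * ENNReal.ofReal (4 * M ^ 2 * C * W)) =
            ENNReal.ofReal (c * n * (1 + ε)) * G + ENNReal.ofReal (M ^ 2 * (c * n *
              ((1 + ε) * m + (1 + 1 / ε) * (δ ^ 2 * N) * V) + c * (8 * C * W))) := by
          rw [two_mul, mul_add _ G, add_assoc, mul_add (ENNReal.ofReal n), add_assoc,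
            mul_add (ENNReal.ofReal c)]
          simp (disch := positivity) only [← mul_assoc, ← ENNReal.ofReal_mul,
            ← ENNReal.ofReal_add]
          congr 2
          ring
        exact hsplit _ _ _ _ measureReal_nonneg measureReal_nonneg measureReal_nonneg

theorem eventually_ofReal_mul_semiSq_le (hΩ : IsOpen Ω) (hbdd : IsBounded Ω)
    (hcl : volume (closure Ω) ≤ volume Ω) {η : ℝ} (hη : 0 < η) :
    ∀ᶠ s in 𝓝[<] (1 : ℝ), ∀ (w : Euc N → ℝ) (M : ℝ), C11Bound w M →
      ENNReal.ofReal (cNs N s / 2) * semiSq N s Ω w ≤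
        ENNReal.ofReal (1 + η) * (∫⁻ x in Ω, ENNReal.ofReal (‖fderiv ℝ w x‖ ^ 2)) +
          ENNReal.ofReal (η * M ^ 2) := by
  set ε := η / 2
  have hε : 0 < ε := half_pos hη
  have hεη : ε < η := half_lt_self hη
  set T := fun δ => Metric.cthickening δ (closure Ω)
  set err := fun δ => (1 + ε) * volume.real (T δ \ Ω) +
    (1 + 1 / ε) * (δ ^ 2 * N) * volume.real (T δ)
  have herr0 : Tendsto err (𝓝[>] 0) (𝓝 0) := by
    have hpow : Tendsto (fun δ : ℝ => (1 + 1 / ε) * (δ ^ 2 * N)) (𝓝 0)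
      (𝓝 ((1 + 1 / ε) * (0 ^ 2 * N))) := Continuous.tendsto (by fun_prop) 0
    have hlim := ((tendsto_volume_real_cthickening_closure_sdiff hΩ hbdd hcl).const_mul
      (1 + ε)).add (hpow.mul (tendsto_volume_real_cthickening_closure hbdd))
    simp only [mul_zero, zero_mul, add_zero, zero_pow two_ne_zero] at hlim
    exact hlim.mono_left nhdsWithin_le_nhds
  obtain ⟨δ, hδη, hδ⟩ := ((herr0.eventually_lt_const hη).and self_mem_nhdsWithin).exists
  obtain ⟨C, hC0, hC⟩ := exists_setLIntegral_compl_ball_le (E := Euc N) (a := N + 1)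
    (by simp) (N + 2) hδ
  have hκ := tendsto_cNs_mul_nearConst N hδ
  have hmain := (hκ.mul_const (1 + ε)).eventually_lt_const (show 1 * (1 + ε) < 1 + η by linarith)
  have herr := ((hκ.mul_const (err δ)).add (((tendsto_cNs N).div_const 2).mul_const
    (8 * C * volume.real (closure Ω)))).eventually_lt_const (u := η) (by simpa using hδη)
  filter_upwards [hmain, herr, Ico_mem_nhdsLT (show (1 / 2 : ℝ) < 1 by norm_num)]
    with s hsmain hserr hs w M hw
  have hc : 0 ≤ cNs N s / 2 := (half_pos (cNs_pos N (by linarith [hs.1]) hs.2)).le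
  refine (hw.ofReal_mul_semiSq_le hbdd hs.2 hδ hε hc hC0
    (hC _ ⟨by linarith [hs.1], by linarith [hs.2]⟩)).trans ?_
  rw [mul_comm η]
  gcongr

end UpperBound

section Erosion

variable {E : Type*} [PseudoMetricSpace E] {Ω : Set E} {r : ℝ}

/-- The erosion of `Ω` by `r`: the centres of the open balls of radius `r` contained in `Ω`. -/
def erosion (Ω : Set E) (r : ℝ) : Set E :=
  {x | Metric.ball x r ⊆ Ω}

theorem isClosed_erosion (Ω : Set E) (r : ℝ) : IsClosed (erosion Ω r) := by
  have hcompl : (erosion Ω r)ᶜ = Metric.thickening r Ωᶜ := by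
    ext x
    simp [erosion, Metric.mem_thickening_iff, Set.not_subset, dist_comm, and_comm]
  exact isOpen_compl_iff.1 (hcompl ▸ Metric.isOpen_thickening)

theorem erosion_subset (hr : 0 < r) : erosion Ω r ⊆ Ω :=
  fun _ hx => hx (Metric.mem_ball_self hr)

end Erosion

section Averaging

variable {E : Type*} [NormedAddCommGroup E] [NormedSpace ℝ E] [FiniteDimensional ℝ E]
  [MeasureSpace E] [BorelSpace E] [(volume : Measure E).IsAddHaarMeasure]

theorem lintegral_enorm_normed (φ : ContDiffBump (0 : E)) :
    ∫⁻ z, ‖φ.normed volume z‖ₑ = 1 := by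
  simp_rw [Real.enorm_of_nonneg (φ.nonneg_normed _)]
  rw [← ofReal_integral_eq_lintegral_ofReal φ.integrable_normed
    (Eventually.of_forall φ.nonneg_normed), φ.integral_normed, ENNReal.ofReal_one]

theorem enorm_integral_normed_smul_sq_le (φ : ContDiffBump (0 : E)) {F : Type*}
    [NormedAddCommGroup F] [NormedSpace ℝ F] {f : E → F} (hf : AEMeasurable (‖f ·‖ₑ)) :
    ‖∫ z, φ.normed volume z • f z‖ₑ ^ 2 ≤ ∫⁻ z, ‖φ.normed volume z‖ₑ * ‖f z‖ₑ ^ 2 := by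
  simpa only [lintegral_enorm_normed, one_mul] using
    enorm_integral_smul_sq_le φ.integrable_normed.aemeasurable hf

theorem lintegral_lintegral_normed_mul_sub_le (φ : ContDiffBump (0 : E)) {G : Type*} [AddGroup G]
    [MeasureSpace G] [MeasurableAdd₂ G] [MeasurableNeg G] [SFinite (volume : Measure G)]
    [(volume : Measure G).IsAddRightInvariant] {τ : E → G} (hτ : Measurable τ) {Q S : Set G}
    (hS : MeasurableSet S) (hQ : ∀ q ∈ Q, ∀ z ∈ Metric.ball 0 φ.rOut, q - τ z ∈ S)
    {f : G → ℝ≥0∞} (hf : Measurable f) :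
    ∫⁻ q in Q, ∫⁻ z, ‖φ.normed volume z‖ₑ * f (q - τ z) ≤ ∫⁻ q in S, f q := by
  have hφ : Measurable (φ.normed volume) := φ.continuous_normed.measurable
  have htranslate (z : E) (hz : z ∈ Metric.ball 0 φ.rOut) :
      ∫⁻ q in Q, f (q - τ z) ≤ ∫⁻ q in S, f q := by
    rw [← (measurePreserving_sub_right volume (τ z)).setLIntegral_comp_preimage hS hf]
    exact lintegral_mono_set fun q hq => hQ q hq z hz
  rw [lintegral_lintegral_swap (by fun_prop)]
  calc ∫⁻ z, ∫⁻ q in Q, ‖φ.normed volume z‖ₑ * f (q - τ z)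
      ≤ ∫⁻ z, ‖φ.normed volume z‖ₑ * ∫⁻ q in S, f q := by
        refine lintegral_mono fun z => ?_
        rw [lintegral_const_mul _ (by fun_prop)]
        by_cases hz : z ∈ Metric.ball 0 φ.rOut
        · exact mul_le_mul_right (htranslate z hz) _
        · rw [← φ.support_normed_eq (μ := volume), Function.notMem_support] at hz
          simp [hz]
    _ = ∫⁻ q in S, f q := by
        rw [lintegral_mul_const _ hφ.enorm, lintegral_enorm_normed, one_mul]

theorem exists_c11Bound_normed (φ : ContDiffBump (0 : E)) :
    ∃ B : ℝ, C11Bound (φ.normed volume) B :=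
  (exists_c11Bound φ.contDiff_normed φ.hasCompactSupport_normed).imp fun _ => And.right

theorem norm_normed_le (φ : ContDiffBump (0 : E)) (z : E) :
    ‖φ.normed volume z‖ ≤ 1 / volume.real (Metric.closedBall (0 : E) φ.rIn) := by
  rw [Real.norm_of_nonneg (φ.nonneg_normed z)]
  exact φ.normed_le_div_measure_closedBall_rIn volume z

variable {F : Type*} [NormedAddCommGroup F] [NormedSpace ℝ F] {Ω : Set E}

theorem mollify_eq_integral_indicator (hΩ : MeasurableSet Ω) (ρ : E → ℝ) (u : E → F) (x : E) :
    mollify Ω ρ u x = ∫ z, ρ z • Ω.indicator u (x - z) := by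
  rw [mollify, ← integral_indicator hΩ,
    ← integral_sub_left_eq_self (Ω.indicator fun y => ρ (x - y) • u y) volume x]
  refine integral_congr_ae (Eventually.of_forall fun z => ?_)
  by_cases hz : x - z ∈ Ω <;> simp [hz]

theorem mollify_sub_mollify_eq_integral (φ : ContDiffBump (0 : E)) (hΩ : MeasurableSet Ω)
    {u : E → F} (hu : IntegrableOn u Ω) (x y : E) :
    mollify Ω (φ.normed volume) u x - mollify Ω (φ.normed volume) u y =
      ∫ z, φ.normed volume z • (Ω.indicator u (x - z) - Ω.indicator u (y - z)) := by
  have hint (x : E) : Integrable fun z => φ.normed volume z • Ω.indicator u (x - z) :=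
    (((integrable_indicator_iff hΩ).2 hu).comp_sub_left x).bdd_smul _
      φ.continuous_normed.aestronglyMeasurable (Eventually.of_forall (norm_normed_le φ))
  rw [mollify_eq_integral_indicator hΩ, mollify_eq_integral_indicator hΩ,
    ← integral_sub (hint x) (hint y)]
  simp only [smul_sub]

theorem enorm_mollify_sq_le (φ : ContDiffBump (0 : E)) (hΩ : MeasurableSet Ω) {u : E → F}
    (hu : Measurable (‖u ·‖ₑ)) (x : E) :
    ‖mollify Ω (φ.normed volume) u x‖ₑ ^ 2 ≤
      ∫⁻ z, ‖φ.normed volume z‖ₑ * Ω.indicator (‖u ·‖ₑ ^ 2) (x - z) := by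
  have hnorm (z : E) : ‖Ω.indicator u z‖ₑ = Ω.indicator (‖u ·‖ₑ) z :=
    enorm_indicator_eq_indicator_enorm u z
  have hsq (z : E) : Ω.indicator (‖u ·‖ₑ) z ^ 2 = Ω.indicator (‖u ·‖ₑ ^ 2) z := by
    by_cases hz : z ∈ Ω <;> simp [hz]
  rw [mollify_eq_integral_indicator hΩ]
  refine (enorm_integral_normed_smul_sq_le φ ?_).trans_eq ?_
  · simp only [hnorm]
    have := hu.indicator hΩ
    fun_prop
  · simp only [hnorm, hsq]

theorem lintegral_enorm_mollify_sq_le (φ : ContDiffBump (0 : E)) (hΩ : MeasurableSet Ω)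
    {u : E → F} (hu : Measurable (‖u ·‖ₑ)) :
    ∫⁻ x, ‖mollify Ω (φ.normed volume) u x‖ₑ ^ 2 ≤ ∫⁻ x in Ω, ‖u x‖ₑ ^ 2 := by
  calc ∫⁻ x, ‖mollify Ω (φ.normed volume) u x‖ₑ ^ 2
      ≤ ∫⁻ x in univ, ∫⁻ z, ‖φ.normed volume z‖ₑ * Ω.indicator (‖u ·‖ₑ ^ 2) (x - z) := by
        rw [Measure.restrict_univ]
        exact lintegral_mono (enorm_mollify_sq_le φ hΩ hu)
    _ ≤ ∫⁻ x in univ, Ω.indicator (‖u ·‖ₑ ^ 2) x :=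
        lintegral_lintegral_normed_mul_sub_le φ measurable_id .univ (fun _ _ _ _ => mem_univ _)
          ((hu.pow_const 2).indicator hΩ)
    _ = ∫⁻ x in Ω, ‖u x‖ₑ ^ 2 := by
        rw [Measure.restrict_univ, lintegral_indicator hΩ]

end Averaging

section LowerBound

variable {N : ℕ} {Ω : Set (Euc N)} {s δ r M ε : ℝ} {u w : Euc N → ℝ}

theorem gagliardo_eq_enorm_sq_mul (s : ℝ) (u : Euc N → ℝ) (q : Euc N × Euc N) :
    gagliardo s u q = ‖u q.1 - u q.2‖ₑ ^ 2 * ENNReal.ofReal (1 / kern N s q.1 q.2) := by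
  rw [gagliardo, ← ofReal_sq, ← ENNReal.ofReal_mul (sq_nonneg _), mul_one_div]

theorem gagliardo_mollify_le (φ : ContDiffBump (0 : Euc N)) (hΩ : MeasurableSet Ω)
    (hum : Measurable u) (hu : IntegrableOn u Ω) (s : ℝ) (q : Euc N × Euc N) :
    gagliardo s (mollify Ω (φ.normed volume) u) q ≤
      ∫⁻ z, ‖φ.normed volume z‖ₑ * gagliardo s (Ω.indicator u) (q - (z, z)) := by
  have : Measurable (Ω.indicator u) := hum.indicator hΩ
  have hφ : Measurable (φ.normed volume) := φ.continuous_normed.measurable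
  rw [gagliardo_eq_enorm_sq_mul, mollify_sub_mollify_eq_integral φ hΩ hu]
  refine (mul_le_mul_left (enorm_integral_normed_smul_sq_le φ (by fun_prop)) _).trans_eq ?_
  rw [← lintegral_mul_const _ (by fun_prop)]
  simp only [gagliardo_eq_enorm_sq_mul, kern, Prod.fst_sub, Prod.snd_sub, sub_sub_sub_cancel_right,
    mul_assoc]

theorem setLIntegral_gagliardo_mollify_le (φ : ContDiffBump (0 : Euc N)) (hΩ : MeasurableSet Ω)
    (hum : Measurable u) (hu : IntegrableOn u Ω) (s : ℝ) (hr : φ.rOut + δ ≤ r) :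
    ∫⁻ q in {q | q.1 ∈ erosion Ω r ∧ q.2 - q.1 ∈ Metric.ball 0 δ},
        gagliardo s (mollify Ω (φ.normed volume) u) q ≤ semiSqOn N s Ω u := by
  have htranslate (q : Euc N × Euc N)
      (hq : q ∈ {q | q.1 ∈ erosion Ω r ∧ q.2 - q.1 ∈ Metric.ball 0 δ})
      (z : Euc N) (hz : z ∈ Metric.ball 0 φ.rOut) : q - (z, z) ∈ Ω ×ˢ Ω := by
    obtain ⟨hq1, hq2⟩ := hq
    rw [mem_ball_zero_iff] at hz hq2
    constructor <;> apply hq1 <;> rw [mem_ball_iff_norm]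
    · rw [Prod.fst_sub, sub_sub_cancel_left, norm_neg]
      linarith [norm_nonneg (q.2 - q.1)]
    · rw [Prod.snd_sub, sub_right_comm]
      exact (norm_sub_le _ _).trans_lt (by linarith)
  have : (volume : Measure (Euc N × Euc N)).IsAddRightInvariant := by
    rw [Measure.volume_eq_prod]
    infer_instance
  calc ∫⁻ q in {q | q.1 ∈ erosion Ω r ∧ q.2 - q.1 ∈ Metric.ball 0 δ},
        gagliardo s (mollify Ω (φ.normed volume) u) q
      ≤ ∫⁻ q in {q | q.1 ∈ erosion Ω r ∧ q.2 - q.1 ∈ Metric.ball 0 δ},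
          ∫⁻ z, ‖φ.normed volume z‖ₑ * gagliardo s (Ω.indicator u) (q - (z, z)) :=
        lintegral_mono fun q => gagliardo_mollify_le φ hΩ hum hu s q
    _ ≤ ∫⁻ q in Ω ×ˢ Ω, gagliardo s (Ω.indicator u) q :=
        lintegral_lintegral_normed_mul_sub_le φ (measurable_id.prodMk measurable_id)
          (hΩ.prod hΩ) htranslate (measurable_gagliardo s (hum.indicator hΩ))
    _ = semiSqOn N s Ω u :=
        setLIntegral_congr_fun (hΩ.prod hΩ) fun q hq => by
          simp only [gagliardo, indicator_of_mem hq.1, indicator_of_mem hq.2]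

variable [NeZero N]

theorem C11Bound.ofReal_nearConst_mul_norm_fderiv_sq_le (hw : C11Bound w M) (hs : s < 1)
    (hδ : 0 < δ) (hε : 0 < ε) (x : Euc N) :
    ENNReal.ofReal (nearConst N s δ) * ENNReal.ofReal (‖fderiv ℝ w x‖ ^ 2) ≤
      ENNReal.ofReal (1 + ε) * (∫⁻ h in Metric.ball (0 : Euc N) δ, gagliardo s w (x, x + h)) +
        ENNReal.ofReal ((1 + 1 / ε) * M ^ 2 * (δ ^ 2 * (N * nearConst N s δ))) := by
  set p := (N : ℝ) + 2 * s
  set l := fderiv ℝ w x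
  have hg : Measurable fun h => gagliardo s w (x, x + h) :=
    (measurable_gagliardo s hw.continuous.measurable).comp (by fun_prop)
  have htaylor (h : Euc N) : l h ^ 2 ≤
      (1 + ε) * (w (x + h) - w x) ^ 2 + (1 + 1 / ε) * M ^ 2 * ‖h‖ ^ 4 := by
    have hrem := hw.norm_sub_sub_fderiv_le x (x + h)
    rw [add_sub_cancel_left, Real.norm_eq_abs, abs_sub_comm] at hrem
    have hrem2 : (l h - (w (x + h) - w x)) ^ 2 ≤ M ^ 2 * ‖h‖ ^ 4 := by
      rw [← sq_abs]
      exact (pow_le_pow_left₀ (abs_nonneg _) hrem 2).trans_eq (by ring)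
    calc l h ^ 2 = ((w (x + h) - w x) + (l h - (w (x + h) - w x))) ^ 2 := by ring
      _ ≤ (1 + ε) * (w (x + h) - w x) ^ 2 + (1 + 1 / ε) * (M ^ 2 * ‖h‖ ^ 4) :=
        (add_sq_le_mul_add_mul _ _ hε).trans (by gcongr)
      _ = _ := by rw [mul_assoc _ (M ^ 2)]
  calc ENNReal.ofReal (nearConst N s δ) * ENNReal.ofReal (‖l‖ ^ 2)
      = ∫⁻ h in Metric.ball (0 : Euc N) δ, ENNReal.ofReal (l h ^ 2 / ‖h‖ ^ p) :=
        (setLIntegral_ball_sq_div_norm_rpow hs hδ l).symm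
    _ ≤ ∫⁻ h in Metric.ball (0 : Euc N) δ,
          (ENNReal.ofReal (1 + ε) * gagliardo s w (x, x + h) +
          ENNReal.ofReal ((1 + 1 / ε) * M ^ 2) * ENNReal.ofReal (‖h‖ ^ 4 / ‖h‖ ^ p)) := by
        refine lintegral_mono fun h => ?_
        rw [gagliardo_self_add, ← ENNReal.ofReal_mul (by positivity),
          ← ENNReal.ofReal_mul (by positivity), ← ENNReal.ofReal_add (by positivity)
          (by positivity), ← mul_div_assoc, ← mul_div_assoc, ← add_div]
        gcongr
        exact htaylor h
    _ ≤ _ := by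
        rw [lintegral_add_right _ (by fun_prop), lintegral_const_mul _ hg,
          lintegral_const_mul _ (by fun_prop), ENNReal.ofReal_mul (p := (1 + 1 / ε) * M ^ 2)
          (by positivity)]
        gcongr
        exact setLIntegral_ball_norm_pow_four_div_le hs hδ

theorem C11Bound.ofReal_nearConst_mul_setLIntegral_norm_fderiv_sq_le (hw : C11Bound w M)
    (hs : s < 1) (hδ : 0 < δ) (hε : 0 < ε) {S : Set (Euc N)} (hS : MeasurableSet S) :
    ENNReal.ofReal (nearConst N s δ) * (∫⁻ x in S, ENNReal.ofReal (‖fderiv ℝ w x‖ ^ 2)) ≤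
      ENNReal.ofReal (1 + ε) *
        (∫⁻ q in {q | q.1 ∈ S ∧ q.2 - q.1 ∈ Metric.ball 0 δ}, gagliardo s w q) +
        ENNReal.ofReal ((1 + 1 / ε) * M ^ 2 * (δ ^ 2 * (N * nearConst N s δ))) * volume S := by
  have := hw.continuous_fderiv
  have hg := measurable_gagliardo s hw.continuous.measurable
  rw [setLIntegral_fst_mem_sub_mem hS measurableSet_ball hg, ← lintegral_const_mul _ (by fun_prop)]
  refine (lintegral_mono fun x =>
    hw.ofReal_nearConst_mul_norm_fderiv_sq_le hs hδ hε x).trans_eq ?_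
  rw [lintegral_add_right _ measurable_const, lintegral_const_mul _, setLIntegral_const]
  have hshear : Measurable fun z : Euc N × Euc N => gagliardo s w (z.1, z.1 + z.2) :=
    hg.comp (by fun_prop)
  exact hshear.lintegral_prod_right'

end LowerBound

section LowerBound

variable {N : ℕ} {Ω : Set (Euc N)} {s δ r B ε η : ℝ} {u : Euc N → ℝ}

theorem setLIntegral_erosion_norm_fderiv_mollify_sq_le [NeZero N]
    {φ : ContDiffBump (0 : Euc N)} (hφ : C11Bound (φ.normed volume) B) (hΩ : IsOpen Ω)
    (hbdd : IsBounded Ω) (hum : Measurable u) (hu2 : l2sq N Ω u < ⊤) (hs : s < 1) (hδ : 0 < δ)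
    (hr : φ.rOut + δ ≤ r) (hε : 0 < ε) :
    ∫⁻ x in erosion Ω r, ENNReal.ofReal (‖fderiv ℝ (mollify Ω (φ.normed volume) u) x‖ ^ 2) ≤
      ENNReal.ofReal ((1 + ε) / nearConst N s δ) * semiSqOn N s Ω u +
        ENNReal.ofReal ((1 + 1 / ε) * N * (B * volume.real Ω) ^ 2 * δ ^ 2) * l2sq N Ω u := by
  have hu := integrableOn_of_l2sq_lt_top hbdd hum hu2
  have hn := nearConst_pos N hs hδ
  have hVfin := hbdd.measure_lt_top (μ := volume)
  have hvol : volume (erosion Ω r) ≤ ENNReal.ofReal (volume.real Ω) := by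
    rw [ofReal_measureReal hVfin.ne]
    exact measure_mono (erosion_subset (by linarith [φ.rOut_pos]))
  have hmass : ENNReal.ofReal ((∫ y in Ω, |u y|) ^ 2) ≤
      ENNReal.ofReal (volume.real Ω) * l2sq N Ω u := by
    rw [ofReal_measureReal hVfin.ne]
    exact ofReal_sq_integral_abs_le_l2sq hum
  have hmain := (hφ.mollify hu).ofReal_nearConst_mul_setLIntegral_norm_fderiv_sq_le hs hδ hε
    (isClosed_erosion Ω r).measurableSet
  have hsemi : ENNReal.ofReal (1 + ε) =
      ENNReal.ofReal (nearConst N s δ) * ENNReal.ofReal ((1 + ε) / nearConst N s δ) := by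
    rw [← ENNReal.ofReal_mul hn.le, mul_div_cancel₀ _ hn.ne']
  have hl2 : ENNReal.ofReal ((1 + 1 / ε) * N * (B * volume.real Ω) ^ 2 * δ ^ 2) =
      ENNReal.ofReal ((1 + 1 / ε) * N * B ^ 2 * δ ^ 2) * ENNReal.ofReal (volume.real Ω) ^ 2 := by
    rw [← ENNReal.ofReal_pow measureReal_nonneg, ← ENNReal.ofReal_mul (by positivity)]
    ring_nf
  refine (ENNReal.mul_le_mul_iff_right (ENNReal.ofReal_pos.2 hn).ne' ENNReal.ofReal_ne_top).1 ?_
  calc ENNReal.ofReal (nearConst N s δ) *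
        ∫⁻ x in erosion Ω r, ENNReal.ofReal (‖fderiv ℝ (mollify Ω (φ.normed volume) u) x‖ ^ 2)
      ≤ ENNReal.ofReal (1 + ε) * semiSqOn N s Ω u +
          ENNReal.ofReal (nearConst N s δ * ((1 + 1 / ε) * N * B ^ 2 * δ ^ 2)) *
            (ENNReal.ofReal (volume.real Ω) * l2sq N Ω u) * ENNReal.ofReal (volume.real Ω) := by
        refine hmain.trans (add_le_add (mul_le_mul_right
          (setLIntegral_gagliardo_mollify_le φ hΩ.measurableSet hum hu s hr) _) ?_)
        rw [show (1 + 1 / ε) * (B * ∫ y in Ω, |u y|) ^ 2 * (δ ^ 2 * (N * nearConst N s δ)) =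
          nearConst N s δ * ((1 + 1 / ε) * N * B ^ 2 * δ ^ 2) * (∫ y in Ω, |u y|) ^ 2 by ring,
          ENNReal.ofReal_mul (by positivity)]
        gcongr
    _ = ENNReal.ofReal (nearConst N s δ) *
          (ENNReal.ofReal ((1 + ε) / nearConst N s δ) * semiSqOn N s Ω u +
            ENNReal.ofReal ((1 + 1 / ε) * N * (B * volume.real Ω) ^ 2 * δ ^ 2) * l2sq N Ω u) := by
        rw [hsemi, hl2, ENNReal.ofReal_mul hn.le]
        ring

theorem eventually_setLIntegral_erosion_norm_fderiv_mollify_sq_le [NeZero N]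
    (φ : ContDiffBump (0 : Euc N)) (hΩ : IsOpen Ω) (hbdd : IsBounded Ω) (hr : φ.rOut < r)
    (hη : 0 < η) :
    ∀ᶠ s in 𝓝[<] (1 : ℝ), ∀ u : Euc N → ℝ, Measurable u → l2sq N Ω u < ⊤ →
      ∫⁻ x in erosion Ω r, ENNReal.ofReal (‖fderiv ℝ (mollify Ω (φ.normed volume) u) x‖ ^ 2) ≤
        ENNReal.ofReal (1 + η) * (ENNReal.ofReal (cNs N s / 2) * semiSqOn N s Ω u) +
          ENNReal.ofReal η * l2sq N Ω u := by
  obtain ⟨B, hB⟩ := exists_c11Bound_normed φ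
  set C := (1 + 1 / (η / 2)) * N * (B * volume.real Ω) ^ 2
  have hsmall : ∀ᶠ δ in 𝓝[>] (0 : ℝ), C * δ ^ 2 < η := by
    have hlim : Tendsto (fun δ : ℝ => C * δ ^ 2) (𝓝 0) (𝓝 (C * 0 ^ 2)) :=
      Continuous.tendsto (by fun_prop) 0
    exact (hlim.mono_left nhdsWithin_le_nhds).eventually_lt_const (by simpa using hη)
  obtain ⟨δ, hδC, hδ, hδr⟩ := (hsmall.and (Ioc_mem_nhdsGT (sub_pos.2 hr))).exists
  have hlt : (1 + η / 2) / (1 + η) < 1 := by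
    rw [div_lt_one (by positivity)]
    linarith
  filter_upwards [(tendsto_cNs_mul_nearConst N hδ).eventually_const_lt hlt,
    Ioo_mem_nhdsLT zero_lt_one] with s hs ⟨hs0, hs1⟩ u hum hu2
  have hn := nearConst_pos N hs1 hδ
  have hc := cNs_pos N hs0 hs1
  refine (setLIntegral_erosion_norm_fderiv_mollify_sq_le hB hΩ hbdd hum hu2 hs1 hδ
    (by linarith) (half_pos hη)).trans ?_
  rw [← mul_assoc, ← ENNReal.ofReal_mul (by positivity)]
  gcongr
  rw [div_lt_iff₀ (by positivity)] at hs
  rw [div_le_iff₀ hn]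
  linarith

end LowerBound

section WeakGradient

variable {N : ℕ} {Ω : Set (Euc N)} {r : ℝ} {u : Euc N → ℝ} {g : Euc N → Euc N}

theorem tsupport_normed_const_sub_subset {φ : ContDiffBump (0 : Euc N)} (x : Euc N) :
    tsupport (fun y => φ.normed volume (x - y)) ⊆ Metric.closedBall x φ.rOut := by
  refine closure_minimal (fun y hy => ?_) Metric.isClosed_closedBall
  have hxy : x - y ∈ Function.support (φ.normed volume) := hy
  rw [φ.support_normed_eq, mem_ball_zero_iff] at hxy
  rw [mem_closedBall_iff_norm']
  exact hxy.le

theorem IsWeakGradient.setIntegral_mul_fderiv_normed {φ : ContDiffBump (0 : Euc N)}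
    (hg : IsWeakGradient N Ω u g) (hr : φ.rOut < r) {x : Euc N} (hx : x ∈ erosion Ω r)
    (i : Fin N) :
    ∫ y in Ω, u y * fderiv ℝ (φ.normed volume) (x - y) (EuclideanSpace.single i 1) =
      ∫ y in Ω, φ.normed volume (x - y) * g y i := by
  have hderiv (y : Euc N) : fderiv ℝ (fun y => φ.normed volume (x - y)) y =
      -fderiv ℝ (φ.normed volume) (x - y) := by
    have hφ := ((φ.contDiff_normed (n := 1) (μ := volume)).differentiable one_ne_zero
      (x - y)).hasFDerivAt
    have hsub : HasFDerivAt (fun y => x - y) (-ContinuousLinearMap.id ℝ (Euc N)) y :=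
      (hasFDerivAt_id y).const_sub x
    ext v
    simp [HasFDerivAt.fderiv (f := fun y => φ.normed volume (x - y)) (hφ.comp y hsub)]
  have hsupp := tsupport_normed_const_sub_subset (φ := φ) x
  have hparts := hg.2.2 (fun y => φ.normed volume (x - y))
    (φ.contDiff_normed.comp (contDiff_const.sub contDiff_id))
    ((isCompact_closedBall x φ.rOut).of_isClosed_subset (isClosed_tsupport _) hsupp)
    (hsupp.trans ((Metric.closedBall_subset_ball hr).trans hx)) i
  simpa only [hderiv, neg_apply, mul_neg, integral_neg, neg_inj,
    mul_comm (g _ i)] using hparts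

theorem IsWeakGradient.integrableOn (hg : IsWeakGradient N Ω u g) (hbdd : IsBounded Ω) :
    IntegrableOn g Ω :=
  (integrable_norm_iff hg.1.aestronglyMeasurable).1
    (integrableOn_of_l2sq_lt_top hbdd hg.1.norm hg.2.1)

theorem IsWeakGradient.fderiv_mollify (φ : ContDiffBump (0 : Euc N))
    (hg : IsWeakGradient N Ω u g) (hbdd : IsBounded Ω) (hu : IntegrableOn u Ω) (hr : φ.rOut < r)
    {x : Euc N} (hx : x ∈ erosion Ω r) :
    fderiv ℝ (mollify Ω (φ.normed volume) u) x =
      innerSL ℝ (mollify Ω (φ.normed volume) g x) := by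
  obtain ⟨B, hB⟩ := exists_c11Bound_normed φ
  have hint := integrableOn_comp_sub_left_smul hB.continuous hB.norm_le (hg.integrableOn hbdd) x
  apply ContinuousLinearMap.coe_injective
  refine (EuclideanSpace.basisFun (Fin N) ℝ).toBasis.ext fun i => ?_
  simp only [OrthonormalBasis.coe_toBasis, EuclideanSpace.basisFun_apply,
    ContinuousLinearMap.coe_coe, innerSL_apply_apply, EuclideanSpace.inner_single_right, mollify,
    hB.fderiv_mollify hu, ContinuousLinearMap.integral_apply (hB.integrable_smul_fderiv hu x)]
  have hcoord : (∫ y in Ω, φ.normed volume (x - y) • g y) i =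
      ∫ y in Ω, φ.normed volume (x - y) * g y i :=
    ((EuclideanSpace.proj i : Euc N →L[ℝ] ℝ).integral_comp_comm hint).symm
  simpa [hcoord] using hg.setIntegral_mul_fderiv_normed hr hx i

theorem setLIntegral_erosion_norm_fderiv_mollify_sq_le_gradSq (φ : ContDiffBump (0 : Euc N))
    (hΩ : IsOpen Ω) (hbdd : IsBounded Ω) (hu : IntegrableOn u Ω) (hr : φ.rOut < r) :
    ∫⁻ x in erosion Ω r, ENNReal.ofReal (‖fderiv ℝ (mollify Ω (φ.normed volume) u) x‖ ^ 2) ≤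
      gradSq N Ω u := by
  refine le_iInf₂ fun g hg => ?_
  calc ∫⁻ x in erosion Ω r, ENNReal.ofReal (‖fderiv ℝ (mollify Ω (φ.normed volume) u) x‖ ^ 2)
      = ∫⁻ x in erosion Ω r, ‖mollify Ω (φ.normed volume) g x‖ₑ ^ 2 :=
        setLIntegral_congr_fun (isClosed_erosion Ω r).measurableSet fun x hx => by
          simp only [hg.fderiv_mollify φ hbdd hu hr hx, innerSL_apply_norm, ofReal_norm_sq]
    _ ≤ ∫⁻ x in Ω, ‖g x‖ₑ ^ 2 :=
        (setLIntegral_le_lintegral _ _).trans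
          (lintegral_enorm_mollify_sq_le φ hΩ.measurableSet hg.1.enorm)
    _ = ∫⁻ x in Ω, ENNReal.ofReal (‖g x‖ ^ 2) := by simp only [ofReal_norm_sq]

end WeakGradient

theorem mul_rpow_add_two_mul_le {a t s : ℝ} (ha : 0 ≤ a) (ht : 0 < t) (ht1 : t ≤ 1)
    (hs : 1 / 2 ≤ s) (hs1 : s ≤ 1) (N : ℕ) :
    (a * t) ^ (N + 2 * s) ≤ max 1 a ^ (N + 2 : ℝ) * (t ^ N * t) := by
  rw [Real.mul_rpow ha ht.le]
  refine mul_le_mul ?_ ?_ (by positivity) (by positivity)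
  · calc a ^ (N + 2 * s) ≤ max 1 a ^ (N + 2 * s) :=
          Real.rpow_le_rpow ha (le_max_right _ _) (by positivity)
      _ ≤ max 1 a ^ (N + 2 : ℝ) :=
          Real.rpow_le_rpow_of_exponent_le (le_max_left _ _) (by linarith)
  · rw [Real.rpow_add ht, Real.rpow_natCast]
    refine mul_le_mul_of_nonneg_left ?_ (by positivity)
    exact (Real.rpow_le_rpow_of_exponent_ge ht ht1 (by linarith)).trans_eq (Real.rpow_one t)

theorem eventually_one_sub_le_mul_cNs (N : ℕ) [NeZero N] :
    ∀ᶠ s in 𝓝[<] (1 : ℝ), 1 - s ≤ volume.real (Metric.ball (0 : Euc N) 1) * cNs N s := by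
  have hV : 0 < volume.real (Metric.ball (0 : Euc N) 1) :=
    ENNReal.toReal_pos (Metric.measure_ball_pos _ _ one_pos).ne' measure_ball_lt_top.ne
  have hlt : 1 / volume.real (Metric.ball (0 : Euc N) 1) <
      4 / volume.real (Metric.ball (0 : Euc N) 1) := by gcongr; norm_num
  filter_upwards [(tendsto_cNs_div_one_sub N).eventually_const_lt hlt, self_mem_nhdsWithin]
    with s hs hs1
  rw [div_lt_div_iff₀ hV (sub_pos.2 hs1)] at hs
  linarith

theorem l2sq_sub_comm {N : ℕ} {Ω : Set (Euc N)} (u v : Euc N → ℝ) :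
    l2sq N Ω (u - v) = l2sq N Ω (v - u) := by
  simp only [l2sq, Pi.sub_apply, sub_sq_comm]

namespace InwardField

section Smoothing

variable {E : Type*} [NormedAddCommGroup E] [NormedSpace ℝ E] {Ω : Set E} {t : ℝ}

theorem add_smul_mem_erosion (X : InwardField Ω) (ht : 0 < t) (htm : t ≤ X.maxTime) {x : E}
    (hx : x ∈ closure Ω) : x + t • X x ∈ erosion Ω (X.speed * t) :=
  X.ball_subset ht htm hx

/-- The mollifier used at time `t`. Its radius is half the depth `speed * t` that the field has
reached by then. -/
def bump (X : InwardField Ω) (ht : 0 < t) : ContDiffBump (0 : E) where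
  rIn := X.speed * t / 4
  rOut := X.speed * t / 2
  rIn_pos := by have := mul_pos X.speed_pos ht; positivity
  rIn_lt_rOut := by linarith [mul_pos X.speed_pos ht]

theorem bump_rOut_lt (X : InwardField Ω) (ht : 0 < t) : (X.bump ht).rOut < X.speed * t :=
  half_lt_self (mul_pos X.speed_pos ht)

variable [FiniteDimensional ℝ E] [MeasureSpace E]

/-- The smoothing operator `T_t u = (ρ_t * u)(x + t X(x))`: moving inwards before averaging makes
the result depend on `u|_Ω` only while being smooth on the whole space. -/
def smoothing (X : InwardField Ω) (ht : 0 < t) (u : E → ℝ) (x : E) : ℝ :=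
  mollify Ω ((X.bump ht).normed volume) u (x + t • X x)

variable (X : InwardField Ω)

theorem smoothing_smul (ht : 0 < t) (a : ℝ) (u : E → ℝ) :
    X.smoothing ht (a • u) = a • X.smoothing ht u :=
  funext fun _ => mollify_smul a u _

variable [BorelSpace E] [(volume : Measure E).IsAddHaarMeasure]

theorem smoothing_add (ht : 0 < t) {u v : E → ℝ} (hu : IntegrableOn u Ω)
    (hv : IntegrableOn v Ω) : X.smoothing ht (u + v) = X.smoothing ht u + X.smoothing ht v :=
  funext fun _ => mollify_add (X.bump ht).continuous_normed (norm_normed_le _) hu hv _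

theorem exists_c11Bound_smoothing (ht : 0 < t) (ht1 : t ≤ 1) :
    ∃ K : ℝ, ∀ u, IntegrableOn u Ω → C11Bound (X.smoothing ht u) (K * ∫ y in Ω, |u y|) := by
  obtain ⟨B, hB⟩ := exists_c11Bound_normed (X.bump ht)
  refine ⟨B * ((1 + X.bound) ^ 2 + X.bound), fun u hu => ?_⟩
  rw [mul_right_comm]
  exact (hB.mollify hu).comp_add_smul X.c11Bound ht.le ht1

theorem continuous_smoothing (ht : 0 < t) (ht1 : t ≤ 1) {u : E → ℝ} (hu : IntegrableOn u Ω) :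
    Continuous (X.smoothing ht u) :=
  (((X.exists_c11Bound_smoothing ht ht1).choose_spec) u hu).continuous

theorem setLIntegral_comp_shift_le (hΩ : IsOpen Ω) (ht : 0 < t) (htm : t ≤ X.maxTime)
    {F : E → ℝ≥0∞} (hF : Measurable F) :
    ∫⁻ x in Ω, F (x + t • X x) ≤ X.volumeFactor t * ∫⁻ x in erosion Ω (X.speed * t), F x := by
  have hmeas := (isClosed_erosion Ω (X.speed * t)).measurableSet
  calc ∫⁻ x in Ω, F (x + t • X x)
      = ∫⁻ x in Ω, (erosion Ω (X.speed * t)).indicator F (x + t • X x) :=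
        setLIntegral_congr_fun hΩ.measurableSet fun x hx =>
          (indicator_of_mem (X.add_smul_mem_erosion ht htm (subset_closure hx)) F).symm
    _ ≤ ∫⁻ x, (erosion Ω (X.speed * t)).indicator F (x + t • X x) := setLIntegral_le_lintegral _ _
    _ ≤ X.volumeFactor t * ∫⁻ x, (erosion Ω (X.speed * t)).indicator F x :=
        X.lintegral_comp_shift_le ht.le htm (hF.indicator hmeas)
    _ = X.volumeFactor t * ∫⁻ x in erosion Ω (X.speed * t), F x := by
        rw [lintegral_indicator hmeas]

theorem setLIntegral_norm_fderiv_smoothing_sq_le (hΩ : IsOpen Ω) (ht : 0 < t)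
    (htm : t ≤ X.maxTime) {u : E → ℝ} (hu : IntegrableOn u Ω) :
    ∫⁻ x in Ω, ENNReal.ofReal (‖fderiv ℝ (X.smoothing ht u) x‖ ^ 2) ≤
      ENNReal.ofReal ((1 + t * X.bound) ^ 2) * X.volumeFactor t *
        ∫⁻ x in erosion Ω (X.speed * t),
          ENNReal.ofReal (‖fderiv ℝ (mollify Ω ((X.bump ht).normed volume) u) x‖ ^ 2) := by
  obtain ⟨B, hB⟩ := exists_c11Bound_normed (X.bump ht)
  have hm := hB.mollify hu
  set w := mollify Ω ((X.bump ht).normed volume) u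
  have hmeas : Measurable fun x => ENNReal.ofReal (‖fderiv ℝ w x‖ ^ 2) := by
    have := hm.continuous_fderiv
    fun_prop
  calc ∫⁻ x in Ω, ENNReal.ofReal (‖fderiv ℝ (X.smoothing ht u) x‖ ^ 2)
      ≤ ∫⁻ x in Ω, ENNReal.ofReal ((1 + t * X.bound) ^ 2) *
          ENNReal.ofReal (‖fderiv ℝ w (x + t • X x)‖ ^ 2) := by
        refine lintegral_mono fun x => ?_
        rw [← ENNReal.ofReal_mul (sq_nonneg _), mul_comm, ← mul_pow]
        exact ENNReal.ofReal_le_ofReal (pow_le_pow_left₀ (norm_nonneg _)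
          (C11Bound.norm_fderiv_comp_add_smul_le hm.differentiable X.c11Bound ht.le x) 2)
    _ = ENNReal.ofReal ((1 + t * X.bound) ^ 2) *
          ∫⁻ x in Ω, ENNReal.ofReal (‖fderiv ℝ w (x + t • X x)‖ ^ 2) :=
        lintegral_const_mul' _ _ ENNReal.ofReal_ne_top
    _ ≤ _ := by
        rw [mul_assoc]
        exact mul_le_mul_right (X.setLIntegral_comp_shift_le hΩ ht htm hmeas) _

theorem integral_bump_normed_sub (ht : 0 < t) (htm : t ≤ X.maxTime) {x : E}
    (hx : x ∈ closure Ω) : ∫ y in Ω, (X.bump ht).normed volume (x + t • X x - y) = 1 := by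
  rw [setIntegral_eq_integral_of_forall_compl_eq_zero fun y hy => ?_,
    integral_sub_left_eq_self _ volume, (X.bump ht).integral_normed]
  rw [← Function.notMem_support, (X.bump ht).support_normed_eq, mem_ball_zero_iff, not_lt]
  by_contra! hlt
  refine hy (X.ball_subset ht htm hx ?_)
  rw [mem_ball_iff_norm']
  exact hlt.trans (X.bump_rOut_lt ht)

theorem smoothing_sub_eq_mollify (ht : 0 < t) (htm : t ≤ X.maxTime) {u : E → ℝ}
    (hu : IntegrableOn u Ω) {x : E} (hx : x ∈ closure Ω) :
    X.smoothing ht u x - u x = mollify Ω ((X.bump ht).normed volume) (u · - u x) (x + t • X x) := by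
  have hint := integrableOn_comp_sub_left_smul (X.bump ht).continuous_normed
    (norm_normed_le (X.bump ht)) hu (x + t • X x)
  have hone := X.integral_bump_normed_sub ht htm hx
  have hconst : IntegrableOn (fun y => (X.bump ht).normed volume (x + t • X x - y) • u x) Ω :=
    ((Integrable.of_integral_ne_zero (hone ▸ one_ne_zero)).smul_const _)
  simp only [mollify, smul_sub]
  rw [integral_sub hint hconst, integral_smul_const, hone, one_smul]
  rfl

theorem norm_sub_lt_of_normed_ne_zero (ht : 0 < t) {x y : E}
    (h : (X.bump ht).normed volume (x + t • X x - y) ≠ 0) :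
    ‖y - x‖ < (X.bound + X.speed) * t := by
  rw [← Function.mem_support, (X.bump ht).support_normed_eq, mem_ball_zero_iff, norm_sub_rev] at h
  calc ‖y - x‖ = ‖y - (x + t • X x) + t • X x‖ := by congr 1; abel
    _ ≤ ‖y - (x + t • X x)‖ + ‖t • X x‖ := norm_add_le _ _
    _ < X.speed * t + t * X.bound := by
        rw [norm_smul, Real.norm_of_nonneg ht.le]
        exact add_lt_add_of_lt_of_le (h.trans (X.bump_rOut_lt ht))
          (mul_le_mul_of_nonneg_left (X.c11Bound.norm_le x) ht.le)
    _ = (X.bound + X.speed) * t := by ring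

theorem abs_smoothing_sub_le (ht : 0 < t) (htm : t ≤ X.maxTime) {u : E → ℝ}
    (hu : IntegrableOn u Ω) {x : E} (hx : x ∈ closure Ω) {ε : ℝ}
    (hε : ∀ y, ‖y - x‖ < (X.bound + X.speed) * t → |u y - u x| ≤ ε) :
    |X.smoothing ht u x - u x| ≤ ε := by
  have hone := X.integral_bump_normed_sub ht htm hx
  have hint := Integrable.of_integral_ne_zero (hone ▸ one_ne_zero)
  rw [X.smoothing_sub_eq_mollify ht htm hu hx, ← Real.norm_eq_abs]
  calc ‖mollify Ω ((X.bump ht).normed volume) (u · - u x) (x + t • X x)‖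
      ≤ ∫ y in Ω, (X.bump ht).normed volume (x + t • X x - y) * ε := by
        refine norm_integral_le_of_norm_le (hint.mul_const ε) (Eventually.of_forall fun y => ?_)
        rw [norm_smul, Real.norm_of_nonneg ((X.bump ht).nonneg_normed _), Real.norm_eq_abs]
        rcases eq_or_ne ((X.bump ht).normed volume (x + t • X x - y)) 0 with h0 | h0
        · simp [h0]
        · exact mul_le_mul_of_nonneg_left (hε y (X.norm_sub_lt_of_normed_ne_zero ht h0))
            ((X.bump ht).nonneg_normed _)
    _ = ε := by rw [integral_mul_const, hone, one_mul]

theorem enorm_smoothing_sub_sq_le (hΩ : IsOpen Ω) (ht : 0 < t) (htm : t ≤ X.maxTime) {u : E → ℝ}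
    (hum : Measurable u) (hu : IntegrableOn u Ω) {x : E} (hx : x ∈ Ω) :
    ‖X.smoothing ht u x - u x‖ₑ ^ 2 ≤
      ENNReal.ofReal (1 / volume.real (Metric.closedBall (0 : E) (X.speed * t / 4))) *
        ∫⁻ y, (X.coneRegion t (X.speed / 2)).indicator (sqDiff u) (x, y) := by
  set ρ := (X.bump ht).normed volume with hρ
  have hcone (z : E) (hz : ρ z ≠ 0) :
      (x, x + t • X x - z) ∈ X.coneRegion t (X.speed / 2) := by
    rw [← Function.mem_support, hρ, (X.bump ht).support_normed_eq, mem_ball_zero_iff] at hz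
    refine ⟨hx, ?_⟩
    rw [show x + t • X x - z - x - t • X x = -z by abel, norm_neg]
    exact hz.trans_eq (mul_div_right_comm _ _ _)
  rw [X.smoothing_sub_eq_mollify ht htm hu (subset_closure hx)]
  calc ‖mollify Ω ρ (u · - u x) (x + t • X x)‖ₑ ^ 2
      ≤ ∫⁻ z, ‖ρ z‖ₑ * Ω.indicator (‖u · - u x‖ₑ ^ 2) (x + t • X x - z) :=
        enorm_mollify_sq_le _ hΩ.measurableSet (by fun_prop) _
    _ ≤ ∫⁻ z, ENNReal.ofReal (1 / volume.real (Metric.closedBall (0 : E) (X.speed * t / 4))) *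
          (X.coneRegion t (X.speed / 2)).indicator (sqDiff u) (x, x + t • X x - z) := by
        refine lintegral_mono fun z => ?_
        rcases eq_or_ne (ρ z) 0 with h0 | h0
        · simp [h0]
        · rw [indicator_of_mem (hcone z h0), sqDiff, ofReal_sq, ← enorm_neg (u x - _), neg_sub,
            ← ofReal_norm]
          exact mul_le_mul' (ENNReal.ofReal_le_ofReal (norm_normed_le _ z))
            (indicator_le_self _ _ _)
    _ = _ := by
        rw [lintegral_const_mul' _ _ ENNReal.ofReal_ne_top, lintegral_sub_left_eq_self
          (fun y => (X.coneRegion t (X.speed / 2)).indicator (sqDiff u) (x, y))]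

end Smoothing

section Approximation

variable {N : ℕ} {Ω : Set (Euc N)} {s t η : ℝ} {u : Euc N → ℝ} (X : InwardField Ω)

theorem l2sq_smoothing_le (hΩ : IsOpen Ω) (ht : 0 < t) (htm : t ≤ X.maxTime) (hum : Measurable u)
    (hu : IntegrableOn u Ω) : l2sq N Ω (X.smoothing ht u) ≤ X.volumeFactor t * l2sq N Ω u := by
  obtain ⟨B, hB⟩ := exists_c11Bound_normed (X.bump ht)
  have hcont := (hB.mollify hu).continuous
  unfold l2sq
  simp only [ofReal_sq]
  calc ∫⁻ x in Ω, ‖X.smoothing ht u x‖ₑ ^ 2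
      ≤ ∫⁻ x, ‖mollify Ω ((X.bump ht).normed volume) u (x + t • X x)‖ₑ ^ 2 :=
        setLIntegral_le_lintegral _ _
    _ ≤ X.volumeFactor t * ∫⁻ x, ‖mollify Ω ((X.bump ht).normed volume) u x‖ₑ ^ 2 :=
        X.lintegral_comp_shift_le ht.le htm (by fun_prop)
    _ ≤ X.volumeFactor t * ∫⁻ x in Ω, ‖u x‖ₑ ^ 2 :=
        mul_le_mul_right (lintegral_enorm_mollify_sq_le _ hΩ.measurableSet (by fun_prop)) _

theorem l2sq_smoothing_sub_le_lintegral_coneRegion (hΩ : IsOpen Ω) (ht : 0 < t)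
    (htm : t ≤ X.maxTime) (hum : Measurable u) (hu : IntegrableOn u Ω) :
    l2sq N Ω (fun x => X.smoothing ht u x - u x) ≤
      ENNReal.ofReal (1 / volume.real (Metric.closedBall (0 : Euc N) (X.speed * t / 4))) *
        ∫⁻ q in X.coneRegion t (X.speed / 2), sqDiff u q := by
  have hcone := X.measurableSet_coneRegion hΩ t (X.speed / 2)
  have hmeas := (measurable_sqDiff hum).indicator hcone
  unfold l2sq
  simp only [ofReal_sq]
  calc ∫⁻ x in Ω, ‖X.smoothing ht u x - u x‖ₑ ^ 2
      ≤ ∫⁻ x in Ω, ENNReal.ofReal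
          (1 / volume.real (Metric.closedBall (0 : Euc N) (X.speed * t / 4))) *
            ∫⁻ y, (X.coneRegion t (X.speed / 2)).indicator (sqDiff u) (x, y) :=
        setLIntegral_mono' hΩ.measurableSet fun x hx =>
          X.enorm_smoothing_sub_sq_le hΩ ht htm hum hu hx
    _ ≤ ENNReal.ofReal (1 / volume.real (Metric.closedBall (0 : Euc N) (X.speed * t / 4))) *
          ∫⁻ x, ∫⁻ y, (X.coneRegion t (X.speed / 2)).indicator (sqDiff u) (x, y) := by
        rw [lintegral_const_mul' _ _ ENNReal.ofReal_ne_top]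
        exact mul_le_mul_right (setLIntegral_le_lintegral _ _) _
    _ = _ := by
        rw [← lintegral_indicator hcone, Measure.volume_eq_prod,
          lintegral_prod _ hmeas.aemeasurable]

theorem exists_eventually_l2sq_smoothing_sub_le [NeZero N] (hΩ : IsOpen Ω) : ∃ C : ℝ, 0 < C ∧
    ∀ᶠ s in 𝓝[<] (1 : ℝ), ∀ t (ht : 0 < t), t ≤ X.maxTime → ∀ u, Measurable u →
      IntegrableOn u Ω → l2sq N Ω (fun x => X.smoothing ht u x - u x) ≤
        ENNReal.ofReal (C * t) * (ENNReal.ofReal (cNs N s / 2) * semiSqOn N s Ω u) := by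
  have hX := X.speed_pos
  have hL := X.bound_pos
  set V := volume.real (Metric.ball (0 : Euc N) 1)
  have hV : 0 < V :=
    ENNReal.toReal_pos (Metric.measure_ball_pos _ _ one_pos).ne' measure_ball_lt_top.ne
  set K := max 1 (X.bound + X.speed) ^ (N + 2 : ℝ)
  refine ⟨8 * K / (X.speed / 4) ^ N, by positivity, ?_⟩
  filter_upwards [eventually_one_sub_le_mul_cNs N, Ico_mem_nhdsLT one_half_lt_one]
    with s hcNs hs t ht htm u hum hu
  have hcNs0 := (cNs_pos N (one_half_pos.trans_le hs.1) hs.2).le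
  have hball : volume.real (Metric.closedBall (0 : Euc N) (X.speed * t / 4)) =
      (X.speed / 4) ^ N * V * t ^ N := by
    rw [measureReal_def, Measure.addHaar_closedBall _ _ (by positivity), ENNReal.toReal_mul,
      ENNReal.toReal_ofReal (by positivity), finrank_euclideanSpace_fin, ← measureReal_def]
    ring
  refine (X.l2sq_smoothing_sub_le_lintegral_coneRegion hΩ ht htm hum hu).trans
    ((mul_le_mul_right (X.lintegral_coneRegion_le hΩ hum ht htm hs.1 hs.2) _).trans ?_)
  rw [← mul_assoc, ← mul_assoc, ← ENNReal.ofReal_mul (by positivity),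
    ← ENNReal.ofReal_mul (by positivity), hball]
  refine mul_le_mul_left (ENNReal.ofReal_le_ofReal ?_) _
  calc 1 / ((X.speed / 4) ^ N * V * t ^ N) *
        (4 * (1 - s) * ((X.bound + X.speed) * t) ^ (N + 2 * s))
      ≤ 1 / ((X.speed / 4) ^ N * V * t ^ N) * (4 * (V * cNs N s) * (K * (t ^ N * t))) := by
        gcongr
        exact mul_rpow_add_two_mul_le (by positivity) ht (htm.trans X.maxTime_le_one) hs.1 hs.2.le N
    _ = 8 * K / (X.speed / 4) ^ N * t * (cNs N s / 2) := by field_simp; ring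

theorem eventually_l2sq_smoothing_sub_le_of_hasCompactSupport (hΩ : IsOpen Ω) (hbdd : IsBounded Ω)
    {g : Euc N → ℝ} (hg : Continuous g) (hgc : HasCompactSupport g) (hη : 0 < η) :
    ∀ᶠ t in 𝓝[>] (0 : ℝ), ∀ ht : 0 < t,
      l2sq N Ω (fun x => X.smoothing ht g x - g x) ≤ ENNReal.ofReal η := by
  have hgi : IntegrableOn g Ω := (hg.integrable_of_hasCompactSupport hgc).integrableOn
  set V := volume.real Ω + 1
  have hV : 0 < V := by positivity
  have huc := hgc.uniformContinuous_of_continuous hg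
  obtain ⟨r, hr, hgr⟩ := Metric.uniformContinuous_iff.1 huc (√(η / V)) (by positivity)
  have hlim : Tendsto (fun t => (X.bound + X.speed) * t) (𝓝[>] 0) (𝓝 0) :=
    ((continuous_const_mul _).tendsto' _ _ (mul_zero _)).mono_left nhdsWithin_le_nhds
  filter_upwards [hlim.eventually_lt_const hr, Ioc_mem_nhdsGT X.maxTime_pos] with t htr htm ht
  have hle (x : Euc N) (hx : x ∈ Ω) : |X.smoothing ht g x - g x| ≤ √(η / V) :=
    X.abs_smoothing_sub_le ht htm.2 hgi (subset_closure hx) fun y hy =>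
      (hgr (mem_ball_iff_norm.2 (hy.trans htr))).le
  calc l2sq N Ω (fun x => X.smoothing ht g x - g x) ≤ ∫⁻ _ in Ω, ENNReal.ofReal (η / V) :=
        setLIntegral_mono' hΩ.measurableSet fun x hx => ENNReal.ofReal_le_ofReal
          (by simpa only [sq_abs] using (Real.le_sqrt (abs_nonneg _) (by positivity)).1 (hle x hx))
    _ = ENNReal.ofReal (η / V * volume.real Ω) := by
        rw [setLIntegral_const, ← ofReal_measureReal hbdd.measure_lt_top.ne,
          ← ENNReal.ofReal_mul (by positivity)]
    _ ≤ ENNReal.ofReal η := by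
        refine ENNReal.ofReal_le_ofReal ?_
        rw [div_mul_eq_mul_div, div_le_iff₀ hV]
        exact mul_le_mul_of_nonneg_left (le_add_of_nonneg_right zero_le_one) hη.le

theorem eventually_l2sq_smoothing_sub_le (hΩ : IsOpen Ω) (hbdd : IsBounded Ω)
    (hu : Measurable u) (hu2 : l2sq N Ω u < ⊤) (hη : 0 < η) :
    ∀ᶠ t in 𝓝[>] (0 : ℝ), ∀ ht : 0 < t,
      l2sq N Ω (fun x => X.smoothing ht u x - u x) ≤ ENNReal.ofReal η := by
  have hui := integrableOn_of_l2sq_lt_top hbdd hu hu2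
  set δ := √(η / 16)
  have hδ : 0 < δ := by positivity
  obtain ⟨g, hgc, hgd, hg, _⟩ := (memLp_two_of_l2sq_lt_top hu
    hu2).exists_hasCompactSupport_eLpNorm_sub_le (by norm_num) (ENNReal.ofReal_pos.2 hδ).ne'
  have hgi : IntegrableOn g Ω := (hg.integrable_of_hasCompactSupport hgc).integrableOn
  have hug : l2sq N Ω (u - g) ≤ ENNReal.ofReal (η / 16) := by
    rw [l2sq_eq_eLpNorm_sq, ← Real.sq_sqrt (show 0 ≤ η / 16 by positivity),
      ENNReal.ofReal_pow hδ.le]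
    exact pow_le_pow_left₀ zero_le hgd 2
  filter_upwards [X.eventually_l2sq_smoothing_sub_le_of_hasCompactSupport hΩ hbdd hg hgc
      (show 0 < η / 16 by positivity), Ioc_mem_nhdsGT X.maxTime_pos,
    X.tendsto_volumeFactor.eventually_lt_const ENNReal.one_lt_two] with t hTg htm hfac ht
  have hcont {v : Euc N → ℝ} (hv : IntegrableOn v Ω) : Measurable (X.smoothing ht v) :=
    (X.continuous_smoothing ht (htm.2.trans X.maxTime_le_one) hv).measurable
  have hTug : l2sq N Ω (X.smoothing ht (u - g)) ≤ 2 * ENNReal.ofReal (η / 16) :=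
    (X.l2sq_smoothing_le hΩ ht htm.2 (hu.sub hg.measurable) (hui.sub hgi)).trans
      (mul_le_mul' hfac.le hug)
  have hsplit : (fun x => X.smoothing ht u x - u x) = fun x => X.smoothing ht (u - g) x +
      ((X.smoothing ht g x - g x) + (g - u) x) := by
    funext x
    have := congrFun (X.smoothing_add ht (hui.sub hgi) hgi) x
    rw [sub_add_cancel, Pi.add_apply] at this
    rw [this, Pi.sub_apply]
    ring
  rw [hsplit]
  calc _ ≤ ENNReal.ofReal (1 + 1) * (2 * ENNReal.ofReal (η / 16)) + ENNReal.ofReal (1 + 1 / 1) *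
          (ENNReal.ofReal (1 + 1) * ENNReal.ofReal (η / 16) +
            ENNReal.ofReal (1 + 1 / 1) * ENNReal.ofReal (η / 16)) :=
        (l2sq_add_le (hcont (hui.sub hgi)) one_pos).trans (add_le_add (mul_le_mul_right hTug _)
          (mul_le_mul_right ((l2sq_add_le ((hcont hgi).sub hg.measurable) one_pos).trans
            (add_le_add (mul_le_mul_right (hTg ht) _)
              (mul_le_mul_right ((l2sq_sub_comm g u).trans_le hug) _))) _))
    _ = ENNReal.ofReal (12 * (η / 16)) := by
        rw [ENNReal.ofReal_mul (by norm_num), div_one, one_add_one_eq_two, ENNReal.ofReal_ofNat,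
          ENNReal.ofReal_ofNat]
        ring
    _ ≤ ENNReal.ofReal η := ENNReal.ofReal_le_ofReal (by linarith)

end Approximation

end InwardField

section FiniteDimensional

variable {𝕜 ι V : Type*} [NontriviallyNormedField 𝕜] [AddCommGroup V] [Module 𝕜 V] {l : Filter ι}

theorem eventually_forall_norm_le_mul_norm [CompleteSpace 𝕜] [FiniteDimensional 𝕜 V]
    {H H' : Type*} [NormedAddCommGroup H] [NormedSpace 𝕜 H] [SeminormedAddCommGroup H']
    [NormedSpace 𝕜 H'] {J : V →ₗ[𝕜] H} (hJ : LinearMap.ker J = ⊥) {D : ι → V →ₗ[𝕜] H'}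
    (hD : ∀ v, Tendsto (D · v) l (𝓝 0)) {ε : ℝ} (hε : 0 < ε) :
    ∀ᶠ i in l, ∀ v, ‖D i v‖ ≤ ε * ‖J v‖ := by
  let b := Module.finBasis 𝕜 V
  obtain ⟨K, -, hK⟩ := (J ∘ₗ b.equivFun.symm.toLinearMap).exists_antilipschitzWith
    (by rw [LinearMap.ker_comp, hJ, Submodule.comap_bot, LinearEquiv.ker])
  have hcoord (v : V) (j) : ‖b.repr v j‖ ≤ K * ‖J v‖ := by
    have hv := hK.le_mul_dist (b.equivFun v) 0
    rw [map_zero, dist_zero_right, dist_zero_right, LinearMap.comp_apply, LinearEquiv.coe_coe,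
      LinearEquiv.symm_apply_apply] at hv
    exact (norm_le_pi_norm (b.equivFun v) j).trans hv
  have hsum : Tendsto (fun i => K * ∑ j, ‖D i (b j)‖) l (𝓝 0) := by
    simpa using (tendsto_finsetSum Finset.univ fun j _ => (hD (b j)).norm).const_mul (K : ℝ)
  filter_upwards [hsum.eventually_le_const hε] with i hi v
  calc ‖D i v‖ = ‖∑ j, b.repr v j • D i (b j)‖ := by
        conv_lhs => rw [← b.sum_repr v, map_sum]
        simp only [map_smul]
    _ ≤ ∑ j, K * ‖J v‖ * ‖D i (b j)‖ := norm_sum_le_of_le _ fun j _ => by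
        rw [norm_smul]
        exact mul_le_mul_of_nonneg_right (hcoord v j) (norm_nonneg _)
    _ = (K * ∑ j, ‖D i (b j)‖) * ‖J v‖ := by rw [← Finset.mul_sum]; ring
    _ ≤ ε * ‖J v‖ := mul_le_mul_of_nonneg_right hi (norm_nonneg _)

variable {α E : Type*} [MeasurableSpace α] {μ : Measure α} {p : ℝ≥0∞} [NormedAddCommGroup E]
  [NormedSpace 𝕜 E]

/-- The linear map into `L^p` given by a linear family `f` of `p`-integrable functions. -/
def toLpMap (f : V →ₗ[𝕜] α → E) (hf : ∀ v, MemLp (f v) p μ) : V →ₗ[𝕜] Lp E p μ where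
  toFun v := (hf v).toLp
  map_add' u v := by simp only [map_add]; exact MemLp.toLp_add (hf u) (hf v)
  map_smul' c u := by simp only [map_smul]; exact MemLp.toLp_const_smul c (hf u)

theorem enorm_toLpMap (f : V →ₗ[𝕜] α → E) (hf : ∀ v, MemLp (f v) p μ) (v : V) :
    ‖toLpMap f hf v‖ₑ = eLpNorm (f v) p μ :=
  Lp.enorm_toLp (hf := hf v)

theorem eventually_forall_eLpNorm_le_mul_eLpNorm [CompleteSpace 𝕜] [FiniteDimensional 𝕜 V]
    [Fact (1 ≤ p)] {f : V →ₗ[𝕜] α → E} (hf : ∀ v, MemLp (f v) p μ)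
    (hf0 : ∀ v, eLpNorm (f v) p μ = 0 → v = 0) {D : ι → V →ₗ[𝕜] α → E}
    (hD : ∀ i v, MemLp (D i v) p μ) (hlim : ∀ v, Tendsto (fun i => eLpNorm (D i v) p μ) l (𝓝 0))
    {ε : ℝ} (hε : 0 < ε) :
    ∀ᶠ i in l, ∀ v, eLpNorm (D i v) p μ ≤ ENNReal.ofReal ε * eLpNorm (f v) p μ := by
  have hker : LinearMap.ker (toLpMap f hf) = ⊥ :=
    LinearMap.ker_eq_bot'.2 fun v hv => hf0 v (by rw [← enorm_toLpMap f hf, hv, enorm_zero])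
  have htendsto (v : V) : Tendsto (fun i => toLpMap (D i) (hD i) v) l (𝓝 0) := by
    rw [tendsto_zero_iff_enorm_tendsto_zero]
    simpa only [enorm_toLpMap] using hlim v
  filter_upwards [eventually_forall_norm_le_mul_norm hker htendsto hε] with i hi v
  rw [← enorm_toLpMap _ (hD i), ← enorm_toLpMap f hf, ← ofReal_norm, ← ofReal_norm,
    ← ENNReal.ofReal_mul hε.le]
  exact ENNReal.ofReal_le_ofReal (hi v)

end FiniteDimensional

section Transfer

variable {N : ℕ} {Ω : Set (Euc N)} {u v : Euc N → ℝ} {ε k : ℝ}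

theorem l2sq_eq_zero_iff (hu : Measurable u) : l2sq N Ω u = 0 ↔ u =ᵐ[volume.restrict Ω] 0 := by
  rw [l2sq_eq_eLpNorm_sq, pow_eq_zero_iff two_ne_zero,
    eLpNorm_eq_zero_iff hu.aestronglyMeasurable two_ne_zero]

theorem ofReal_one_sub_mul_l2sq_le (hε : 0 < ε) (hε1 : ε < 1) (hu2 : l2sq N Ω u < ⊤)
    (hv : Measurable v)
    (hclose : l2sq N Ω (v - u) ≤ ENNReal.ofReal (ε ^ 2 / (1 + ε)) * l2sq N Ω u) :
    ENNReal.ofReal (1 - ε) * l2sq N Ω u ≤ ENNReal.ofReal (1 + ε) * l2sq N Ω v := by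
  have hfin : ENNReal.ofReal ε * l2sq N Ω u ≠ ⊤ := ENNReal.mul_ne_top ENNReal.ofReal_ne_top hu2.ne
  rw [← ENNReal.add_le_add_iff_right hfin]
  calc ENNReal.ofReal (1 - ε) * l2sq N Ω u + ENNReal.ofReal ε * l2sq N Ω u
      = l2sq N Ω (fun x => v x + (u - v) x) := by
        rw [← add_mul, ← ENNReal.ofReal_add (by linarith) hε.le]
        simp
    _ ≤ ENNReal.ofReal (1 + ε) * l2sq N Ω v +
          ENNReal.ofReal (1 + 1 / ε) * (ENNReal.ofReal (ε ^ 2 / (1 + ε)) * l2sq N Ω u) :=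
        (l2sq_add_le hv hε).trans
          (add_le_add_right (mul_le_mul_right ((l2sq_sub_comm u v).trans_le hclose) _) _)
    _ = ENNReal.ofReal (1 + ε) * l2sq N Ω v + ENNReal.ofReal ε * l2sq N Ω u := by
        rw [← mul_assoc, ← ENNReal.ofReal_mul (by positivity)]
        congr 3
        field_simp
        ring

theorem ofReal_mul_l2sq_le (hε : 0 < ε) (hε1 : ε < 1) (hk : 0 ≤ k) (hu2 : l2sq N Ω u < ⊤)
    (hv : Measurable v)
    (hclose : l2sq N Ω (v - u) ≤ ENNReal.ofReal (ε ^ 2 / (1 + ε)) * l2sq N Ω u) :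
    ENNReal.ofReal k * l2sq N Ω u ≤ ENNReal.ofReal (k * (1 + ε) / (1 - ε)) * l2sq N Ω v := by
  have hε1' : 0 < 1 - ε := sub_pos.2 hε1
  calc ENNReal.ofReal k * l2sq N Ω u
      = ENNReal.ofReal (k / (1 - ε)) * (ENNReal.ofReal (1 - ε) * l2sq N Ω u) := by
        rw [← mul_assoc, ← ENNReal.ofReal_mul (by positivity), div_mul_cancel₀ _ hε1'.ne']
    _ ≤ ENNReal.ofReal (k / (1 - ε)) * (ENNReal.ofReal (1 + ε) * l2sq N Ω v) :=
        mul_le_mul_right (ofReal_one_sub_mul_l2sq_le hε hε1 hu2 hv hclose) _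
    _ = ENNReal.ofReal (k * (1 + ε) / (1 - ε)) * l2sq N Ω v := by
        rw [← mul_assoc, ← ENNReal.ofReal_mul (by positivity), div_mul_eq_mul_div]

theorem exists_mul_one_add_div_one_sub_lt {Λ Λ' : ℝ} (h : Λ < Λ') : ∃ ε : ℝ, 0 < ε ∧ ε < 1 ∧
    ((1 + ε) ^ 2 * Λ + ε) * (1 + ε) / (1 - ε) < Λ' := by
  have hcont : ContinuousAt (fun ε : ℝ => ((1 + ε) ^ 2 * Λ + ε) * (1 + ε) / (1 - ε)) 0 :=
    ContinuousAt.div (by fun_prop) (by fun_prop) (by norm_num)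
  have hlt := (hcont.tendsto.mono_left nhdsWithin_le_nhds).eventually_lt_const (l := 𝓝[>] 0)
    (u := Λ') (by simpa using h)
  obtain ⟨ε, hε, hε0, hε1⟩ := (hlt.and (Ioo_mem_nhdsGT one_pos)).exists
  exact ⟨ε, hε0, hε1, hε⟩

end Transfer

section TrialSpace

variable {N : ℕ} {Ω : Set (Euc N)} {n : ℕ} {A : Submodule ℝ (Euc N → ℝ)} {s Λ : ℝ}
  {u : Euc N → ℝ}

/-- `A` is an `n`-dimensional space of measurable functions on `ℝ^N` whose restrictions to `Ω` are
square-integrable with zero mean, and nonzero for nonzero functions. Both min-max values can be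
computed over the trial spaces of finite energy. -/
structure IsTrialSpace (Ω : Set (Euc N)) (n : ℕ) (A : Submodule ℝ (Euc N → ℝ)) : Prop where
  finrank_eq : Module.finrank ℝ A = n
  measurable : ∀ u ∈ A, Measurable u
  l2sq_lt_top : ∀ u ∈ A, l2sq N Ω u < ⊤
  integral_eq_zero : ∀ u ∈ A, ∫ x in Ω, u x = 0
  eq_zero : ∀ u ∈ A, l2sq N Ω u = 0 → u = 0

theorem gradSq_zero : gradSq N Ω 0 = 0 :=
  le_antisymm ((iInf₂_le (fun _ => 0) ⟨measurable_const, by simp, by simp⟩).trans (by simp))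
    zero_le

theorem muN1_le (hA : IsTrialSpace Ω n A)
    (henergy : ∀ u ∈ A, gradSq N Ω u ≤ ENNReal.ofReal Λ * l2sq N Ω u) :
    muN1 N Ω n ≤ ENNReal.ofReal Λ := by
  refine iInf₂_le_of_le A ⟨hA.finrank_eq, fun u hu => ⟨?_, hA.integral_eq_zero u hu⟩,
    fun u hu h0 => hA.eq_zero u hu ((l2sq_eq_zero_iff (hA.measurable u hu)).2 h0)⟩
    (iSup₂_le fun u hu => ENNReal.div_le_of_le_mul (henergy u hu.1))
  have hfin : gradSq N Ω u < ⊤ :=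
    (henergy u hu).trans_lt (ENNReal.mul_lt_top ENNReal.ofReal_lt_top (hA.l2sq_lt_top u hu))
  obtain ⟨g, hg⟩ := iInf_lt_iff.1 hfin
  exact ⟨hA.measurable u hu, hA.l2sq_lt_top u hu, g, (iInf_lt_iff.1 hg).1⟩

theorem muNs_le (hs : 0 < cNs N s) (hA : IsTrialSpace Ω n A)
    (henergy : ∀ u ∈ A, ENNReal.ofReal (cNs N s / 2) * semiSq N s Ω u ≤
      ENNReal.ofReal Λ * l2sq N Ω u) : muNs N s Ω n ≤ ENNReal.ofReal Λ := by
  refine iInf₂_le_of_le A ⟨hA.finrank_eq, fun u hu => ⟨?_, hA.integral_eq_zero u hu⟩,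
    fun u hu h0 => hA.eq_zero u hu
      ((l2sq_eq_zero_iff (hA.measurable u hu)).2 (ae_restrict_of_ae h0))⟩
    (iSup₂_le fun u hu => ENNReal.div_le_of_le_mul (henergy u hu.1))
  refine ⟨hA.measurable u hu, hA.l2sq_lt_top u hu, ?_⟩
  have hfin := (henergy u hu).trans_lt
    (ENNReal.mul_lt_top ENNReal.ofReal_lt_top (hA.l2sq_lt_top u hu))
  exact ENNReal.lt_top_of_mul_ne_top_right hfin.ne (ENNReal.ofReal_pos.2 (half_pos hs)).ne'

theorem exists_isTrialSpace_of_muN1_lt (h : muN1 N Ω n < ENNReal.ofReal Λ) :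
    ∃ A, IsTrialSpace Ω n A ∧ ∀ u ∈ A, gradSq N Ω u ≤ ENNReal.ofReal Λ * l2sq N Ω u := by
  obtain ⟨A, hA⟩ := iInf_lt_iff.1 h
  obtain ⟨⟨hn, hmem, hzero⟩, hsup⟩ := iInf_lt_iff.1 hA
  have htrial : IsTrialSpace Ω n A :=
    ⟨hn, fun u hu => (hmem u hu).1.1, fun u hu => (hmem u hu).1.2.1, fun u hu => (hmem u hu).2,
      fun u hu h0 => hzero u hu ((l2sq_eq_zero_iff (hmem u hu).1.1).1 h0)⟩
  refine ⟨A, htrial, fun u hu => ?_⟩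
  rcases eq_or_ne u 0 with rfl | hu0
  · simp [gradSq_zero]
  have hquot : rayleigh1 N Ω u ≤ ENNReal.ofReal Λ :=
    (le_iSup₂_of_le u ⟨hu, hu0⟩ le_rfl).trans hsup.le
  exact (ENNReal.div_le_iff (fun h0 => hu0 (htrial.eq_zero u hu h0))
    (htrial.l2sq_lt_top u hu).ne).1 hquot

theorem kern_pos {x y : Euc N} (h : x ≠ y) : 0 < kern N s x y :=
  Real.rpow_pos_of_pos (norm_pos_iff.2 (sub_ne_zero.2 h)) _

theorem ae_eq_zero_of_semiSq_eq_zero (hΩ : IsOpen Ω) (hne : Ω.Nonempty) (hu : Measurable u)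
    (h0 : u =ᵐ[volume.restrict Ω] 0) (hsemi : semiSq N s Ω u = 0) : u =ᵐ[volume] 0 := by
  have hreg : MeasurableSet (reg N Ω) :=
    (measurable_fst isClosed_closure.measurableSet).union
      (measurable_snd isClosed_closure.measurableSet)
  have hquot : ∀ᵐ q ∂(volume : Measure (Euc N × Euc N)), q ∈ reg N Ω →
      gagliardo s u q = 0 :=
    (ae_restrict_iff' hreg).1 ((lintegral_eq_zero_iff (measurable_gagliardo s hu)).1 hsemi)
  obtain ⟨x, hx, hx0, hslice⟩ := Measure.exists_mem_of_measure_ne_zero_of_ae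
    (hΩ.measure_pos volume hne).ne' (h0.and (ae_restrict_of_ae (Measure.ae_ae_of_ae_prod hquot)))
  filter_upwards [hslice] with y hy
  by_contra hy0
  have hxy : x ≠ y := by
    rintro rfl
    exact hy0 hx0
  have hsq : 0 < (u x - u y) ^ 2 := by
    rw [hx0, Pi.zero_apply, zero_sub, neg_sq]
    exact sq_pos_of_ne_zero hy0
  exact (ENNReal.ofReal_pos.2 (div_pos hsq (kern_pos hxy))).ne' (hy (Or.inl (subset_closure hx)))

theorem exists_isTrialSpace_of_muNs_lt (hΩ : IsOpen Ω) (hne : Ω.Nonempty) (hs : 0 < cNs N s)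
    (h : muNs N s Ω n < ENNReal.ofReal Λ) :
    ∃ A, IsTrialSpace Ω n A ∧
      ∀ u ∈ A, ENNReal.ofReal (cNs N s / 2) * semiSq N s Ω u ≤ ENNReal.ofReal Λ * l2sq N Ω u := by
  obtain ⟨A, hA⟩ := iInf_lt_iff.1 h
  obtain ⟨⟨hn, hmem, hzero⟩, hsup⟩ := iInf_lt_iff.1 hA
  have hc : ENNReal.ofReal (cNs N s / 2) ≠ 0 := (ENNReal.ofReal_pos.2 (half_pos hs)).ne'
  have hquot (u) (hu : u ∈ A) (hu0 : u ≠ 0) : rayleighS N s Ω u ≤ ENNReal.ofReal Λ :=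
    (le_iSup₂_of_le u ⟨hu, hu0⟩ le_rfl).trans hsup.le
  have heq_zero (u) (hu : u ∈ A) (h0 : l2sq N Ω u = 0) : u = 0 := by
    by_contra hu0
    have hsemi : semiSq N s Ω u = 0 := by
      by_contra hsemi
      refine ENNReal.ofReal_ne_top (top_le_iff.1 ((hquot u hu hu0).trans' ?_))
      rw [rayleighS, h0, ENNReal.div_zero (mul_ne_zero hc hsemi)]
    have hum := (hmem u hu).1.1
    exact hu0 (hzero u hu
      (ae_eq_zero_of_semiSq_eq_zero hΩ hne hum ((l2sq_eq_zero_iff hum).1 h0) hsemi))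
  refine ⟨A, ⟨hn, fun u hu => (hmem u hu).1.1, fun u hu => (hmem u hu).1.2.1,
    fun u hu => (hmem u hu).2, heq_zero⟩, fun u hu => ?_⟩
  rcases eq_or_ne u 0 with rfl | hu0
  · simp [semiSq]
  exact (ENNReal.div_le_iff (fun h0 => hu0 (heq_zero u hu h0)) (hmem u hu).1.2.1.ne).1
    (hquot u hu hu0)

end TrialSpace

namespace InwardField

variable {N : ℕ} {Ω : Set (Euc N)} {t : ℝ} {u : Euc N → ℝ} (X : InwardField Ω)

section ZeroMean

/-- The smoothing operator corrected by a constant to have zero mean over `Ω`. -/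
def zeroMeanSmoothing (ht : 0 < t) (u : Euc N → ℝ) (x : Euc N) : ℝ :=
  X.smoothing ht u x - ⨍ y in Ω, X.smoothing ht u y

theorem exists_c11Bound_zeroMeanSmoothing (hΩ : IsBounded Ω) (ht : 0 < t) (ht1 : t ≤ 1) :
    ∃ K : ℝ, ∀ u, IntegrableOn u Ω → C11Bound (X.zeroMeanSmoothing ht u) (K * ∫ y in Ω, |u y|) := by
  obtain ⟨K, hK⟩ := X.exists_c11Bound_smoothing ht ht1
  refine ⟨2 * K, fun u hu => ?_⟩
  rw [mul_assoc]
  exact (hK u hu).sub_const (abs_setAverage_le hΩ (hK u hu).norm_le)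

theorem fderiv_zeroMeanSmoothing (ht : 0 < t) (u : Euc N → ℝ) :
    fderiv ℝ (X.zeroMeanSmoothing ht u) = fderiv ℝ (X.smoothing ht u) :=
  funext fun _ => fderiv_sub_const _

theorem measurable_zeroMeanSmoothing (ht : 0 < t) (ht1 : t ≤ 1) (hu : IntegrableOn u Ω) :
    Measurable (X.zeroMeanSmoothing ht u) :=
  ((X.continuous_smoothing ht ht1 hu).sub continuous_const).measurable

theorem integrableOn_smoothing (hΩ : IsBounded Ω) (ht : 0 < t) (ht1 : t ≤ 1)
    (hu : IntegrableOn u Ω) : IntegrableOn (X.smoothing ht u) Ω := by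
  obtain ⟨K, hK⟩ := X.exists_c11Bound_smoothing ht ht1
  exact integrableOn_of_l2sq_lt_top hΩ (hK u hu).continuous.measurable ((hK u hu).l2sq_lt_top hΩ)

theorem l2sq_zeroMeanSmoothing_lt_top (hΩ : IsBounded Ω) (ht : 0 < t) (ht1 : t ≤ 1)
    (hu : IntegrableOn u Ω) : l2sq N Ω (X.zeroMeanSmoothing ht u) < ⊤ := by
  obtain ⟨K, hK⟩ := X.exists_c11Bound_zeroMeanSmoothing hΩ ht ht1
  exact (hK u hu).l2sq_lt_top hΩ

theorem integral_zeroMeanSmoothing (hΩ : IsBounded Ω) (ht : 0 < t) (ht1 : t ≤ 1)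
    (hu : IntegrableOn u Ω) : ∫ x in Ω, X.zeroMeanSmoothing ht u x = 0 := by
  have : IsFiniteMeasure (volume.restrict Ω) := ⟨by simpa using hΩ.measure_lt_top⟩
  unfold zeroMeanSmoothing
  rw [integral_sub (X.integrableOn_smoothing hΩ ht ht1 hu) (integrable_const _), integral_average,
    sub_self]

theorem zeroMeanSmoothing_smul (ht : 0 < t) (c : ℝ) (u : Euc N → ℝ) :
    X.zeroMeanSmoothing ht (c • u) = c • X.zeroMeanSmoothing ht u := by
  funext x
  simp only [zeroMeanSmoothing, smoothing_smul, Pi.smul_apply, average_eq, smul_eq_mul,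
    integral_const_mul]
  ring

theorem zeroMeanSmoothing_add (hΩ : IsBounded Ω) (ht : 0 < t) (ht1 : t ≤ 1) {v : Euc N → ℝ}
    (hu : IntegrableOn u Ω) (hv : IntegrableOn v Ω) :
    X.zeroMeanSmoothing ht (u + v) = X.zeroMeanSmoothing ht u + X.zeroMeanSmoothing ht v := by
  funext x
  simp only [zeroMeanSmoothing, X.smoothing_add ht hu hv, Pi.add_apply, average_eq,
    integral_add (X.integrableOn_smoothing hΩ ht ht1 hu) (X.integrableOn_smoothing hΩ ht ht1 hv),
    smul_add]
  ring

/-- The restriction of `zeroMeanSmoothing` to a space of integrable functions, where it is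
linear. -/
def zeroMeanSmoothingMap (hΩ : IsBounded Ω) (ht : 0 < t) (ht1 : t ≤ 1)
    {A : Submodule ℝ (Euc N → ℝ)} (hA : ∀ u ∈ A, IntegrableOn u Ω) : A →ₗ[ℝ] Euc N → ℝ where
  toFun u := X.zeroMeanSmoothing ht u
  map_add' u v := X.zeroMeanSmoothing_add hΩ ht ht1 (hA u u.2) (hA v v.2)
  map_smul' c u := X.zeroMeanSmoothing_smul ht c u

theorem l2sq_zeroMeanSmoothing_sub_le (hΩ : IsBounded Ω) (ht : 0 < t) (ht1 : t ≤ 1)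
    (hum : Measurable u) (hu : IntegrableOn u Ω) (hu0 : ∫ x in Ω, u x = 0) :
    l2sq N Ω (X.zeroMeanSmoothing ht u - u) ≤ 4 * l2sq N Ω (X.smoothing ht u - u) := by
  have hdiff : Measurable (X.smoothing ht u - u) :=
    (X.continuous_smoothing ht ht1 hu).measurable.sub hum
  have haverage : ⨍ x in Ω, (X.smoothing ht u - u) x = ⨍ x in Ω, X.smoothing ht u x := by
    simp only [average_eq, Pi.sub_apply,
      integral_sub (X.integrableOn_smoothing hΩ ht ht1 hu) hu, hu0, sub_zero]
  have hsplit : X.zeroMeanSmoothing ht u - u = fun x => (X.smoothing ht u - u) x +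
      -⨍ y in Ω, (X.smoothing ht u - u) y := by
    funext x
    rw [haverage]
    simp only [zeroMeanSmoothing, Pi.sub_apply]
    ring
  calc l2sq N Ω (X.zeroMeanSmoothing ht u - u)
      ≤ ENNReal.ofReal (1 + 1) * l2sq N Ω (X.smoothing ht u - u) +
          ENNReal.ofReal (1 + 1 / 1) * l2sq N Ω (X.smoothing ht u - u) := by
        refine hsplit ▸ (l2sq_add_le hdiff one_pos).trans
          (add_le_add_right (mul_le_mul_right ?_ _) _)
        simpa only [l2sq, neg_sq] using l2sq_setAverage_le hΩ hdiff
    _ = 4 * l2sq N Ω (X.smoothing ht u - u) := by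
        rw [← add_mul, ← ENNReal.ofReal_add (by norm_num) (by norm_num)]
        norm_num

end ZeroMean

end InwardField

section EnergyOfSmoothing

variable {N : ℕ} {Ω : Set (Euc N)} {t ε η : ℝ} {u : Euc N → ℝ} (X : InwardField Ω)

namespace InwardField

theorem eventually_ofReal_mul_volumeFactor_le (hε : 0 < ε) :
    ∀ᶠ t in 𝓝[>] (0 : ℝ),
      ENNReal.ofReal ((1 + t * X.bound) ^ 2) * X.volumeFactor t ≤ ENNReal.ofReal (1 + ε) := by
  have hcont : Continuous fun t : ℝ => ENNReal.ofReal ((1 + t * X.bound) ^ 2) :=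
    ENNReal.continuous_ofReal.comp (by fun_prop)
  have hone : Tendsto (fun t : ℝ => ENNReal.ofReal ((1 + t * X.bound) ^ 2)) (𝓝[>] 0) (𝓝 1) := by
    simpa using (hcont.tendsto 0).mono_left nhdsWithin_le_nhds
  have hprod := ENNReal.Tendsto.mul hone (Or.inl one_ne_zero) X.tendsto_volumeFactor
    (Or.inl one_ne_zero)
  rw [one_mul] at hprod
  exact hprod.eventually_le_const (ENNReal.one_lt_ofReal.2 (lt_add_of_pos_right 1 hε))

theorem setLIntegral_norm_fderiv_zeroMeanSmoothing_sq_le (hΩ : IsOpen Ω) (ht : 0 < t)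
    (htm : t ≤ X.maxTime) (hu : IntegrableOn u Ω)
    (hjac : ENNReal.ofReal ((1 + t * X.bound) ^ 2) * X.volumeFactor t ≤ ENNReal.ofReal (1 + ε)) :
    ∫⁻ x in Ω, ENNReal.ofReal (‖fderiv ℝ (X.zeroMeanSmoothing ht u) x‖ ^ 2) ≤
      ENNReal.ofReal (1 + ε) * ∫⁻ x in erosion Ω (X.speed * t),
        ENNReal.ofReal (‖fderiv ℝ (mollify Ω ((X.bump ht).normed volume) u) x‖ ^ 2) := by
  rw [fderiv_zeroMeanSmoothing]
  exact (X.setLIntegral_norm_fderiv_smoothing_sq_le hΩ ht htm hu).trans (mul_le_mul_left hjac _)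

theorem eventually_ofReal_mul_semiSq_zeroMeanSmoothing_le [NeZero N] (hΩ : IsOpen Ω)
    (hbdd : IsBounded Ω) (ht : 0 < t) (ht1 : t ≤ 1) (hη : 0 < η) :
    ∀ᶠ s in 𝓝[<] (1 : ℝ), ∀ u, Measurable u → l2sq N Ω u < ⊤ →
      ENNReal.ofReal (cNs N s / 2) * semiSq N s Ω (X.zeroMeanSmoothing ht u) ≤
        ENNReal.ofReal (1 + η) *
            (∫⁻ x in Ω, ENNReal.ofReal (‖fderiv ℝ (X.zeroMeanSmoothing ht u) x‖ ^ 2)) +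
          ENNReal.ofReal η * l2sq N Ω u := by
  obtain ⟨K, hK⟩ := X.exists_c11Bound_zeroMeanSmoothing hbdd ht ht1
  have hvol : volume Ω = ENNReal.ofReal (volume.real Ω) :=
    (ofReal_measureReal hbdd.measure_lt_top.ne).symm
  have hKV : 0 ≤ K ^ 2 * volume.real Ω := by positivity
  set δ := η / (1 + K ^ 2 * volume.real Ω)
  have hδ0 : 0 < δ := by positivity
  have hδη : δ * (1 + K ^ 2 * volume.real Ω) = η := div_mul_cancel₀ _ (by positivity)
  have hδKV : δ * K ^ 2 * volume.real Ω ≤ η := by linarith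
  have hδle : δ ≤ η := by linarith [mul_nonneg hδ0.le hKV]
  filter_upwards [eventually_ofReal_mul_semiSq_le hΩ hbdd X.volume_closure_le hδ0]
    with s hs u hu hu2
  refine (hs _ _ (hK u (integrableOn_of_l2sq_lt_top hbdd hu hu2))).trans (add_le_add
    (mul_le_mul_left (ENNReal.ofReal_le_ofReal (by linarith)) _) ?_)
  calc ENNReal.ofReal (δ * (K * ∫ x in Ω, |u x|) ^ 2)
      = ENNReal.ofReal (δ * K ^ 2) * ENNReal.ofReal ((∫ x in Ω, |u x|) ^ 2) := by
        rw [← ENNReal.ofReal_mul (by positivity)]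
        congr 1
        ring
    _ ≤ ENNReal.ofReal (δ * K ^ 2) * (volume Ω * l2sq N Ω u) :=
        mul_le_mul_right (ofReal_sq_integral_abs_le_l2sq hu) _
    _ = ENNReal.ofReal (δ * K ^ 2 * volume.real Ω) * l2sq N Ω u := by
        rw [hvol, ← mul_assoc, ← ENNReal.ofReal_mul (by positivity)]
    _ ≤ ENNReal.ofReal η * l2sq N Ω u := mul_le_mul_left (ENNReal.ofReal_le_ofReal hδKV) _

theorem tendsto_l2sq_zeroMeanSmoothing_sub (hΩ : IsOpen Ω) (hbdd : IsBounded Ω)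
    (hu : Measurable u) (hu2 : l2sq N Ω u < ⊤) (hu0 : ∫ x in Ω, u x = 0) :
    Tendsto (fun t : Ioc 0 X.maxTime => l2sq N Ω (X.zeroMeanSmoothing t.2.1 u - u))
      (comap Subtype.val (𝓝[>] 0)) (𝓝 0) := by
  refine ENNReal.tendsto_nhds_zero.2 fun ε hε => ?_
  obtain ⟨η, hη0, hηε⟩ := ENNReal.lt_iff_exists_nnreal_btwn.1 hε
  have hη : (0 : ℝ) < η / 4 := by
    have := ENNReal.coe_pos.1 hη0
    positivity
  refine ((X.eventually_l2sq_smoothing_sub_le hΩ hbdd hu hu2 hη).comap Subtype.val).mono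
    fun t ht => ?_
  calc l2sq N Ω (X.zeroMeanSmoothing t.2.1 u - u)
      ≤ 4 * l2sq N Ω (X.smoothing t.2.1 u - u) :=
        X.l2sq_zeroMeanSmoothing_sub_le hbdd t.2.1 (t.2.2.trans X.maxTime_le_one) hu
          (integrableOn_of_l2sq_lt_top hbdd hu hu2) hu0
    _ ≤ 4 * ENNReal.ofReal (η / 4) := mul_le_mul_right (ht t.2.1) _
    _ = η := by
        rw [← ENNReal.ofReal_ofNat 4, ← ENNReal.ofReal_mul (by norm_num),
          mul_div_cancel₀ _ (by norm_num), ENNReal.ofReal_coe_nnreal]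
    _ ≤ ε := hηε.le

end InwardField

end EnergyOfSmoothing

namespace IsTrialSpace

variable {N : ℕ} {Ω : Set (Euc N)} {n : ℕ} {A : Submodule ℝ (Euc N → ℝ)} {t ε k : ℝ}

theorem integrableOn (hA : IsTrialSpace Ω n A) (hΩ : IsBounded Ω) :
    ∀ u ∈ A, IntegrableOn u Ω :=
  fun u hu => integrableOn_of_l2sq_lt_top hΩ (hA.measurable u hu) (hA.l2sq_lt_top u hu)

theorem range_zeroMeanSmoothingMap (hA : IsTrialSpace Ω n A) (X : InwardField Ω)
    (hΩ : IsBounded Ω) (ht : 0 < t) (ht1 : t ≤ 1) (hε : 0 < ε) (hε1 : ε < 1)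
    (hclose : ∀ u ∈ A, l2sq N Ω (X.zeroMeanSmoothing ht u - u) ≤
      ENNReal.ofReal (ε ^ 2 / (1 + ε)) * l2sq N Ω u) :
    IsTrialSpace Ω n
      (LinearMap.range (X.zeroMeanSmoothingMap hΩ ht ht1 (hA.integrableOn hΩ))) := by
  have hint := hA.integrableOn hΩ
  have hmeas (u : A) := X.measurable_zeroMeanSmoothing ht ht1 (hint u u.2)
  have hinj (u : A) (h0 : l2sq N Ω (X.zeroMeanSmoothing ht u) = 0) : u = 0 := by
    have hle := ofReal_one_sub_mul_l2sq_le hε hε1 (hA.l2sq_lt_top u u.2) (hmeas u) (hclose u u.2)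
    rw [h0, mul_zero, nonpos_iff_eq_zero, mul_eq_zero] at hle
    exact Subtype.ext (hA.eq_zero u u.2
      (hle.resolve_left (ENNReal.ofReal_pos.2 (sub_pos.2 hε1)).ne'))
  constructor
  · rw [LinearMap.finrank_range_of_inj, hA.finrank_eq]
    refine LinearMap.ker_eq_bot.1 (LinearMap.ker_eq_bot'.2 fun u hu => hinj u ?_)
    change X.zeroMeanSmoothing ht u = 0 at hu
    simp [hu, l2sq]
  · rintro _ ⟨u, rfl⟩
    exact hmeas u
  · rintro _ ⟨u, rfl⟩
    exact X.l2sq_zeroMeanSmoothing_lt_top hΩ ht ht1 (hint u u.2)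
  · rintro _ ⟨u, rfl⟩
    exact X.integral_zeroMeanSmoothing hΩ ht ht1 (hint u u.2)
  · rintro _ ⟨u, rfl⟩ h0
    rw [hinj u h0, map_zero]

theorem exists_forall_le_mul_l2sq (hA : IsTrialSpace Ω n A) (X : InwardField Ω)
    (hΩ : IsBounded Ω) (ht : 0 < t) (ht1 : t ≤ 1) (hε : 0 < ε) (hε1 : ε < 1) (hk : 0 ≤ k)
    (hclose : ∀ u ∈ A, l2sq N Ω (X.zeroMeanSmoothing ht u - u) ≤
      ENNReal.ofReal (ε ^ 2 / (1 + ε)) * l2sq N Ω u)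
    {F : (Euc N → ℝ) → ℝ≥0∞}
    (hF : ∀ u ∈ A, F (X.zeroMeanSmoothing ht u) ≤ ENNReal.ofReal k * l2sq N Ω u) :
    ∃ B, IsTrialSpace Ω n B ∧
      ∀ w ∈ B, F w ≤ ENNReal.ofReal (k * (1 + ε) / (1 - ε)) * l2sq N Ω w := by
  refine ⟨_, hA.range_zeroMeanSmoothingMap X hΩ ht ht1 hε hε1 hclose, ?_⟩
  rintro _ ⟨u, rfl⟩
  exact (hF u u.2).trans (ofReal_mul_l2sq_le hε hε1 hk (hA.l2sq_lt_top u u.2)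
    (X.measurable_zeroMeanSmoothing ht ht1 (hA.integrableOn hΩ u u.2)) (hclose u u.2))

theorem eventually_l2sq_zeroMeanSmoothing_sub_le (hA : IsTrialSpace Ω n A) (hn : n ≠ 0)
    (X : InwardField Ω) (hΩ : IsOpen Ω) (hbdd : IsBounded Ω) (hε : 0 < ε) :
    ∀ᶠ t in 𝓝[>] (0 : ℝ), ∀ ht : 0 < t, ∀ u ∈ A,
      l2sq N Ω (X.zeroMeanSmoothing ht u - u) ≤ ENNReal.ofReal ε * l2sq N Ω u := by
  have : FiniteDimensional ℝ A := .of_finrank_pos (by rw [hA.finrank_eq]; exact hn.bot_lt)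
  have hint := hA.integrableOn hbdd
  have hmem (u : A) : MemLp u 2 (volume.restrict Ω) :=
    memLp_two_of_l2sq_lt_top (hA.measurable u u.2) (hA.l2sq_lt_top u u.2)
  have ht1 (t : Ioc 0 X.maxTime) : (t : ℝ) ≤ 1 := t.2.2.trans X.maxTime_le_one
  let D (t : Ioc 0 X.maxTime) : A →ₗ[ℝ] Euc N → ℝ :=
    X.zeroMeanSmoothingMap hbdd t.2.1 (ht1 t) hint - A.subtype
  have hD (t) (u : A) : MemLp (D t u) 2 (volume.restrict Ω) :=
    (memLp_two_of_l2sq_lt_top (X.measurable_zeroMeanSmoothing t.2.1 (ht1 t) (hint u u.2))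
      (X.l2sq_zeroMeanSmoothing_lt_top hbdd t.2.1 (ht1 t) (hint u u.2))).sub (hmem u)
  have hlim (u : A) : Tendsto (fun t => eLpNorm (D t u) 2 (volume.restrict Ω))
      (comap Subtype.val (𝓝[>] 0)) (𝓝 0) := by
    refine ENNReal.tendsto_nhds_zero.2 fun δ hδ => ?_
    filter_upwards [ENNReal.tendsto_nhds_zero.1 (X.tendsto_l2sq_zeroMeanSmoothing_sub hΩ hbdd
      (hA.measurable u u.2) (hA.l2sq_lt_top u u.2) (hA.integral_eq_zero u u.2)) (δ ^ 2)
      (by positivity)] with t ht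
    rw [l2sq_eq_eLpNorm_sq] at ht
    exact (ENNReal.pow_le_pow_left_iff two_ne_zero).1 ht
  have hzero (u : A) (h0 : eLpNorm (u : Euc N → ℝ) 2 (volume.restrict Ω) = 0) : u = 0 :=
    Subtype.ext (hA.eq_zero u u.2 (by rw [l2sq_eq_eLpNorm_sq, h0, zero_pow two_ne_zero]))
  have hev := eventually_forall_eLpNorm_le_mul_eLpNorm (f := A.subtype) hmem hzero hD hlim
    (Real.sqrt_pos.2 hε)
  filter_upwards [eventually_comap.1 hev, Ioc_mem_nhdsGT X.maxTime_pos] with t hclose htm _ u hu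
  have hle := pow_le_pow_left' (hclose ⟨t, htm⟩ rfl ⟨u, hu⟩) 2
  rwa [mul_pow, ← ENNReal.ofReal_pow (Real.sqrt_nonneg ε), Real.sq_sqrt hε.le,
    ← l2sq_eq_eLpNorm_sq, ← l2sq_eq_eLpNorm_sq] at hle

end IsTrialSpace

section EigenvalueConvergence

variable {N n : ℕ} [NeZero N] {Ω : Set (Euc N)} {t ε Λ Λ' : ℝ}

theorem eventually_cNs_pos (N : ℕ) [NeZero N] : ∀ᶠ s in 𝓝[<] (1 : ℝ), 0 < cNs N s :=
  mem_of_superset (Ioo_mem_nhdsLT one_pos) fun _ hs => cNs_pos N hs.1 hs.2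

theorem eventually_muNs_le_of_muN1_lt (X : InwardField Ω) (hΩ : IsOpen Ω) (hbdd : IsBounded Ω)
    (hn : n ≠ 0) (hΛ0 : 0 ≤ Λ) (hΛ : Λ < Λ') (h : muN1 N Ω n < ENNReal.ofReal Λ) :
    ∀ᶠ s in 𝓝[<] (1 : ℝ), muNs N s Ω n ≤ ENNReal.ofReal Λ' := by
  obtain ⟨A, hA, henergy⟩ := exists_isTrialSpace_of_muN1_lt h
  obtain ⟨ε, hε, hε1, hεΛ⟩ := exists_mul_one_add_div_one_sub_lt hΛ
  obtain ⟨t, ⟨hclose, hjac⟩, ht, htm⟩ := ((hA.eventually_l2sq_zeroMeanSmoothing_sub_le hn X hΩ hbdd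
    (by positivity : 0 < ε ^ 2 / (1 + ε))).and
    (X.eventually_ofReal_mul_volumeFactor_le hε) |>.and (Ioc_mem_nhdsGT X.maxTime_pos)).exists
  have ht1 := htm.trans X.maxTime_le_one
  have hgrad (u) (hu : u ∈ A) :
      ∫⁻ x in Ω, ENNReal.ofReal (‖fderiv ℝ (X.zeroMeanSmoothing ht u) x‖ ^ 2) ≤
        ENNReal.ofReal (1 + ε) * (ENNReal.ofReal Λ * l2sq N Ω u) :=
    (X.setLIntegral_norm_fderiv_zeroMeanSmoothing_sq_le hΩ ht htm (hA.integrableOn hbdd u hu)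
      hjac).trans (mul_le_mul_right ((setLIntegral_erosion_norm_fderiv_mollify_sq_le_gradSq _ hΩ
        hbdd (hA.integrableOn hbdd u hu) (X.bump_rOut_lt ht)).trans (henergy u hu)) _)
  filter_upwards [X.eventually_ofReal_mul_semiSq_zeroMeanSmoothing_le hΩ hbdd ht ht1 hε,
    eventually_cNs_pos N] with s hsemi hc
  have hF (u) (hu : u ∈ A) :
      ENNReal.ofReal (cNs N s / 2) * semiSq N s Ω (X.zeroMeanSmoothing ht u) ≤
        ENNReal.ofReal ((1 + ε) ^ 2 * Λ + ε) * l2sq N Ω u := by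
    calc ENNReal.ofReal (cNs N s / 2) * semiSq N s Ω (X.zeroMeanSmoothing ht u)
        ≤ ENNReal.ofReal (1 + ε) * (ENNReal.ofReal (1 + ε) * (ENNReal.ofReal Λ * l2sq N Ω u)) +
            ENNReal.ofReal ε * l2sq N Ω u :=
          (hsemi u (hA.measurable u hu) (hA.l2sq_lt_top u hu)).trans
            (add_le_add_left (mul_le_mul_right (hgrad u hu) _) _)
      _ = ENNReal.ofReal ((1 + ε) ^ 2 * Λ + ε) * l2sq N Ω u := by
          rw [ENNReal.ofReal_add (p := (1 + ε) ^ 2 * Λ) (by positivity) hε.le,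
            ENNReal.ofReal_mul (q := Λ) (by positivity), ENNReal.ofReal_pow (by positivity)]
          ring
  obtain ⟨B, hB, hBF⟩ := hA.exists_forall_le_mul_l2sq X hbdd ht ht1 hε hε1 (by positivity)
    (hclose ht) (F := fun w => ENNReal.ofReal (cNs N s / 2) * semiSq N s Ω w) hF
  exact (muNs_le hc hB hBF).trans (ENNReal.ofReal_le_ofReal hεΛ.le)

theorem InwardField.eventually_forall_l2sq_zeroMeanSmoothing_sub_le (X : InwardField Ω)
    (hΩ : IsOpen Ω) (hbdd : IsBounded Ω) (hε : 0 < ε) :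
    ∀ᶠ t in 𝓝[>] (0 : ℝ), ∀ᶠ s in 𝓝[<] (1 : ℝ), ∀ (ht : 0 < t) (u : Euc N → ℝ), Measurable u →
      l2sq N Ω u < ⊤ → ∫ x in Ω, u x = 0 →
      ENNReal.ofReal (cNs N s / 2) * semiSq N s Ω u ≤ ENNReal.ofReal Λ * l2sq N Ω u →
      l2sq N Ω (X.zeroMeanSmoothing ht u - u) ≤ ENNReal.ofReal ε * l2sq N Ω u := by
  obtain ⟨C, hC, hsmooth⟩ := X.exists_eventually_l2sq_smoothing_sub_le hΩ
  have hsmall : ∀ᶠ t in 𝓝[>] (0 : ℝ), 4 * (C * t) * Λ < ε := by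
    have hlim : Tendsto (fun t : ℝ => 4 * (C * t) * Λ) (𝓝 0) (𝓝 (4 * (C * 0) * Λ)) :=
      Continuous.tendsto (by fun_prop) 0
    exact (hlim.mono_left nhdsWithin_le_nhds).eventually_lt_const (by simpa using hε)
  filter_upwards [hsmall, Ioc_mem_nhdsGT X.maxTime_pos] with t htε htm
  filter_upwards [hsmooth] with s hs ht u hu hu2 hu0 henergy
  have hint := integrableOn_of_l2sq_lt_top hbdd hu hu2
  calc l2sq N Ω (X.zeroMeanSmoothing ht u - u)
      ≤ 4 * l2sq N Ω (X.smoothing ht u - u) :=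
        X.l2sq_zeroMeanSmoothing_sub_le hbdd ht (htm.2.trans X.maxTime_le_one) hu hint hu0
    _ ≤ 4 * (ENNReal.ofReal (C * t) * (ENNReal.ofReal Λ * l2sq N Ω u)) := by
        refine mul_le_mul_right ((hs t ht htm.2 u hu hint).trans (mul_le_mul_right ?_ _)) _
        exact (mul_le_mul_right (semiSqOn_le_semiSq s u) _).trans henergy
    _ = ENNReal.ofReal (4 * (C * t) * Λ) * l2sq N Ω u := by
        rw [ENNReal.ofReal_mul (q := Λ) (by positivity),
          ENNReal.ofReal_mul (p := 4) (by norm_num), ENNReal.ofReal_ofNat]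
        ring
    _ ≤ ENNReal.ofReal ε * l2sq N Ω u :=
        mul_le_mul_left (ENNReal.ofReal_le_ofReal htε.le) _

theorem InwardField.eventually_gradSq_zeroMeanSmoothing_le (X : InwardField Ω) (hΩ : IsOpen Ω)
    (hbdd : IsBounded Ω) (hΛ : 0 ≤ Λ) (hε : 0 < ε) (ht : 0 < t) (htm : t ≤ X.maxTime)
    (hjac : ENNReal.ofReal ((1 + t * X.bound) ^ 2) * X.volumeFactor t ≤ ENNReal.ofReal (1 + ε)) :
    ∀ᶠ s in 𝓝[<] (1 : ℝ), ∀ u : Euc N → ℝ, Measurable u → l2sq N Ω u < ⊤ →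
      ENNReal.ofReal (cNs N s / 2) * semiSq N s Ω u ≤ ENNReal.ofReal Λ * l2sq N Ω u →
      gradSq N Ω (X.zeroMeanSmoothing ht u) ≤
        ENNReal.ofReal ((1 + ε) ^ 2 * Λ + ε) * l2sq N Ω u := by
  obtain ⟨K, hK⟩ := X.exists_c11Bound_zeroMeanSmoothing hbdd ht (htm.trans X.maxTime_le_one)
  have hη : 0 < ε / (1 + ε) := by positivity
  have hηε : ε / (1 + ε) ≤ ε := div_le_self hε.le (by linarith)
  filter_upwards [eventually_setLIntegral_erosion_norm_fderiv_mollify_sq_le (X.bump ht) hΩ hbdd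
    (X.bump_rOut_lt ht) hη] with s hs u hu hu2 henergy
  have hint := integrableOn_of_l2sq_lt_top hbdd hu hu2
  have hlocal := (mul_le_mul_right (semiSqOn_le_semiSq (Ω := Ω) s u) _).trans henergy
  calc gradSq N Ω (X.zeroMeanSmoothing ht u)
      ≤ ENNReal.ofReal (1 + ε) * (ENNReal.ofReal (1 + ε) * (ENNReal.ofReal Λ * l2sq N Ω u) +
          ENNReal.ofReal (ε / (1 + ε)) * l2sq N Ω u) := by
        refine ((hK u hint).gradSq_le hbdd).trans
          ((X.setLIntegral_norm_fderiv_zeroMeanSmoothing_sq_le hΩ ht htm hint hjac).trans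
            (mul_le_mul_right ((hs u hu hu2).trans (add_le_add_left ?_ _)) _))
        gcongr
    _ = ENNReal.ofReal ((1 + ε) ^ 2 * Λ + (1 + ε) * (ε / (1 + ε))) * l2sq N Ω u := by
        rw [ENNReal.ofReal_add (p := (1 + ε) ^ 2 * Λ) (by positivity) (by positivity),
          ENNReal.ofReal_mul (q := Λ) (by positivity), ENNReal.ofReal_pow (by positivity),
          ENNReal.ofReal_mul (q := ε / (1 + ε)) (by positivity)]
        ring
    _ = ENNReal.ofReal ((1 + ε) ^ 2 * Λ + ε) * l2sq N Ω u := by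
        rw [mul_div_cancel₀ ε (by positivity)]

theorem eventually_le_muNs_of_lt_muN1 (X : InwardField Ω) (hΩ : IsOpen Ω) (hbdd : IsBounded Ω)
    (hne : Ω.Nonempty) (hΛ0 : 0 ≤ Λ) (hΛ : Λ < Λ') (h : ENNReal.ofReal Λ' < muN1 N Ω n) :
    ∀ᶠ s in 𝓝[<] (1 : ℝ), ENNReal.ofReal Λ ≤ muNs N s Ω n := by
  obtain ⟨ε, hε, hε1, hεΛ⟩ := exists_mul_one_add_div_one_sub_lt hΛ
  obtain ⟨t, ⟨hclose, hjac⟩, ht, htm⟩ := ((X.eventually_forall_l2sq_zeroMeanSmoothing_sub_le hΩ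
    hbdd (by positivity : 0 < ε ^ 2 / (1 + ε))).and
    (X.eventually_ofReal_mul_volumeFactor_le hε) |>.and (Ioc_mem_nhdsGT X.maxTime_pos)).exists
  filter_upwards [hclose, X.eventually_gradSq_zeroMeanSmoothing_le hΩ hbdd hΛ0 hε ht htm hjac,
    eventually_cNs_pos N] with s hclose hgrad hc
  by_contra! hlt
  obtain ⟨A, hA, henergy⟩ := exists_isTrialSpace_of_muNs_lt hΩ hne hc hlt
  obtain ⟨B, hB, hBF⟩ := hA.exists_forall_le_mul_l2sq X hbdd ht (htm.trans X.maxTime_le_one) hε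
    hε1 (by positivity)
    (fun u hu => hclose ht u (hA.measurable u hu) (hA.l2sq_lt_top u hu)
      (hA.integral_eq_zero u hu) (henergy u hu))
    fun u hu => hgrad u (hA.measurable u hu) (hA.l2sq_lt_top u hu) (henergy u hu)
  exact ((muN1_le hB hBF).trans (ENNReal.ofReal_le_ofReal hεΛ.le)).not_gt h

theorem tendsto_muNs (X : InwardField Ω) (hΩ : IsOpen Ω) (hbdd : IsBounded Ω)
    (hne : Ω.Nonempty) (hn : n ≠ 0) :
    Tendsto (fun s => muNs N s Ω n) (𝓝[<] 1) (𝓝 (muN1 N Ω n)) := by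
  refine tendsto_order.2 ⟨fun a ha => ?_, fun a ha => ?_⟩
  · obtain ⟨Λ, hΛ0, haΛ, hΛ⟩ := ENNReal.lt_iff_exists_real_btwn.1 ha
    obtain ⟨Λ', -, hΛΛ', hΛ'⟩ := ENNReal.lt_iff_exists_real_btwn.1 hΛ
    rw [ENNReal.ofReal_lt_ofReal_iff_of_nonneg hΛ0] at hΛΛ'
    exact (eventually_le_muNs_of_lt_muN1 X hΩ hbdd hne hΛ0 hΛΛ' hΛ').mono
      fun s hs => haΛ.trans_le hs
  · obtain ⟨Λ', -, hΛ', hΛ'a⟩ := ENNReal.lt_iff_exists_real_btwn.1 ha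
    obtain ⟨Λ, hΛ0, hΛ, hΛΛ'⟩ := ENNReal.lt_iff_exists_real_btwn.1 hΛ'
    rw [ENNReal.ofReal_lt_ofReal_iff_of_nonneg hΛ0] at hΛΛ'
    exact (eventually_muNs_le_of_muN1_lt X hΩ hbdd hn hΛ0 hΛΛ' hΛ).mono
      fun s hs => hs.trans_lt hΛ'a

end EigenvalueConvergence

theorem statement6_general {N : ℕ} [NeZero N] {Ω : Set (Euc N)} (hopen : IsOpen Ω)
    (hbdd : IsBounded Ω) (hne : Ω.Nonempty) (hlip : HasLipschitzBoundary Ω) (n : ℕ) :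
    Tendsto (fun s => muNsFull N s Ω n) (𝓝[Ioo 0 1] 1) (𝓝 (muN1Full N Ω n)) := by
  rcases eq_or_ne n 0 with rfl | hn
  · simp only [muNsFull, muN1Full, if_pos]
    exact tendsto_const_nhds
  · obtain ⟨X⟩ := hlip.nonempty_inwardField hopen hbdd
    simp only [muNsFull, muN1Full, if_neg hn]
    exact (tendsto_muNs X hopen hbdd hne hn).mono_left (nhdsWithin_mono 1 Ioo_subset_Iio_self)

/-- Theorem 3.1, eigenvalue convergence: for every `n ∈ ℕ`,
`μ_n^{(s)}(Ω) → μ_n^{(1)}(Ω)` as `s → 1⁻`. -/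
theorem statement6 (N : ℕ) (hN : 2 ≤ N) (Ω : Set (Euc N)) (hΩ : IsLipschitzDomain N Ω)
    (n : ℕ) :
    Filter.Tendsto (fun s : ℝ => muNsFull N s Ω n)
      (nhdsWithin 1 (Set.Ioo (0 : ℝ) 1)) (nhds (muN1Full N Ω n)) := by
  have : NeZero N := ⟨by omega⟩
  exact statement6_general hΩ.1 hΩ.2.1 hΩ.2.2.1.nonempty hΩ.2.2.2 n

end FracNeumann
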